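/- Suppose R := liminf_{i→∞} a_i satisfies 4 ≤ R < ∞, and suppose γ ∈ [0,1), γ ∉ ℤ + αℤ, satisfies M(α,γ) > M(α,γ_*) − R_*^{−3}. Let (c_i) be the coefficients of the alpha-expansion of γ (c_{i+1} := ⌊γ_i/α_i⌋ with γ_0 := γ, γ_{i+1} := {γ_i/α_i}) and t_i := 2c_i − (a_i − 1 + ε_i). Then |t_i| < 3a_i/R for all but finitely many i. In particular, for all but finitely many indices k with a_k = R: t_k ∈ {−1, +1} if R is odd, and t_k ∈ {−2, 0, +2} if R is even. -/

import Mathlib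

open Filter Finset

attribute [local instance] Classical.propDecidable

/-- Distance from `x` to the nearest integer, `‖x‖`. -/
noncomputable def nint (x : ℝ) : ℝ := |x - round x|

/-- The two-sided inhomogeneous approximation constant
`M(α,γ) = liminf_{|n|→∞} |n|·‖nα-γ‖`. -/
noncomputable def Mval (α γ : ℝ) : ℝ :=
  Filter.liminf (fun n : ℤ => (|n| : ℝ) * nint (n * α - γ)) Filter.cofinite

/-- `ρ(α) = sup { M(α,γ) : γ ∉ ℤ + αℤ }`. -/
noncomputable def rho (α : ℝ) : ℝ :=
  sSup {m : ℝ | ∃ γ : ℝ, (¬∃ p q : ℤ, γ = (p : ℝ) + (q : ℝ) * α) ∧ m = Mval α γ}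

/-- The tails `α_i` of the nearest integer continued fraction expansion of `α`. -/
noncomputable def nicfT (α : ℝ) : ℕ → ℝ
  | 0 => α
  | i + 1 =>
    if Int.fract (nicfT α i)⁻¹ ≤ 1 / 2 then Int.fract (nicfT α i)⁻¹
    else 1 - Int.fract (nicfT α i)⁻¹

/-- The partial quotients `a_i` (meaningful for `i ≥ 1`) of the NICF expansion. -/
noncomputable def nicfA (α : ℝ) : ℕ → ℤ
  | 0 => 0
  | i + 1 => if Int.fract (nicfT α i)⁻¹ ≤ 1 / 2 then ⌊(nicfT α i)⁻¹⌋ else ⌈(nicfT α i)⁻¹⌉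

/-- The signs `ε_i` of the NICF expansion (`ε_1 = 1`). -/
noncomputable def nicfE (α : ℝ) : ℕ → ℤ
  | 0 => 1
  | 1 => 1
  | i + 2 => if Int.fract (nicfT α i)⁻¹ ≤ 1 / 2 then 1 else -1

/-- `nicfD α n = D_{n-1} = α_0 α_1 ⋯ α_{n-1}` (so `nicfD α 0 = 1`, `nicfD α 1 = α`). -/
noncomputable def nicfD (α : ℝ) (n : ℕ) : ℝ := ∏ j ∈ Finset.range n, nicfT α j

/-- The number of indices `1 ≤ k ≤ i` with `a_k` odd. -/
noncomputable def oddIdx (α : ℝ) (i : ℕ) : ℕ :=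
  ((Finset.Icc 1 i).filter fun k => Odd (nicfA α k)).card

/-- `λ_i`: zero if `a_i` is even, `(-1)^j` if `a_i = a_{n_j}` is the `j`-th odd partial
quotient. -/
noncomputable def lamStar (α : ℝ) (i : ℕ) : ℤ :=
  if Odd (nicfA α i) then (-1) ^ oddIdx α i else 0

/-- `γ_* = Σ_{i≥1} (a_i - 1 + ε_i + λ_i)/2 · D_{i-1}`. -/
noncomputable def gammaStar (α : ℝ) : ℝ :=
  ∑' k : ℕ,
    (((nicfA α (k + 1) : ℝ) - 1 + (nicfE α (k + 1) : ℝ) + (lamStar α (k + 1) : ℝ)) / 2) *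
      nicfD α (k + 1)

/-- `λ'_i`: zero if `a_i` is even, one if `a_i` is odd. -/
noncomputable def lamStar2 (α : ℝ) (i : ℕ) : ℤ := if Odd (nicfA α i) then 1 else 0

/-- `γ_** = Σ_{i≥1} (a_i + λ'_i)/2 · D_{i-1}`. -/
noncomputable def gammaStar2 (α : ℝ) : ℝ :=
  ∑' k : ℕ, (((nicfA α (k + 1) : ℝ) + (lamStar2 α (k + 1) : ℝ)) / 2) * nicfD α (k + 1)

/-- The denominators `q_i`: `q_0 = 1`, `q_1 = a_1`, `q_i = a_i q_{i-1} + ε_i q_{i-2}`. -/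
noncomputable def qseq (α : ℝ) : ℕ → ℤ
  | 0 => 1
  | 1 => nicfA α 1
  | i + 2 => nicfA α (i + 2) * qseq α (i + 1) + nicfE α (i + 2) * qseq α i

/-- `ᾱ_i = q_{i-1}/q_i` (with `ᾱ_0 = 0`). -/
noncomputable def abar (α : ℝ) (i : ℕ) : ℝ :=
  if i = 0 then 0 else (qseq α (i - 1) : ℝ) / (qseq α i : ℝ)

/-- `δ_i = -(-ε_1)(-ε_2)⋯(-ε_{i+1})`. -/
noncomputable def deltaSeq (α : ℝ) (i : ℕ) : ℤ := -∏ j ∈ Finset.Icc 1 (i + 1), (-nicfE α j)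

/-- `d_n^- = (Σ_{i=1}^n t_i δ_{i-1} q_{i-1}) / (δ_{n-1} q_n)` for `γ_*` (so `t_i = λ_i`). -/
noncomputable def dminus (α : ℝ) (n : ℕ) : ℝ :=
  (∑ i ∈ Finset.Icc 1 n, (lamStar α i : ℝ) * (deltaSeq α (i - 1) : ℝ) * (qseq α (i - 1) : ℝ)) /
    ((deltaSeq α (n - 1) : ℝ) * (qseq α n : ℝ))

/-- `d_n^+ = (Σ_{i=n+1}^∞ t_i D_{i-1}) / D_{n-1}` for `γ_*` (so `t_i = λ_i`). -/
noncomputable def dplus (α : ℝ) (n : ℕ) : ℝ :=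
  (∑' k : ℕ, (lamStar α (n + 1 + k) : ℝ) * nicfD α (n + 1 + k)) / nicfD α n

/-- `d_n^-` for `γ_**` (so `t_i = λ'_i`). -/
noncomputable def dminus2 (α : ℝ) (n : ℕ) : ℝ :=
  (∑ i ∈ Finset.Icc 1 n, (lamStar2 α i : ℝ) * (deltaSeq α (i - 1) : ℝ) * (qseq α (i - 1) : ℝ)) /
    ((deltaSeq α (n - 1) : ℝ) * (qseq α n : ℝ))

/-- `d_n^+` for `γ_**` (so `t_i = λ'_i`). -/
noncomputable def dplus2 (α : ℝ) (n : ℕ) : ℝ :=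
  (∑' k : ℕ, (lamStar2 α (n + 1 + k) : ℝ) * nicfD α (n + 1 + k)) / nicfD α n

/-- `i ∈ S(γ_*)`: `|d_i^-| ≤ 1 - ᾱ_i` and `-(1-ε_{i+1}α_i) ≤ d_i^+ ≤ 1+ε_{i+1}α_i`. -/
def inS (α : ℝ) (i : ℕ) : Prop :=
  |dminus α i| ≤ 1 - abar α i ∧
    -(1 - (nicfE α (i + 1) : ℝ) * nicfT α i) ≤ dplus α i ∧
      dplus α i ≤ 1 + (nicfE α (i + 1) : ℝ) * nicfT α i

/-- `i ∈ S(γ_**)`. -/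
def inS2 (α : ℝ) (i : ℕ) : Prop :=
  |dminus2 α i| ≤ 1 - abar α i ∧
    -(1 - (nicfE α (i + 1) : ℝ) * nicfT α i) ≤ dplus2 α i ∧
      dplus2 α i ≤ 1 + (nicfE α (i + 1) : ℝ) * nicfT α i

/-- The remainders `γ_i` of the alpha-expansion of `γ`: `γ_0 = γ`,
`γ_{i+1} = {γ_i/α_i}`. -/
noncomputable def gSeq (α γ : ℝ) : ℕ → ℝ
  | 0 => γ
  | i + 1 => Int.fract (gSeq α γ i / nicfT α i)

/-- The coefficients `c_i` (for `i ≥ 1`) of the alpha-expansion of `γ`: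
`c_{i+1} = ⌊γ_i/α_i⌋`. -/
noncomputable def cCoef (α γ : ℝ) (i : ℕ) : ℤ := ⌊gSeq α γ (i - 1) / nicfT α (i - 1)⌋

/-!
For every `k`, an affine change of variables turns the points `(N, N α - p - γ)` into the pairs
`(I, J)` of odd integers; one step of the continued fraction leads from each of these grids to the
next. In such coordinates `|N| |N α - p - γ|` is approximately `|L L'| / (4 Δ)`, where `L` and `L'`
are two inhomogeneous linear forms with determinant `Δ`, whose offsets are the sums `d_k^-` and
`d_k^+` of the centred coefficients `t_i`.

For `γ_*` the coefficients `λ_i` alternate in sign, so the offsets are small and `|L L'| ≥ G Δ` on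
the lines `J = ± 1` of every grid; descending through the grids, one finds `G / 4 ≤ M(α, γ_*)`.
Conversely, a value `M(α, γ) > G / 4` forces `|L L'| ≥ G Δ` at the points of `J = ± 1` next to the
zeros of `L` and `L'`. For `|t_k| ≥ 3 a_k / R` this is impossible unless the cell is *critical*,
that is `a_k = R` and `|t_k| = 3`. Parity excludes critical cells when `R` is even. When `R` is odd,
a critical cell forces the preceding one to be critical, so infinitely many of them make the
expansion of `α` eventually constant with `a_k = R` and `ε_k = -1`; for such `α` there is a better
lower bound for `M(α, γ_*)`, which excludes critical cells as well.
-/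

section Signs

lemma odd_of_eq_pm_one {s : ℤ} (hs : s = 1 ∨ s = -1) : Odd s := by
  rcases hs with rfl | rfl <;> decide

lemma pm_one_mul_self {ε : ℝ} (hε : ε = 1 ∨ ε = -1) : ε * ε = 1 := by
  rcases hε with rfl | rfl <;> norm_num

lemma abs_pm_one_mul {ε : ℝ} (hε : ε = 1 ∨ ε = -1) (y : ℝ) : |ε * y| = |y| := by
  rcases hε with rfl | rfl <;> simp

lemma pm_one_mul_mem_Icc {ε y b : ℝ} (hε : ε = 1 ∨ ε = -1) (hy : |y| ≤ b) :
    ε * y ∈ Set.Icc (-b) b := by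
  rwa [Set.mem_Icc, ← abs_le, abs_pm_one_mul hε]

end Signs

/-! ### Divided grids -/

/-- The data of an infinite nearest integer continued fraction: the tails `α k`, the partial
quotients `a k` (for `1 ≤ k`) and the signs `ε k` (for `1 ≤ k`). Since the tails lie in
`(0, 1/2)`, the recursion says that `a (k + 1)` is the integer nearest to `1 / α k`. -/
structure NearestIntegerCF where
  α : ℕ → ℝ
  a : ℕ → ℤ
  ε : ℕ → ℤ
  α_pos : ∀ k, 0 < α k
  α_lt_half : ∀ k, α k < 1 / 2
  α_mul : ∀ k, α k * (a (k + 1) + ε (k + 2) * α (k + 1)) = 1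
  ε_eq : ∀ k, ε k = 1 ∨ ε k = -1
  ε_one : ε 1 = 1

namespace NearestIntegerCF

variable (c : NearestIntegerCF)

/-- `αbar k = q_{k-1} / q_k`, the ratio of consecutive denominators, with `αbar 0 = 0`. -/
noncomputable def αbar : ℕ → ℝ
  | 0 => 0
  | k + 1 => (c.a (k + 1) + c.ε (k + 1) * αbar k)⁻¹

/-- The denominators `q_k` of the convergents, as products of the ratios `q_{j+1} / q_j`. -/
noncomputable def q (k : ℕ) : ℝ := ∏ j ∈ range k, (c.αbar (j + 1))⁻¹

/-- The products `D k = α_0 ⋯ α_{k-1}`; the paper's `D_i` is `D (i + 1)`. -/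
noncomputable def D (k : ℕ) : ℝ := ∏ j ∈ range k, c.α j

/-- The determinant of the two linear forms `J (a_{k+1} + ε_{k+1} αbar_k) + I` and
`I - J ε_{k+2} α_{k+1}` of the `k + 1`-st divided grid. -/
noncomputable def gridDet (k : ℕ) : ℝ :=
  c.a (k + 1) + c.ε (k + 2) * c.α (k + 1) + c.ε (k + 1) * c.αbar k

lemma ε_cast_eq (k : ℕ) : (c.ε k : ℝ) = 1 ∨ (c.ε k : ℝ) = -1 :=
  (c.ε_eq k).imp (fun h => by simp [h]) (fun h => by simp [h])

lemma odd_ε (k : ℕ) : Odd (c.ε k) := odd_of_eq_pm_one (c.ε_eq k)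

lemma two_le_a (k : ℕ) : 2 ≤ c.a (k + 1) := by
  have sign_le := (pm_one_mul_mem_Icc (c.ε_cast_eq (k + 2))
    (abs_of_pos (c.α_pos (k + 1))).le).2
  have : (1 : ℝ) < c.a (k + 1) := by
    nlinarith [c.α_mul k, c.α_pos k, c.α_lt_half k, c.α_lt_half (k + 1)]
  exact_mod_cast this

lemma one_le_a_add (k : ℕ) {y : ℝ} (hy : |y| ≤ 1) :
    1 ≤ c.a (k + 1) + c.ε (k + 1) * y := by
  have two_le : (2 : ℝ) ≤ c.a (k + 1) := by exact_mod_cast c.two_le_a k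
  linarith [(pm_one_mul_mem_Icc (c.ε_cast_eq (k + 1)) hy).1]

lemma αbar_mem_Icc (k : ℕ) : c.αbar k ∈ Set.Icc 0 1 := by
  induction k with
  | zero => simp [αbar]
  | succ k ih =>
    have one_le := c.one_le_a_add k (abs_le.2 ⟨by linarith [ih.1], ih.2⟩)
    exact ⟨inv_nonneg.2 (by linarith), inv_le_one_of_one_le₀ one_le⟩

lemma abs_αbar_le_one (k : ℕ) : |c.αbar k| ≤ 1 :=
  abs_le.2 ⟨by linarith [(c.αbar_mem_Icc k).1], (c.αbar_mem_Icc k).2⟩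

lemma αbar_nonneg (k : ℕ) : 0 ≤ c.αbar k := (c.αbar_mem_Icc k).1

lemma αbar_succ_pos (k : ℕ) : 0 < c.αbar (k + 1) :=
  inv_pos.2 (by linarith [c.one_le_a_add k (c.abs_αbar_le_one k)])

lemma αbar_mul (k : ℕ) : c.αbar (k + 1) * (c.a (k + 1) + c.ε (k + 1) * c.αbar k) = 1 :=
  inv_mul_cancel₀ (by linarith [c.one_le_a_add k (c.abs_αbar_le_one k)])

lemma q_succ (k : ℕ) : c.q (k + 1) = c.q k * (c.a (k + 1) + c.ε (k + 1) * c.αbar k) := by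
  rw [q, prod_range_succ, ← q, αbar, inv_inv]

lemma one_le_q (k : ℕ) : 1 ≤ c.q k :=
  Finset.one_le_prod fun _ _ =>
    (one_le_inv₀ (c.αbar_succ_pos _)).2 (c.αbar_mem_Icc _).2

lemma q_pos (k : ℕ) : 0 < c.q k := one_pos.trans_le (c.one_le_q k)

lemma q_mul_abs (k : ℕ) (y : ℝ) : c.q k * |y| = |c.q k * y| := by
  rw [abs_mul, abs_of_pos (c.q_pos k)]

lemma q_succ_mul_αbar (k : ℕ) : c.q (k + 1) * c.αbar (k + 1) = c.q k := by
  rw [q, prod_range_succ, ← q, inv_mul_cancel_right₀ (c.αbar_succ_pos k).ne']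

lemma D_succ (k : ℕ) : c.D (k + 1) = c.D k * c.α k := prod_range_succ _ _

lemma D_pos (k : ℕ) : 0 < c.D k := prod_pos fun j _ => c.α_pos j

lemma D_eq_D_succ_mul (k : ℕ) :
    c.D k = c.D (k + 1) * (c.a (k + 1) + c.ε (k + 2) * c.α (k + 1)) := by
  rw [D_succ, mul_assoc, α_mul, mul_one]

lemma D_add_le (k j : ℕ) : c.D (k + j) ≤ c.D k * (1 / 2) ^ j := by
  induction j with
  | zero => simp
  | succ j ih =>
    rw [← add_assoc, D_succ, pow_succ, ← mul_assoc]
    have := c.D_pos k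
    exact mul_le_mul ih (c.α_lt_half _).le (c.α_pos _).le (by positivity)

lemma q_mul_D_mul_gridDet (k : ℕ) : c.q k * c.D (k + 1) * c.gridDet k = 1 := by
  induction k with
  | zero =>
    have := c.D_eq_D_succ_mul 0
    simp only [gridDet, q, αbar, D, range_zero, prod_empty] at this ⊢
    linarith
  | succ k ih =>
    simp only [gridDet] at ih ⊢
    linear_combination ih - c.q (k + 1) * c.D_eq_D_succ_mul (k + 1) +
      c.D (k + 2) * c.ε (k + 2) * c.q_succ_mul_αbar k + c.D (k + 1) * c.q_succ k +
      c.q k * c.ε (k + 2) * c.D_succ (k + 1)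

lemma gridDet_pos (k : ℕ) : 0 < c.gridDet k := by
  rw [← mul_pos_iff_of_pos_left (mul_pos (c.q_pos k) (c.D_pos (k + 1))), q_mul_D_mul_gridDet]
  exact one_pos

/-- `γ = (1 + α + Σ_{i ≥ 1} t_i D_{i-1}) / 2` with `t_i ≡ a_i` modulo `2`, where `v k` is the
normalized tail `d_k^+ = Σ_{i > k} t_i D_{i-1} / D_{k-1}`, encoded by its recursion. -/
structure IsGridExpansion (γ : ℝ) (t : ℕ → ℤ) (v : ℕ → ℝ) : Prop where
  even_sub : ∀ k, Even (t (k + 1) - c.a (k + 1))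
  tail_eq : ∀ k, v k = c.α k * (t (k + 1) + v (k + 1))
  two_mul_eq : 2 * γ = 1 + c.α 0 + v 0

/-- `u` obeys, from `k₀` on, the recursion of the normalized initial sums
`d_k^- = Σ_{i ≤ k} t_i δ_{i-1} q_{i-1} / (δ_{k-1} q_k)`. The value `u k₀` is left free. -/
def IsInitialSum (t : ℕ → ℤ) (u : ℕ → ℝ) (k₀ : ℕ) : Prop :=
  ∀ k, k₀ ≤ k → u (k + 1) = c.αbar (k + 1) * (t (k + 1) - c.ε (k + 1) * u k)

/-- The (odd) coordinates `(I, J)` of the point `N α - p - γ` in the `k`-th divided grid. -/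
def gridCoord (t : ℕ → ℤ) (N p : ℤ) : ℕ → ℤ × ℤ
  | 0 => (-2 * p - 1, 1 - 2 * N)
  | k + 1 => (c.a (k + 1) * (gridCoord t N p k).1 - c.ε (k + 1) * (gridCoord t N p k).2
      - t (k + 1), -(gridCoord t N p k).1)

/-- The inhomogeneous linear form proportional to `2 N - κ` in the `k + 1`-st grid. -/
noncomputable def leftForm (t : ℕ → ℤ) (u : ℕ → ℝ) (k : ℕ) (z : ℤ × ℤ) : ℝ :=
  z.2 * (c.a (k + 1) + c.ε (k + 1) * c.αbar k) + z.1 + t (k + 1) - c.ε (k + 1) * u k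

/-- The inhomogeneous linear form proportional to `N α - p - γ` in the `k + 1`-st grid. -/
noncomputable def rightForm (v : ℕ → ℝ) (k : ℕ) (z : ℤ × ℤ) : ℝ :=
  z.1 - z.2 * c.ε (k + 2) * c.α (k + 1) - v (k + 1)

section Grid

variable {c} {γ : ℝ} {t : ℕ → ℤ} {u v : ℕ → ℝ} {k₀ : ℕ}

lemma IsGridExpansion.odd_gridCoord (h : c.IsGridExpansion γ t v) (N p : ℤ) (k : ℕ) :
    Odd (c.gridCoord t N p k).1 ∧ Odd (c.gridCoord t N p k).2 := by
  induction k with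
  | zero => exact ⟨⟨-p - 1, by simp only [gridCoord]; ring⟩, ⟨-N, by simp only [gridCoord]; ring⟩⟩
  | succ k ih =>
    refine ⟨?_, ih.1.neg⟩
    have even_sub := h.even_sub k
    simp only [gridCoord, Int.odd_sub, Int.odd_mul, ← Int.not_odd_iff_even] at *
    have odd_ε := c.odd_ε (k + 1)
    tauto

lemma IsGridExpansion.exists_gridCoord_eq (h : c.IsGridExpansion γ t v) (k : ℕ) {I J : ℤ}
    (hI : Odd I) (hJ : Odd J) : ∃ N p : ℤ, c.gridCoord t N p k = (I, J) := by
  induction k generalizing I J with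
  | zero =>
    obtain ⟨i, rfl⟩ := hI
    obtain ⟨j, rfl⟩ := hJ
    exact ⟨-j, -i - 1, by simp only [gridCoord, Prod.mk.injEq]; constructor <;> ring⟩
  | succ k ih =>
    have odd_prev : Odd (c.ε (k + 1) * (c.a (k + 1) * (-J) - t (k + 1) - I)) := by
      have odd_ε := c.odd_ε (k + 1)
      have even_sub := h.even_sub k
      simp only [Int.odd_sub, Int.odd_mul, odd_neg, ← Int.not_odd_iff_even] at *
      tauto
    obtain ⟨N, p, hNp⟩ := ih hJ.neg odd_prev
    have ε_sq : c.ε (k + 1) * c.ε (k + 1) = 1 := Int.isUnit_mul_self (Int.isUnit_iff.2 (c.ε_eq _))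
    refine ⟨N, p, ?_⟩
    simp only [gridCoord, hNp, ← mul_assoc, ε_sq, Prod.mk.injEq]
    constructor <;> ring

lemma IsGridExpansion.two_mul_sub_eq (h : c.IsGridExpansion γ t v) (N p : ℤ) (k : ℕ) :
    2 * (N * c.α 0 - p - γ) = c.D k * ((c.gridCoord t N p k).1
      - (c.gridCoord t N p k).2 * c.ε (k + 1) * c.α k - v k) := by
  induction k with
  | zero =>
    have := h.two_mul_eq
    simp only [gridCoord, D, c.ε_one, range_zero, prod_empty]
    push_cast
    linarith
  | succ k ih =>
    rw [ih, h.tail_eq k, D_succ]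
    simp only [gridCoord]
    push_cast
    linear_combination -c.D k * (c.gridCoord t N p k).1 * c.α_mul k

lemma exists_q_mul_eq (t : ℕ → ℤ) (k : ℕ) :
    ∃ δ W : ℝ, |δ| = 1 ∧ ∀ N p : ℤ,
      c.q k * ((c.gridCoord t N p k).2 + c.αbar k * (c.gridCoord t N p k).1) =
        δ * (2 * N - W) := by
  induction k with
  | zero => exact ⟨-1, 1, by simp, fun N p => by simp [gridCoord, q, αbar]⟩
  | succ k ih =>
    obtain ⟨δ, W, abs_δ, q_mul⟩ := ih
    have abs_εδ : |-c.ε (k + 1) * δ| = 1 := by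
      rw [neg_mul, abs_neg, abs_pm_one_mul (c.ε_cast_eq _), abs_δ]
    refine ⟨-c.ε (k + 1) * δ, W - c.q k * t (k + 1) * (c.ε (k + 1) * δ), abs_εδ, fun N p => ?_⟩
    have δ_sq : δ * δ = 1 := by rw [← abs_mul_abs_self, abs_δ, mul_one]
    have ε_sq := pm_one_mul_self (c.ε_cast_eq (k + 1))
    simp only [gridCoord]
    push_cast
    linear_combination (-c.ε (k + 1) : ℝ) * q_mul N p
      + c.q k * t (k + 1) * (δ_sq * c.ε (k + 1) * c.ε (k + 1) + ε_sq)
      - (c.gridCoord t N p k).1 * c.q_succ k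
      + (c.a (k + 1) * (c.gridCoord t N p k).1 - c.ε (k + 1) * (c.gridCoord t N p k).2
        - t (k + 1)) * c.q_succ_mul_αbar k

lemma leftForm_gridCoord (t : ℕ → ℤ) (u : ℕ → ℝ) (N p : ℤ) (k : ℕ) :
    c.leftForm t u k (c.gridCoord t N p (k + 1)) = -c.ε (k + 1) *
      ((c.gridCoord t N p k).2 + c.αbar k * (c.gridCoord t N p k).1 + u k) := by
  simp only [leftForm, gridCoord]
  push_cast
  ring

lemma IsInitialSum.q_succ_mul_eq (hu : c.IsInitialSum t u k₀) (N p : ℤ) {k : ℕ} (hk : k₀ ≤ k) :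
    c.q (k + 1) * ((c.gridCoord t N p (k + 1)).2 + c.αbar (k + 1) * (c.gridCoord t N p (k + 1)).1
      + u (k + 1)) = c.q k * c.leftForm t u k (c.gridCoord t N p (k + 1)) := by
  rw [hu k hk, leftForm]
  linear_combination ((c.gridCoord t N p (k + 1)).1 + t (k + 1) - c.ε (k + 1) * u k) *
    c.q_succ_mul_αbar k + (c.gridCoord t N p (k + 1)).2 * c.q_succ k

lemma IsInitialSum.exists_abs_two_mul_sub_eq (hu : c.IsInitialSum t u k₀) :
    ∃ κ : ℝ, ∀ N p : ℤ, ∀ k, k₀ ≤ k →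
      |2 * N - κ| = c.q k * |c.leftForm t u k (c.gridCoord t N p (k + 1))| := by
  obtain ⟨δ, W, abs_δ, q_mul⟩ := c.exists_q_mul_eq t k₀
  have δ_sq : δ * δ = 1 := by rw [← abs_mul_abs_self, abs_δ, mul_one]
  refine ⟨W - δ * (c.q k₀ * u k₀), fun N p k hk => ?_⟩
  induction k, hk using Nat.le_induction with
  | base =>
    have at_base : c.q k₀ * ((c.gridCoord t N p k₀).2 + c.αbar k₀ * (c.gridCoord t N p k₀).1
        + u k₀) = δ * (2 * N - (W - δ * (c.q k₀ * u k₀))) := by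
      linear_combination q_mul N p - c.q k₀ * u k₀ * δ_sq
    rw [leftForm_gridCoord, neg_mul, abs_neg, abs_pm_one_mul (c.ε_cast_eq _), q_mul_abs,
      at_base, abs_mul, abs_δ, one_mul]
  | succ k hk ih =>
    rw [ih, leftForm_gridCoord t u N p (k + 1), neg_mul, abs_neg, abs_pm_one_mul (c.ε_cast_eq _),
      q_mul_abs, q_mul_abs, hu.q_succ_mul_eq N p hk]

/-- `κ` is twice the abscissa `N` of the common centre of the divided grids of the point set
`{(N, N α - p - γ)}`: on the `k + 1`-st grid, `|2 N - κ|` and `2 (N α - p - γ)` are multiples of the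
two linear forms. -/
structure IsCentre (γ : ℝ) (t : ℕ → ℤ) (u v : ℕ → ℝ) (k₀ : ℕ) (κ : ℝ) : Prop where
  abs_left_eq : ∀ N p : ℤ, ∀ k, k₀ ≤ k →
    |2 * N - κ| = c.q k * |c.leftForm t u k (c.gridCoord t N p (k + 1))|
  right_eq : ∀ N p : ℤ, ∀ k,
    2 * (N * c.α 0 - p - γ) = c.D (k + 1) * c.rightForm v k (c.gridCoord t N p (k + 1))

lemma IsGridExpansion.exists_isCentre (h : c.IsGridExpansion γ t v)
    (hu : c.IsInitialSum t u k₀) : ∃ κ, c.IsCentre γ t u v k₀ κ :=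
  hu.exists_abs_two_mul_sub_eq.imp fun _ hκ => ⟨hκ, fun N p k => h.two_mul_sub_eq N p (k + 1)⟩

lemma IsCentre.mul_gridDet_eq {κ : ℝ} (hκ : c.IsCentre γ t u v k₀ κ) (N p : ℤ) {k : ℕ}
    (hk : k₀ ≤ k) :
    |2 * N - κ| * |2 * (N * c.α 0 - p - γ)| * c.gridDet k =
      |c.leftForm t u k (c.gridCoord t N p (k + 1)) *
        c.rightForm v k (c.gridCoord t N p (k + 1))| := by
  rw [hκ.abs_left_eq N p k hk, hκ.right_eq N p k, abs_mul, abs_mul, abs_of_pos (c.D_pos _)]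
  linear_combination |c.leftForm t u k (c.gridCoord t N p (k + 1))| *
    |c.rightForm v k (c.gridCoord t N p (k + 1))| * c.q_mul_D_mul_gridDet k

end Grid

end NearestIntegerCF

/-! ### Lower limits over the integers -/

section LiminfBounds

open scoped Topology

variable {α γ m κ : ℝ}

lemma two_mul_nint_le (n p : ℤ) : 2 * nint (n * α - γ) ≤ |2 * (n * α - p - γ)| := by
  rw [abs_mul, abs_two, sub_right_comm]
  exact mul_le_mul_of_nonneg_left (round_le _ p) zero_le_two

lemma two_mul_nint_eq (n : ℤ) :
    2 * nint (n * α - γ) = |2 * (n * α - round (n * α - γ) - γ)| := by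
  rw [abs_mul, abs_two, sub_right_comm, nint]

lemma nint_pos (hγ : ¬∃ p q : ℤ, γ = (p : ℝ) + (q : ℝ) * α) (n : ℤ) : 0 < nint (n * α - γ) := by
  refine abs_pos.2 fun h => hγ ⟨-round (n * α - γ), n, ?_⟩
  push_cast
  linarith

lemma abs_abs_two_mul_sub_le (x κ : ℝ) : |(|2 * x - κ| - 2 * |x|)| ≤ |κ| := by
  have := abs_abs_sub_abs_le (2 * x - κ) (2 * x)
  rwa [abs_mul 2 x, abs_two, sub_sub_cancel_left, abs_neg] at this

/-- The points `(N, N α - p - γ)` close to the first axis satisfy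
`|2 N - κ| |2 (N α - p - γ)| ≥ 4 m`. Up to the boundary value this says `m ≤ M(α, γ)`, whatever
the shift `κ`. -/
def ProductBound (α γ κ m : ℝ) : Prop :=
  ∃ ρ > 0, ∀ N p : ℤ, |2 * (N * α - p - γ)| < ρ → 4 * m ≤ |2 * N - κ| * |2 * (N * α - p - γ)|

lemma productBound_of_lt_Mval (κ : ℝ) (hγ : ¬∃ p q : ℤ, γ = (p : ℝ) + (q : ℝ) * α)
    (h : m < Mval α γ) : ProductBound α γ κ m := by
  obtain ⟨m', hm, hm'⟩ := exists_between h
  have exceptions_finite : {n : ℤ | ¬m' < |(n : ℝ)| * nint (n * α - γ)}.Finite :=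
    eventually_cofinite.1 (eventually_lt_of_lt_liminf hm'
      (isBoundedUnder_of ⟨0, fun _ => mul_nonneg (abs_nonneg _) (abs_nonneg _)⟩))
  have below_exceptions : ∀ᶠ ρ in 𝓝[>] (0 : ℝ),
      ∀ n ∈ {n : ℤ | ¬m' < |(n : ℝ)| * nint (n * α - γ)}, ρ < 2 * nint (n * α - γ) :=
    (eventually_all_finite exceptions_finite).2 fun n _ =>
      nhdsWithin_le_nhds (eventually_lt_nhds (mul_pos two_pos (nint_pos hγ n)))
  obtain ⟨ρ₀, ρ₀_pos, mul_ρ₀_lt⟩ := exists_pos_mul_lt (by linarith : 0 < 4 * (m' - m)) |κ|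
  have le_ρ₀ : ∀ᶠ ρ in 𝓝[>] (0 : ℝ), ρ ≤ ρ₀ := nhdsWithin_le_nhds (eventually_le_nhds ρ₀_pos)
  obtain ⟨ρ, ρ_lt, ρ_le, ρ_pos⟩ :=
    (below_exceptions.and (le_ρ₀.and self_mem_nhdsWithin)).exists
  refine ⟨ρ, ρ_pos, fun N p close => ?_⟩
  have nint_le := two_mul_nint_le (α := α) (γ := γ) N p
  have m'_lt : m' < |(N : ℝ)| * nint (N * α - γ) := by
    by_contra exceptional
    linarith [ρ_lt N exceptional]
  set r := |2 * (N * α - p - γ)|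
  have r_nonneg : 0 ≤ r := abs_nonneg _
  have := mul_le_mul_of_nonneg_left nint_le (abs_nonneg (N : ℝ))
  have := mul_le_mul_of_nonneg_right (abs_le.1 (abs_abs_two_mul_sub_le N κ)).1 r_nonneg
  have := mul_le_mul_of_nonneg_left (close.le.trans ρ_le) (abs_nonneg κ)
  linarith

lemma isCoboundedUnder_mul_nint
    (h : ∃ C : ℝ, ∀ B : ℝ, ∃ N p : ℤ, B ≤ |2 * N - κ| ∧
      |2 * N - κ| * |2 * (N * α - p - γ)| ≤ C) :
    IsCoboundedUnder (· ≥ ·) cofinite (fun n : ℤ => |(n : ℝ)| * nint (n * α - γ)) := by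
  obtain ⟨C, hC⟩ := h
  refine IsCoboundedUnder.of_frequently_le (a := (1 + |κ|) * C / 4) ?_
  rw [frequently_cofinite_iff_infinite]
  intro finite
  obtain ⟨B, hB⟩ := (finite.image fun n : ℤ => |2 * (n : ℝ) - κ|).bddAbove
  obtain ⟨N, p, le_abs, mul_le⟩ := hC (max 1 (B + 1))
  obtain ⟨one_le, B_lt⟩ := max_le_iff.1 le_abs
  suffices small : |(N : ℝ)| * nint (N * α - γ) ≤ (1 + |κ|) * C / 4 by
    linarith [hB (Set.mem_image_of_mem _ small)]
  have nint_le := two_mul_nint_le (α := α) (γ := γ) N p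
  set r := |2 * (N * α - p - γ)|
  have r_nonneg : 0 ≤ r := abs_nonneg _
  have r_le : r ≤ C := (le_mul_of_one_le_left r_nonneg one_le).trans mul_le
  have := mul_le_mul_of_nonneg_left nint_le (abs_nonneg (N : ℝ))
  have := mul_le_mul_of_nonneg_right (abs_le.1 (abs_abs_two_mul_sub_le N κ)).1 r_nonneg
  have := mul_le_mul_of_nonneg_left r_le (abs_nonneg κ)
  linarith

lemma eventually_le_abs_intCast (B : ℝ) : ∀ᶠ n : ℤ in cofinite, B ≤ |(n : ℝ)| :=
  (tendsto_norm_cocompact_atTop.comp Int.tendsto_coe_cofinite).eventually_ge_atTop B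

lemma le_Mval_of_productBound (hm : ProductBound α γ κ m)
    (h : ∃ C : ℝ, ∀ B : ℝ, ∃ N p : ℤ, B ≤ |2 * N - κ| ∧
      |2 * N - κ| * |2 * (N * α - p - γ)| ≤ C) : m ≤ Mval α γ := by
  obtain ⟨ρ, ρ_pos, hρ⟩ := hm
  refine le_of_forall_lt fun m' hm' => ?_
  obtain ⟨m₁, hm₁, hm₁'⟩ := exists_between hm'
  refine hm₁.trans_le (le_liminf_of_le (isCoboundedUnder_mul_nint h) ?_)
  obtain ⟨ρ₀, ρ₀_pos, mul_ρ₀_lt⟩ := exists_pos_mul_lt (by linarith : 0 < 4 * (m - m₁)) |κ|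
  have min_pos : 0 < min ρ ρ₀ := lt_min ρ_pos ρ₀_pos
  filter_upwards [eventually_le_abs_intCast (2 * |m₁| / min ρ ρ₀)] with n n_large
  have nint_eq := two_mul_nint_eq (α := α) (γ := γ) n
  rcases lt_or_ge |2 * (n * α - round (n * α - γ) - γ)| (min ρ ρ₀) with close | far
  · have four_mul_le := hρ n _ (close.trans_le (min_le_left _ _))
    rw [← nint_eq] at four_mul_le close
    have r_nonneg : 0 ≤ 2 * nint (n * α - γ) := mul_nonneg zero_le_two (abs_nonneg _)
    have := mul_le_mul_of_nonneg_right (abs_le.1 (abs_abs_two_mul_sub_le n κ)).2 r_nonneg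
    have := mul_le_mul_of_nonneg_left (close.le.trans (min_le_right _ _)) (abs_nonneg κ)
    linarith
  · rw [div_le_iff₀ min_pos] at n_large
    rw [← nint_eq] at far
    have := mul_le_mul_of_nonneg_left far (abs_nonneg (n : ℝ))
    linarith [le_abs_self m₁]

end LiminfBounds

section NICF

variable {α : ℝ}

lemma irrational_nicfT_and_bounds (hirr : Irrational α) (h0 : 0 < α) (h12 : α < 1 / 2) (k : ℕ) :
    Irrational (nicfT α k) ∧ 0 < nicfT α k ∧ nicfT α k < 1 / 2 := by
  induction k with
  | zero => exact ⟨hirr, h0, h12⟩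
  | succ k ih =>
    have fract_irrational : Irrational (Int.fract (nicfT α k)⁻¹) := by
      rw [← Int.self_sub_floor]
      exact ih.1.inv.sub_intCast _
    have fract_pos : 0 < Int.fract (nicfT α k)⁻¹ :=
      (Int.fract_nonneg _).lt_of_ne' fract_irrational.ne_zero
    have fract_lt_one := Int.fract_lt_one (nicfT α k)⁻¹
    rw [nicfT]
    split_ifs with h
    · exact ⟨fract_irrational, fract_pos,
        h.lt_of_ne (by simpa using fract_irrational.ne_rational 1 2)⟩
    · exact ⟨by simpa using fract_irrational.intCast_sub 1, by linarith, by linarith⟩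

lemma inv_nicfT (hirr : Irrational α) (h0 : 0 < α) (h12 : α < 1 / 2) (k : ℕ) :
    (nicfT α k)⁻¹ = nicfA α (k + 1) + nicfE α (k + 2) * nicfT α (k + 1) := by
  have floor_add_fract := Int.floor_add_fract (nicfT α k)⁻¹
  simp only [nicfT, nicfA, nicfE]
  split_ifs with h
  · push_cast
    linarith
  · have ceil_eq : ⌈(nicfT α k)⁻¹⌉ = ⌊(nicfT α k)⁻¹⌋ + 1 := by
      rw [Int.ceil_eq_floor_add_one_iff_notMem]
      rintro ⟨n, hn⟩
      exact (irrational_nicfT_and_bounds hirr h0 h12 k).1.inv.ne_int n hn.symm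
    rw [ceil_eq]
    push_cast
    linarith

lemma nicfE_eq (α : ℝ) : ∀ k, nicfE α k = 1 ∨ nicfE α k = -1
  | 0 | 1 => Or.inl rfl
  | k + 2 => by
    rw [nicfE]
    split_ifs <;> simp

end NICF

namespace NearestIntegerCF

/-- The nearest integer continued fraction expansion of an irrational `α ∈ (0, 1/2)`. -/
noncomputable def ofIrrational (α : ℝ) (hirr : Irrational α) (h0 : 0 < α) (h12 : α < 1 / 2) :
    NearestIntegerCF where
  α := nicfT α
  a := nicfA α
  ε := nicfE α
  α_pos k := (irrational_nicfT_and_bounds hirr h0 h12 k).2.1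
  α_lt_half k := (irrational_nicfT_and_bounds hirr h0 h12 k).2.2
  α_mul k := by
    rw [← inv_nicfT hirr h0 h12 k]
    exact mul_inv_cancel₀ (irrational_nicfT_and_bounds hirr h0 h12 k).2.1.ne'
  ε_eq := nicfE_eq α
  ε_one := rfl

end NearestIntegerCF

section TailBound

lemma le_one_div_of_mul_add_eq_one {x a ε y s R : ℝ} (hε : ε = 1 ∨ ε = -1) (hx : 0 ≤ x)
    (hy : |y| ≤ s) (ha : R ≤ a) (hs : s < R) (h : x * (a + ε * y) = 1) : x ≤ 1 / (R - s) := by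
  rw [le_div_iff₀ (sub_pos.2 hs), ← h]
  exact mul_le_mul_of_nonneg_left (by linarith [(pm_one_mul_mem_Icc hε hy).1]) hx

/-- The upper bound for `α_k` and `αbar_k` that two steps of the recursion give when the partial
quotients are at least `R`. -/
noncomputable def tailBound (R : ℝ) : ℝ := 1 / (R - 1 / (R - 1))

variable {R : ℝ}

lemma tailBound_eq (hR : 4 ≤ R) : tailBound R = (R - 1) / (R ^ 2 - R - 1) := by
  have : R - 1 ≠ 0 := by linarith
  rw [tailBound, eq_div_iff (by nlinarith), sub_div' this, one_div_div]
  rw [div_mul_eq_mul_div, div_eq_iff (by nlinarith)]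
  ring

lemma tailBound_pos (hR : 4 ≤ R) : 0 < tailBound R := by
  rw [tailBound_eq hR]
  apply div_pos <;> nlinarith

lemma tailBound_mul (hR : 4 ≤ R) : tailBound R * (R ^ 2 - R - 1) = R - 1 := by
  rw [tailBound_eq hR]
  exact div_mul_cancel₀ _ (by nlinarith)

lemma tailBound_le (hR : 4 ≤ R) : tailBound R ≤ 1 / (R - 1) := by
  rw [tailBound_eq hR, div_le_div_iff₀ (by nlinarith) (by linarith)]
  nlinarith

lemma tailBound_le_three_div (hR : 4 ≤ R) : tailBound R ≤ 3 / 11 := by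
  rw [tailBound_eq hR, div_le_div_iff₀ (by nlinarith) (by norm_num)]
  nlinarith

end TailBound

namespace NearestIntegerCF

variable {c : NearestIntegerCF}

/-- From index `k₀` on, the partial quotients are at least `R ≥ 4` and the tails on both sides
satisfy the corresponding bound. -/
structure LargeQuotients (c : NearestIntegerCF) (R : ℝ) (k₀ : ℕ) : Prop where
  four_le : 4 ≤ R
  le_a : ∀ k, k₀ ≤ k → R ≤ c.a k
  αbar_le : ∀ k, k₀ ≤ k → c.αbar k ≤ tailBound R
  α_le : ∀ k, k₀ ≤ k → c.α k ≤ tailBound R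

lemma LargeQuotients.mono {R : ℝ} {k₀ k₁ : ℕ} (h : c.LargeQuotients R k₀) (hk : k₀ ≤ k₁) :
    c.LargeQuotients R k₁ :=
  ⟨h.four_le, fun k hk₁ => h.le_a k (hk.trans hk₁), fun k hk₁ => h.αbar_le k (hk.trans hk₁),
    fun k hk₁ => h.α_le k (hk.trans hk₁)⟩

lemma exists_largeQuotients {R : ℝ} (hR : 4 ≤ R) (h : ∀ᶠ i in atTop, R ≤ c.a i) :
    ∃ k₀, c.LargeQuotients R k₀ := by
  obtain ⟨m, hm⟩ := eventually_atTop.1 h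
  have one_div_lt : 1 / (R - 1) < R := by
    rw [div_lt_iff₀ (by linarith)]
    nlinarith
  have α_le {s : ℝ} (hs : s < R) {k : ℕ} (hk : m ≤ k) (hy : c.α (k + 1) ≤ s) :
      c.α k ≤ 1 / (R - s) :=
    le_one_div_of_mul_add_eq_one (c.ε_cast_eq (k + 2)) (c.α_pos k).le
      (by rwa [abs_of_pos (c.α_pos _)]) (hm (k + 1) (by lia)) hs (c.α_mul k)
  have αbar_le {s : ℝ} (hs : s < R) {k : ℕ} (hk : m ≤ k) (hy : c.αbar k ≤ s) :
      c.αbar (k + 1) ≤ 1 / (R - s) :=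
    le_one_div_of_mul_add_eq_one (c.ε_cast_eq (k + 1)) (c.αbar_nonneg _)
      (by rwa [abs_of_nonneg (c.αbar_nonneg _)]) (hm (k + 1) (by lia)) hs (c.αbar_mul k)
  refine ⟨m + 2, hR, fun k hk => hm k (by lia), fun k hk => ?_, fun k hk => ?_⟩
  · obtain ⟨j, rfl⟩ : ∃ j, k = j + 2 := ⟨k - 2, by lia⟩
    exact αbar_le one_div_lt (by lia)
      (αbar_le (by linarith) (by lia) (c.αbar_mem_Icc j).2)
  · exact α_le one_div_lt (by lia)
      (α_le (by linarith) (by lia) (by linarith [c.α_lt_half (k + 2)]))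

end NearestIntegerCF

/-! ### The number `γ_*` and digit expansions -/

namespace NearestIntegerCF

variable {c : NearestIntegerCF}

section TailSum

variable {t : ℕ → ℤ}

/-- The normalized tails `d_k^+ = Σ_{i > k} t_i D_{i-1} / D_{k-1}`. -/
noncomputable def tailSum (c : NearestIntegerCF) (t : ℕ → ℤ) (k : ℕ) : ℝ :=
  (∑' j : ℕ, (t (k + j + 1) : ℝ) * c.D (k + j + 1)) / c.D k

lemma norm_mul_D_le (ht : ∀ k, |t k| ≤ 1) (k j : ℕ) :
    ‖(t (k + j + 1) : ℝ) * c.D (k + j + 1)‖ ≤ c.D k * (1 / 2) * (1 / 2) ^ j := by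
  rw [norm_mul, Real.norm_eq_abs, Real.norm_eq_abs, abs_of_pos (c.D_pos _)]
  have abs_le_one : |(t (k + j + 1) : ℝ)| ≤ 1 := by exact_mod_cast ht (k + j + 1)
  calc |(t (k + j + 1) : ℝ)| * c.D (k + j + 1) ≤ c.D (k + (j + 1)) :=
        mul_le_of_le_one_left (c.D_pos _).le abs_le_one
    _ ≤ c.D k * (1 / 2) ^ (j + 1) := c.D_add_le k (j + 1)
    _ = c.D k * (1 / 2) * (1 / 2) ^ j := by ring

lemma summable_mul_D (ht : ∀ k, |t k| ≤ 1) (k : ℕ) :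
    Summable fun j : ℕ => (t (k + j + 1) : ℝ) * c.D (k + j + 1) :=
  .of_norm_bounded (summable_geometric_two.mul_left _) (norm_mul_D_le ht k)

lemma abs_tailSum_le_one (ht : ∀ k, |t k| ≤ 1) (k : ℕ) : |c.tailSum t k| ≤ 1 := by
  rw [tailSum, abs_div, abs_of_pos (c.D_pos k), div_le_one (c.D_pos k)]
  simpa using tsum_of_norm_bounded (hasSum_geometric_two.mul_left (c.D k * (1 / 2)))
    (norm_mul_D_le ht k)

lemma tailSum_eq (ht : ∀ k, |t k| ≤ 1) (k : ℕ) :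
    c.tailSum t k = c.α k * (t (k + 1) + c.tailSum t (k + 1)) := by
  have shift (j : ℕ) : k + (j + 1) + 1 = k + 1 + j + 1 := by ring
  have D_ne := (c.D_pos k).ne'
  have α_ne := (c.α_pos k).ne'
  rw [tailSum, tailSum, (summable_mul_D ht k).tsum_eq_zero_add]
  simp only [shift, add_zero, D_succ c k]
  field_simp

lemma hasSum_sub_one_add_ε_mul_D :
    HasSum (fun k : ℕ => ((c.a (k + 1) : ℝ) - 1 + c.ε (k + 1)) * c.D (k + 1)) (1 + c.α 0) := by
  let f (k : ℕ) : ℝ := c.D k + c.ε (k + 1) * c.D (k + 1)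
  have summable_f : Summable f := by
    have abs_ε_le (k : ℕ) : |c.ε k| ≤ 1 := by rcases c.ε_eq k with h | h <;> simp [h]
    have summable_D : Summable c.D :=
      .of_nonneg_of_le (fun k => (c.D_pos k).le) (fun k => by simpa [D] using c.D_add_le 0 k)
        summable_geometric_two
    exact summable_D.add (by simpa only [zero_add] using summable_mul_D abs_ε_le 0)
  have f_zero : f 0 = 1 + c.α 0 := by simp [f, D, c.ε_one]
  have telescope (k : ℕ) :
      ((c.a (k + 1) : ℝ) - 1 + c.ε (k + 1)) * c.D (k + 1) = f k - f (k + 1) := by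
    simp only [f]
    linear_combination -c.D_eq_D_succ_mul k + c.ε (k + 2) * c.D_succ (k + 1)
  simp only [telescope]
  simpa [f_zero] using summable_f.hasSum.sub ((hasSum_nat_add_iff' 1).2 summable_f.hasSum)

lemma isGridExpansion_tailSum (ht : ∀ k, |t k| ≤ 1)
    (heven : ∀ k, Even (t (k + 1) - c.a (k + 1))) :
    c.IsGridExpansion
      (∑' k : ℕ, ((c.a (k + 1) : ℝ) - 1 + c.ε (k + 1) + t (k + 1)) / 2 * c.D (k + 1))
      t (c.tailSum t) := by
  refine ⟨heven, tailSum_eq ht, ?_⟩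
  have hasSum := (hasSum_sub_one_add_ε_mul_D (c := c)).add (summable_mul_D (c := c) ht 0).hasSum
  have D_zero : c.D 0 = 1 := prod_range_zero _
  rw [tailSum, D_zero, div_one, ← hasSum.tsum_eq, ← tsum_mul_left]
  refine tsum_congr fun k => ?_
  rw [zero_add]
  ring

end TailSum

lemma nonpos_of_le_mul_succ {f s : ℕ → ℝ} (hs : ∀ k, s k ∈ Set.Icc 0 (1 / 2))
    (hf : ∀ k, f k ≤ s k * f (k + 1)) (hf_le : ∀ k, f k ≤ 1) (k : ℕ) : f k ≤ 0 := by
  have le_pow (n : ℕ) : ∀ k, f k ≤ (1 / 2) ^ n := by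
    induction n with
    | zero => simpa using hf_le
    | succ n ih =>
      intro k
      calc f k ≤ s k * f (k + 1) := hf k
        _ ≤ s k * (1 / 2) ^ n := mul_le_mul_of_nonneg_left (ih _) (hs k).1
        _ ≤ 1 / 2 * (1 / 2) ^ n := mul_le_mul_of_nonneg_right (hs k).2 (by positivity)
        _ = (1 / 2) ^ (n + 1) := by ring
  exact ge_of_tendsto' (tendsto_pow_atTop_nhds_zero_of_lt_one (by norm_num) (by norm_num))
    fun n => le_pow n k

-- Both recursions contract the distance of `w` to the interval `[0, 1]`.
lemma mem_Icc_of_eq_mul_or_eq_mul_one_sub {w s : ℕ → ℝ} (hs : ∀ k, s k ∈ Set.Icc 0 (1 / 2))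
    (hw : ∀ k, w k = s k * w (k + 1) ∨ w k = s k * (1 - w (k + 1))) (hw_le : ∀ k, |w k| ≤ 1)
    (k : ℕ) : w k ∈ Set.Icc 0 1 := by
  have dist_nonpos : |w k - 1 / 2| - 1 / 2 ≤ 0 := by
    refine nonpos_of_le_mul_succ (f := fun k => |w k - 1 / 2| - 1 / 2) hs (fun k => ?_)
      (fun k => ?_) k
    · obtain ⟨lower, upper⟩ := abs_le.1 (le_refl |w (k + 1) - 1 / 2|)
      have := (hs k).1
      have := (hs k).2
      rw [sub_le_iff_le_add, abs_le]
      rcases hw k with h | h <;> rw [h] <;> constructor <;> nlinarith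
    · have := abs_sub (w k) (1 / 2)
      rw [abs_of_pos (one_half_pos (α := ℝ))] at this
      linarith [hw_le k]
  obtain ⟨lower, upper⟩ := abs_le.1 (sub_nonpos.1 dist_nonpos)
  exact ⟨by linarith, by linarith⟩

/-- The properties of the coefficients `λ_i` of `γ_*` and of their tails `d_k^+`: the coefficients
vanish at even partial quotients and are `±1` with alternating signs at odd ones. -/
structure IsStarExpansion (c : NearestIntegerCF) (t : ℕ → ℤ) (v : ℕ → ℝ) : Prop where
  eq_zero : ∀ k, Even (c.a (k + 1)) → t (k + 1) = 0
  eq_pm_one : ∀ k, Odd (c.a (k + 1)) → t (k + 1) = 1 ∨ t (k + 1) = -1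
  abs_le : ∀ k, |v k| ≤ c.α k
  mul_nonpos : ∀ k, Odd (c.a (k + 1)) → t (k + 1) * v (k + 1) ≤ 0
  eq_neg : ∀ k, Odd (c.a (k + 1)) → Odd (c.a (k + 2)) → t (k + 2) = -t (k + 1)
  le_abs_of_odd : ∀ k, Odd (c.a (k + 1)) → c.α k * (1 - c.α (k + 1)) ≤ |v k|
  abs_le_of_even : ∀ k, Even (c.a (k + 1)) → |v k| ≤ c.α k * c.α (k + 1)

lemma isStarExpansion_of_sign {t : ℕ → ℤ} {v : ℕ → ℝ} {σ : ℕ → ℤ}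
    (hσ : ∀ k, σ k = 1 ∨ σ k = -1)
    (hodd : ∀ k, Odd (c.a (k + 1)) → σ (k + 1) = -σ k ∧ t (k + 1) = σ (k + 1))
    (heven : ∀ k, Even (c.a (k + 1)) → σ (k + 1) = σ k ∧ t (k + 1) = 0)
    (hv : ∀ k, v k = c.α k * (t (k + 1) + v (k + 1))) (hv_le : ∀ k, |v k| ≤ 1) :
    c.IsStarExpansion t v := by
  let w (k : ℕ) : ℝ := -σ k * v k
  have abs_w (k : ℕ) : |w k| = |v k| := by
    rcases hσ k with h | h <;> simp [w, h]
  have w_odd (k : ℕ) (hk : Odd (c.a (k + 1))) : w k = c.α k * (1 - w (k + 1)) := by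
    have σ_eq : σ k = -σ (k + 1) := by rw [(hodd k hk).1, neg_neg]
    simp only [w, hv k, (hodd k hk).2, σ_eq]
    rcases hσ (k + 1) with h | h <;> rw [h] <;> push_cast <;> ring
  have w_even (k : ℕ) (hk : Even (c.a (k + 1))) : w k = c.α k * w (k + 1) := by
    simp only [w, hv k, (heven k hk).2, (heven k hk).1]
    push_cast
    ring
  have w_mem : ∀ k, w k ∈ Set.Icc 0 1 :=
    mem_Icc_of_eq_mul_or_eq_mul_one_sub (fun k => ⟨(c.α_pos k).le, (c.α_lt_half k).le⟩)
      (fun k => (Int.even_or_odd (c.a (k + 1))).imp (w_even k) (w_odd k))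
      (fun k => (abs_w k).trans_le (hv_le k))
  have w_le (k : ℕ) : w k ≤ c.α k := by
    rcases Int.even_or_odd (c.a (k + 1)) with h | h
    · exact (w_even k h).trans_le (mul_le_of_le_one_right (c.α_pos k).le (w_mem _).2)
    · exact (w_odd k h).trans_le
        (mul_le_of_le_one_right (c.α_pos k).le (by linarith [(w_mem (k + 1)).1]))
  have abs_v (k : ℕ) : |v k| = w k := by rw [← abs_w, abs_of_nonneg (w_mem k).1]
  refine ⟨fun k h => (heven k h).2, fun k h => (hodd k h).2 ▸ hσ _, fun k => (abs_v k).trans_le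
    (w_le k), fun k h => ?_, fun k h h' => ?_, fun k h => ?_, fun k h => ?_⟩
  · rw [(hodd k h).2, ← neg_nonneg, ← neg_mul]
    exact (w_mem (k + 1)).1
  · rw [(hodd k h).2, (hodd (k + 1) h').2, (hodd (k + 1) h').1]
  · rw [abs_v, w_odd k h]
    exact mul_le_mul_of_nonneg_left (by linarith [w_le (k + 1)]) (c.α_pos k).le
  · rw [abs_v, w_even k h]
    exact mul_le_mul_of_nonneg_left (w_le (k + 1)) (c.α_pos k).le

end NearestIntegerCF

section GammaStar

lemma oddIdx_succ (α : ℝ) (k : ℕ) :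
    oddIdx α (k + 1) = oddIdx α k + if Odd (nicfA α (k + 1)) then 1 else 0 := by
  rw [oddIdx, ← insert_Icc_right_eq_Icc_add_one (by lia), filter_insert]
  split_ifs with h
  · rw [card_insert_of_notMem (by simp), oddIdx]
  · rfl

lemma abs_lamStar_le_one (α : ℝ) (k : ℕ) : |lamStar α k| ≤ 1 := by
  rw [lamStar]
  split_ifs <;> simp

lemma even_lamStar_sub (α : ℝ) (k : ℕ) : Even (lamStar α k - nicfA α k) := by
  rw [lamStar]
  split_ifs with h
  · exact (Odd.pow (by decide)).sub_odd h
  · simpa using h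

namespace NearestIntegerCF

variable {α : ℝ} (hirr : Irrational α) (h0 : 0 < α) (h12 : α < 1 / 2)

lemma isGridExpansion_gammaStar :
    (ofIrrational α hirr h0 h12).IsGridExpansion (gammaStar α) (lamStar α)
      ((ofIrrational α hirr h0 h12).tailSum (lamStar α)) :=
  isGridExpansion_tailSum (abs_lamStar_le_one α) fun k => even_lamStar_sub α (k + 1)

lemma isStarExpansion_gammaStar :
    (ofIrrational α hirr h0 h12).IsStarExpansion (lamStar α)
      ((ofIrrational α hirr h0 h12).tailSum (lamStar α)) := by
  refine isStarExpansion_of_sign (σ := fun k => (-1) ^ oddIdx α k)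
    (fun k => neg_one_pow_eq_or ℤ _) (fun k hk => ?_) (fun k hk => ?_)
    (tailSum_eq (abs_lamStar_le_one α)) (abs_tailSum_le_one (abs_lamStar_le_one α))
  · replace hk : Odd (nicfA α (k + 1)) := hk
    simp only [lamStar, oddIdx_succ, if_pos hk, pow_succ, mul_neg_one, and_self]
  · replace hk : ¬Odd (nicfA α (k + 1)) := Int.not_odd_iff_even.2 hk
    simp only [lamStar, oddIdx_succ, if_neg hk, add_zero, and_self]

end NearestIntegerCF

end GammaStar

namespace NearestIntegerCF

/-- `γ = Σ_{i ≥ 1} d_i D_{i-1}` with digits `d_i` and normalized remainders `g_i`, the latter in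
`[0, 1)` except possibly for `g_0 = γ`. -/
structure IsDigitExpansion (c : NearestIntegerCF) (γ : ℝ) (d : ℕ → ℤ) (g : ℕ → ℝ) : Prop where
  eq_zero : g 0 = γ
  eq_mul : ∀ k, g k = c.α k * (d (k + 1) + g (k + 1))
  mem_Ico : ∀ k, 1 ≤ k → g k ∈ Set.Ico 0 1

/-- The deviation `t_k` of the digit `d_k` from the centre of its range, doubled. -/
def deviation (c : NearestIntegerCF) (d : ℕ → ℤ) (k : ℕ) : ℤ :=
  2 * d k - (c.a k - 1 + c.ε k)

variable {c : NearestIntegerCF} {γ : ℝ} {d : ℕ → ℤ} {g : ℕ → ℝ}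

lemma IsDigitExpansion.digit_nonneg (h : c.IsDigitExpansion γ d g) {k : ℕ} (hk : 1 ≤ k) :
    0 ≤ d (k + 1) := by
  have remainder_nonneg := (h.mem_Ico k hk).1
  rw [h.eq_mul, mul_nonneg_iff_of_pos_left (c.α_pos _)] at remainder_nonneg
  have : (-1 : ℝ) < d (k + 1) := by linarith [(h.mem_Ico (k + 1) (by lia)).2]
  have : -1 < d (k + 1) := by exact_mod_cast this
  lia

lemma even_deviation_sub (c : NearestIntegerCF) (d : ℕ → ℤ) (k : ℕ) :
    Even (c.deviation d k - c.a k) := by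
  have odd_ε := c.odd_ε k
  rw [deviation]
  grind

lemma IsDigitExpansion.isGridExpansion (h : c.IsDigitExpansion γ d g) :
    c.IsGridExpansion γ (c.deviation d) (fun k => 2 * g k - 1 - c.ε (k + 1) * c.α k) where
  even_sub k := c.even_deviation_sub d (k + 1)
  tail_eq k := by
    rw [deviation]
    push_cast
    linear_combination 2 * h.eq_mul k + c.α_mul k
  two_mul_eq := by
    rw [h.eq_zero, c.ε_one]
    push_cast
    ring

lemma isDigitExpansion_cCoef {α : ℝ} (γ : ℝ) (hirr : Irrational α) (h0 : 0 < α)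
    (h12 : α < 1 / 2) :
    (ofIrrational α hirr h0 h12).IsDigitExpansion γ (cCoef α γ) (gSeq α γ) where
  eq_zero := rfl
  eq_mul k := by
    have ne := (irrational_nicfT_and_bounds hirr h0 h12 k).2.1.ne'
    change gSeq α γ k = nicfT α k * (cCoef α γ (k + 1) + gSeq α γ (k + 1))
    rw [cCoef, gSeq, Nat.add_sub_cancel, Int.floor_add_fract, mul_div_cancel₀ _ ne]
  mem_Ico k hk := by
    obtain ⟨j, rfl⟩ := Nat.exists_eq_add_of_le' hk
    exact ⟨Int.fract_nonneg _, Int.fract_lt_one _⟩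

end NearestIntegerCF

/-! ### Markoff values from bounds in the cells -/

namespace NearestIntegerCF

variable {c : NearestIntegerCF} {γ R κ G : ℝ} {t : ℕ → ℤ} {u v : ℕ → ℝ} {k₀ : ℕ}

/-- The product of the two linear forms is at least `G` times their determinant at all points of
the `k + 1`-st grid with `J = ±1`. -/
def CellBound (c : NearestIntegerCF) (t : ℕ → ℤ) (u v : ℕ → ℝ) (G : ℝ) (k : ℕ) : Prop :=
  ∀ I J : ℤ, Odd I → (J = 1 ∨ J = -1) →
    G * c.gridDet k ≤ |c.leftForm t u k (I, J) * c.rightForm v k (I, J)|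

/-- The coefficients and the normalized sums on both sides are small, so that the centres of the
divided grids stay close to the origin. -/
structure IsNearOrigin (c : NearestIntegerCF) (t : ℕ → ℤ) (u v : ℕ → ℝ) (k₀ : ℕ) : Prop where
  abs_t_le : ∀ k, |t (k + 1)| ≤ 1
  abs_u_le : ∀ k, k₀ ≤ k → |u k| ≤ 1 / 3
  abs_v_le : ∀ k, |v k| ≤ c.α k

lemma LargeQuotients.gridDet_mem_Icc (h : c.LargeQuotients R k₀) {k : ℕ} (hk : k₀ ≤ k) :
    c.gridDet k ∈ Set.Icc (c.a (k + 1) - 2 * tailBound R) (c.a (k + 1) + 2 * tailBound R) := by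
  have left_mem := pm_one_mul_mem_Icc (c.ε_cast_eq (k + 1))
    ((abs_of_nonneg (c.αbar_nonneg k)).trans_le (h.αbar_le k hk))
  have right_mem := pm_one_mul_mem_Icc (c.ε_cast_eq (k + 2))
    ((abs_of_pos (c.α_pos (k + 1))).trans_le (h.α_le (k + 1) (by lia)))
  rw [gridDet]
  constructor <;> linarith [left_mem.1, left_mem.2, right_mem.1, right_mem.2]

lemma LargeQuotients.exists_le_q (h : c.LargeQuotients R k₀) (B : ℝ) : ∃ k, k₀ ≤ k ∧ B ≤ c.q k := by
  have two_pow_le (n : ℕ) : (2 : ℝ) ^ n ≤ c.q (k₀ + n) := by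
    induction n with
    | zero => simpa using c.one_le_q k₀
    | succ n ih =>
      have sign_mem := pm_one_mul_mem_Icc (c.ε_cast_eq (k₀ + n + 1)) (c.abs_αbar_le_one (k₀ + n))
      rw [← add_assoc, q_succ, pow_succ]
      exact mul_le_mul ih
        (by linarith [h.four_le, h.le_a (k₀ + n + 1) (by lia), sign_mem.1]) zero_le_two
        (c.q_pos _).le
  obtain ⟨n, hn⟩ := pow_unbounded_of_one_lt B one_lt_two
  exact ⟨k₀ + n, by lia, hn.le.trans (two_pow_le n)⟩

lemma abs_fst_le (v : ℕ → ℝ) (k : ℕ) (I J : ℤ) :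
    |(I : ℝ)| ≤ |c.rightForm v k (I, J)| + |(J : ℝ)| * c.α (k + 1) + |v (k + 1)| := by
  have split : (I : ℝ) = c.rightForm v k (I, J) + c.ε (k + 2) * (J * c.α (k + 1)) + v (k + 1) := by
    simp only [rightForm]
    ring
  have := abs_add_three (c.rightForm v k (I, J)) (c.ε (k + 2) * (J * c.α (k + 1))) (v (k + 1))
  rwa [← split, abs_pm_one_mul (c.ε_cast_eq _), abs_mul, abs_of_pos (c.α_pos _)] at this

lemma abs_snd_mul_le (t : ℕ → ℤ) (u : ℕ → ℝ) (k : ℕ) (I J : ℤ) :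
    |(J : ℝ)| * (c.a (k + 1) - c.αbar k) ≤
      |c.leftForm t u k (I, J)| + |(I : ℝ)| + |(t (k + 1) : ℝ)| + |u k| := by
  have split : J * (c.a (k + 1) + c.ε (k + 1) * c.αbar k) =
      c.leftForm t u k (I, J) - I - t (k + 1) + c.ε (k + 1) * u k := by
    simp only [leftForm]
    ring
  have sub_le : c.a (k + 1) - c.αbar k ≤ c.a (k + 1) + c.ε (k + 1) * c.αbar k := by
    linarith [(pm_one_mul_mem_Icc (c.ε_cast_eq (k + 1)) (abs_of_nonneg (c.αbar_nonneg k)).le).1]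
  calc |(J : ℝ)| * (c.a (k + 1) - c.αbar k)
      ≤ |(J : ℝ)| * |c.a (k + 1) + c.ε (k + 1) * c.αbar k| :=
        mul_le_mul_of_nonneg_left (sub_le.trans (le_abs_self _)) (abs_nonneg _)
    _ = |c.leftForm t u k (I, J) - I - t (k + 1) + c.ε (k + 1) * u k| := by rw [← abs_mul, split]
    _ ≤ |c.leftForm t u k (I, J)| + |(I : ℝ)| + |(t (k + 1) : ℝ)| + |u k| := by
        refine (abs_add_le _ _).trans ?_
        rw [abs_pm_one_mul (c.ε_cast_eq _)]
        have := abs_sub (c.leftForm t u k (I, J) - I) (t (k + 1))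
        have := abs_sub (c.leftForm t u k (I, J)) I
        linarith

lemma IsNearOrigin.gridDet_le_of_three_le (hs : c.IsNearOrigin t u v k₀)
    (hL : c.LargeQuotients R k₀) {k : ℕ} (hk : k₀ ≤ k) {I J : ℤ} (hI : 3 ≤ |I|)
    (right_le : |c.rightForm v k (I, J)| ≤ 1) (le_right : c.α (k + 1) ≤ |c.rightForm v k (I, J)|) :
    c.gridDet k ≤ |c.leftForm t u k (I, J) * c.rightForm v k (I, J)| := by
  set b := tailBound R
  set z := c.α (k + 1)
  set X := |c.leftForm t u k (I, J)|
  have three_le : (3 : ℝ) ≤ |(I : ℝ)| := by exact_mod_cast hI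
  have abs_t_le : |(t (k + 1) : ℝ)| ≤ 1 := by exact_mod_cast hs.abs_t_le k
  have four_le : (4 : ℝ) ≤ c.a (k + 1) := hL.four_le.trans (hL.le_a (k + 1) (by lia))
  have b_le : b ≤ 3 / 11 := tailBound_le_three_div hL.four_le
  have z_le : z ≤ b := hL.α_le (k + 1) (by lia)
  have αbar_le := hL.αbar_le k hk
  have z_pos : 0 < z := c.α_pos (k + 1)
  have fst_le := abs_fst_le (c := c) v k I J
  have le_Jz : 2 - z ≤ |(J : ℝ)| * z := by linarith [hs.abs_v_le (k + 1)]
  have le_X : |(J : ℝ)| * (c.a (k + 1) - b - z) - (2 + 1 / 3 + z) ≤ X := by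
    have snd_le := abs_snd_mul_le (c := c) t u k I J
    have := mul_le_mul_of_nonneg_left αbar_le (abs_nonneg (J : ℝ))
    linarith [hs.abs_v_le (k + 1), hs.abs_u_le k hk]
  rw [abs_mul]
  calc c.gridDet k ≤ c.a (k + 1) + 2 * b := (hL.gridDet_mem_Icc hk).2
    _ ≤ (2 - z) * (c.a (k + 1) - b - z) - z * (2 + 1 / 3 + z) := by
        nlinarith [mul_nonneg z_pos.le (by linarith : 0 ≤ b - z)]
    _ ≤ |(J : ℝ)| * z * (c.a (k + 1) - b - z) - z * (2 + 1 / 3 + z) :=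
        sub_le_sub_right (mul_le_mul_of_nonneg_right le_Jz (by linarith)) _
    _ = (|(J : ℝ)| * (c.a (k + 1) - b - z) - (2 + 1 / 3 + z)) * z := by ring
    _ ≤ X * z := mul_le_mul_of_nonneg_right le_X z_pos.le
    _ ≤ X * |c.rightForm v k (I, J)| := mul_le_mul_of_nonneg_left le_right (abs_nonneg _)

lemma three_le_abs_of_odd {I : ℤ} (hI : Odd I) (hne : ¬(I = 1 ∨ I = -1)) : 3 ≤ |I| := by
  obtain ⟨i, rfl⟩ := hI
  rw [le_abs]
  lia

lemma IsCentre.le_mul_of_mul_gridDet_le (hκ : c.IsCentre γ t u v k₀ κ) {k : ℕ} (hk : k₀ ≤ k)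
    {N p : ℤ} (h : G * c.gridDet k ≤ |c.leftForm t u k (c.gridCoord t N p (k + 1)) *
      c.rightForm v k (c.gridCoord t N p (k + 1))|) :
    G ≤ |2 * N - κ| * |2 * (N * c.α 0 - p - γ)| := by
  rw [← hκ.mul_gridDet_eq N p hk] at h
  exact le_of_mul_le_mul_right h (c.gridDet_pos k)

-- Passing to the next grid replaces `J` by `-I`. Unless the point lies in one of the cells
-- controlled by `CellBound`, either `|I| < |J|` and one descends, or the product is large.
lemma IsNearOrigin.le_mul_of_forall_cellBound (hs : c.IsNearOrigin t u v k₀)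
    (hL : c.LargeQuotients R k₀) (hexp : c.IsGridExpansion γ t v)
    (hκ : c.IsCentre γ t u v k₀ κ) (hG : G ≤ 1) (hcell : ∀ k, k₀ ≤ k → c.CellBound t u v G k)
    {k : ℕ} (hk : k₀ ≤ k) {N p : ℤ} (close : |2 * (N * c.α 0 - p - γ)| ≤ c.D (k + 1)) :
    G ≤ |2 * N - κ| * |2 * (N * c.α 0 - p - γ)| := by
  induction hn : (c.gridCoord t N p (k + 1)).2.natAbs using Nat.strong_induction_on
    generalizing k with
  | _ n ih =>
  obtain ⟨odd_I, odd_J⟩ := hexp.odd_gridCoord N p (k + 1)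
  have next_J : (c.gridCoord t N p (k + 2)).2 = -(c.gridCoord t N p (k + 1)).1 := rfl
  by_cases hJ : (c.gridCoord t N p (k + 1)).2 = 1 ∨ (c.gridCoord t N p (k + 1)).2 = -1
  · exact hκ.le_mul_of_mul_gridDet_le hk (hcell k hk _ _ odd_I hJ)
  by_cases hI : (c.gridCoord t N p (k + 1)).1 = 1 ∨ (c.gridCoord t N p (k + 1)).1 = -1
  · exact hκ.le_mul_of_mul_gridDet_le (by lia) (hcell (k + 1) (by lia) _ _
      (hexp.odd_gridCoord N p (k + 2)).1 (by lia))
  have three_le := three_le_abs_of_odd odd_I hI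
  have D_pos := c.D_pos (k + 1)
  rw [hκ.right_eq N p k, abs_mul, abs_of_pos D_pos] at close
  have right_le := le_of_mul_le_mul_left (close.trans_eq (mul_one _).symm) D_pos
  by_cases close' : |2 * (N * c.α 0 - p - γ)| ≤ c.D (k + 2)
  · refine ih _ ?_ (by lia) close' rfl
    have fst_le := abs_fst_le (c := c) v k (c.gridCoord t N p (k + 1)).1
      (c.gridCoord t N p (k + 1)).2
    have three_le_cast : (3 : ℝ) ≤ |((c.gridCoord t N p (k + 1)).2 : ℝ)| := by
      exact_mod_cast three_le_abs_of_odd odd_J hJ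
    have : |((c.gridCoord t N p (k + 1)).1 : ℝ)| < |((c.gridCoord t N p (k + 1)).2 : ℝ)| := by
      nlinarith [hs.abs_v_le (k + 1), c.α_lt_half (k + 1)]
    rw [next_J, ← hn]
    zify
    rw [abs_neg]
    exact_mod_cast this
  · rw [not_le, hκ.right_eq N p k, abs_mul, abs_of_pos D_pos, D_succ] at close'
    refine hκ.le_mul_of_mul_gridDet_le hk (le_trans ?_ (hs.gridDet_le_of_three_le hL hk three_le
      right_le (le_of_mul_le_mul_left close'.le D_pos)))
    exact mul_le_of_le_one_left (c.gridDet_pos k).le hG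

lemma IsNearOrigin.exists_arbitrarily_large_mul_le (hs : c.IsNearOrigin t u v k₀)
    (hL : c.LargeQuotients R k₀) (hexp : c.IsGridExpansion γ t v)
    (hκ : c.IsCentre γ t u v k₀ κ) (B : ℝ) :
    ∃ N p : ℤ, B ≤ |2 * N - κ| ∧ |2 * N - κ| * |2 * (N * c.α 0 - p - γ)| ≤ 8 := by
  obtain ⟨k, hk, le_q⟩ := hL.exists_le_q B
  obtain ⟨N, p, hNp⟩ := hexp.exists_gridCoord_eq (k + 1) odd_one odd_one
  have four_le := hL.four_le.trans (hL.le_a (k + 1) (by lia))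
  have b_le := tailBound_le_three_div hL.four_le
  have abs_t : |(t (k + 1) : ℝ)| ≤ 1 := by exact_mod_cast hs.abs_t_le k
  obtain ⟨le_t, t_le⟩ := abs_le.1 abs_t
  obtain ⟨le_u, u_le⟩ := pm_one_mul_mem_Icc (c.ε_cast_eq (k + 1)) (hs.abs_u_le k hk)
  obtain ⟨le_αbar, αbar_le⟩ := pm_one_mul_mem_Icc (c.ε_cast_eq (k + 1))
    ((abs_of_nonneg (c.αbar_nonneg k)).trans_le (hL.αbar_le k hk))
  have α_le := hL.α_le (k + 1) (by lia)
  obtain ⟨le_α, α_le'⟩ := pm_one_mul_mem_Icc (c.ε_cast_eq (k + 2))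
    ((abs_of_pos (c.α_pos (k + 1))).trans_le α_le)
  obtain ⟨le_v, v_le⟩ := abs_le.1 (hs.abs_v_le (k + 1))
  have left_ge : 1 ≤ c.leftForm t u k (1, 1) := by
    simp only [leftForm, Int.cast_one, one_mul]
    linarith
  have left_le : c.leftForm t u k (1, 1) ≤ c.a (k + 1) + 3 := by
    simp only [leftForm, Int.cast_one, one_mul]
    linarith
  have right_le : |c.rightForm v k (1, 1)| ≤ 2 := by
    simp only [rightForm, Int.cast_one, one_mul, abs_le]
    constructor <;> linarith
  refine ⟨N, p, ?_, le_of_mul_le_mul_right ?_ (c.gridDet_pos k)⟩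
  · rw [hκ.abs_left_eq N p k hk, hNp, abs_of_pos (by linarith)]
    exact le_q.trans (le_mul_of_one_le_right (c.q_pos k).le left_ge)
  · rw [hκ.mul_gridDet_eq N p hk, hNp, abs_mul, abs_of_pos (by linarith)]
    refine (mul_le_mul left_le right_le (abs_nonneg _) (by linarith)).trans ?_
    linarith [(hL.gridDet_mem_Icc hk).1]

theorem IsNearOrigin.div_four_le_Mval (hs : c.IsNearOrigin t u v k₀)
    (hL : c.LargeQuotients R k₀) (hexp : c.IsGridExpansion γ t v) (hu : c.IsInitialSum t u k₀)
    (hG : G ≤ 1) (hcell : ∀ k, k₀ ≤ k → c.CellBound t u v G k) : G / 4 ≤ Mval (c.α 0) γ := by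
  obtain ⟨κ, hκ⟩ := hexp.exists_isCentre hu
  refine le_Mval_of_productBound (κ := κ) ⟨c.D (k₀ + 1), c.D_pos _, fun N p close => ?_⟩
    ⟨8, hs.exists_arbitrarily_large_mul_le hL hexp hκ⟩
  rw [mul_div_cancel₀ G four_ne_zero]
  exact hs.le_mul_of_forall_cellBound hL hexp hκ hG hcell le_rfl close.le

end NearestIntegerCF

/-! ### The Markoff value of `γ_*` -/

/-- The numerical conditions under which the lower bound `G` for the products of the two forms
is established for `γ_*`. Here `b` bounds all `α_k` and `αbar_k`, while `a₀` and `a₁` bound the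
even and the odd partial quotients from below, `β` bounds `α_k` and `αbar_{k+1}` when `a_{k+1}`
is even, `Q` bounds `α_k + |v_k|`, and `ω` and `H` bound `αbar_k + |u_k|` and `|u_k|`. -/
structure StarConstants (b a₀ a₁ β Q H ω G : ℝ) : Prop where
  b_pos : 0 < b
  b_le : b ≤ 3 / 11
  b_mul_b_le : b * b ≤ β
  four_le : 4 ≤ a₀
  five_le : 5 ≤ a₁
  one_le_β_mul : 1 ≤ β * (a₀ - b)
  two_le_Q_mul : 2 ≤ Q * (a₁ - b)
  β_mul_le : β * (1 + b) ≤ Q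
  H_nonneg : 0 ≤ H
  H_le : H ≤ 1 / 3
  H_le_ω : H ≤ ω
  b_mul_le_ω : b * (1 + H) ≤ ω
  ω_mul_le : ω * (1 + H) ≤ H * (2 + H)
  two_le_ω_mul : 2 ≤ ω * (a₁ - b)
  two_add_le_ω_mul : 2 + β * H ≤ ω * (a₁ - β)
  two_add_mul_le : (2 + H) * 2 + (1 + H - ω) * ω ≤ (2 + H) * (ω * a₁)
  G_pos : 0 < G
  G_le_one_sub_Q : G ≤ 1 - Q
  G_le_one_sub_ω : G ≤ 1 - ω
  even_left : G * (a₀ - 1 / 2 * Q - 1 / (2 + H) * ω) ≤ (1 - ω) * (a₀ - 1 - Q)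
  even_right : G * (a₀ - 1 / 2 * Q - 1 / (2 + H) * ω) ≤ (1 - Q) * (a₀ - 1 - ω)
  even_left_far : G * (a₀ + 2 * b) ≤ (1 - ω) * (a₀ + 1 - Q)
  even_right_far : G * (a₀ + 2 * b) ≤ (1 - Q) * (a₀ + 1 - ω)
  odd_left : G * (a₁ + 2 * b) ≤ (1 - ω) * (a₁ - Q)
  odd_right : G * (a₁ + 2 * b) ≤ (1 - Q) * (a₁ - ω)
  odd_right_neg : G * (a₁ - β - b) ≤ (1 - β) * (a₁ - 2 - b * (1 + H))
  odd_right_pos : G * (a₁ - β + b) ≤ (1 - β) * (a₁ - 2 - b * H)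
  odd_left_small : G * a₁ ≤ (1 - b * H) * (a₁ - 2 - b)
  odd_left_neg : G * (a₁ - b - β) ≤ (1 - β * (1 + H)) * (a₁ - 2 - b)
  odd_right_far : G * (a₁ + 2 * b) ≤ (1 - Q) * (a₁ - b * (1 + H))
  odd_left_far : G * (a₁ + 2 * b) ≤ (1 - b * (1 + H)) * (a₁ - b)

namespace NearestIntegerCF

/-- From `k₀` on, the even partial quotients are at least `a₀` and the odd ones at least `a₁`. -/
structure ParityBounds (c : NearestIntegerCF) (a₀ a₁ : ℝ) (k₀ : ℕ) : Prop where
  le_of_even : ∀ k, k₀ ≤ k → Even (c.a k) → a₀ ≤ c.a k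
  le_of_odd : ∀ k, k₀ ≤ k → Odd (c.a k) → a₁ ≤ c.a k

/-- The bounds which the normalized initial sums `u` of `γ_*` satisfy. -/
structure InitialSumBounds (c : NearestIntegerCF) (β H ω : ℝ) (t : ℕ → ℤ) (u : ℕ → ℝ) (k : ℕ) :
    Prop where
  mul_nonneg_of_odd : Odd (c.a k) → 0 ≤ t k * u k
  le_abs_of_odd : Odd (c.a k) → c.αbar k * (1 - H) ≤ |u k|
  abs_le_of_even : Even (c.a k) → |u k| ≤ c.αbar k * H
  αbar_le_of_even : Even (c.a k) → c.αbar k ≤ β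
  abs_le_mul : |u k| ≤ c.αbar k * (1 + H)
  add_abs_le : c.αbar k + |u k| ≤ ω

variable {c : NearestIntegerCF} {R a₀ a₁ β Q H ω G : ℝ} {t : ℕ → ℤ} {u v : ℕ → ℝ} {k₀ k : ℕ}

lemma InitialSumBounds.abs_le (h : c.InitialSumBounds β H ω t u k) (H_nonneg : 0 ≤ H)
    (ω_mul_le : ω * (1 + H) ≤ H * (2 + H)) : |u k| ≤ H := by
  have := mul_le_mul_of_nonneg_right h.add_abs_le (by linarith : 0 ≤ 1 + H)
  refine le_of_mul_le_mul_right (a := 2 + H) ?_ (by linarith)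
  linarith [h.abs_le_mul]

lemma le_of_one_le_mul_sub {x a ε y b m x₀ : ℝ} (hε : ε = 1 ∨ ε = -1) (hx : 0 ≤ x) (hy : |y| ≤ b)
    (ha : m ≤ a) (hb : b < m) (hx₀ : 1 ≤ x₀ * (m - b)) (h : x * (a + ε * y) = 1) : x ≤ x₀ :=
  (le_one_div_of_mul_add_eq_one hε hx hy ha hb h).trans
    ((div_le_iff₀ (sub_pos.2 hb)).2 hx₀)

lemma mul_eq_neg_abs_of_nonpos {s y : ℝ} (hs : s = 1 ∨ s = -1) (h : s * y ≤ 0) :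
    s * y = -|y| := by
  rw [← abs_pm_one_mul hs, abs_of_nonpos h, neg_neg]

lemma mul_eq_abs_of_nonneg {s y : ℝ} (hs : s = 1 ∨ s = -1) (h : 0 ≤ s * y) : s * y = |y| := by
  rw [← abs_pm_one_mul hs, abs_of_nonneg h]

lemma IsStarExpansion.cast_eq_pm_one (hs : c.IsStarExpansion t v) (odd : Odd (c.a (k + 1))) :
    (t (k + 1) : ℝ) = 1 ∨ (t (k + 1) : ℝ) = -1 := by
  exact_mod_cast hs.eq_pm_one k odd

section InitialSums

variable (P : StarConstants (tailBound R) a₀ a₁ β Q H ω G) (hL : c.LargeQuotients R k₀)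
  (hp : c.ParityBounds a₀ a₁ k₀) (hs : c.IsStarExpansion t v) (hu : c.IsInitialSum t u k₀)
  (hk : k₀ ≤ k)

include P hL hp hs hu hk

lemma initialSumBounds_of_even (even : Even (c.a (k + 1))) (abs_le : |u k| ≤ H) :
    c.InitialSumBounds β H ω t u (k + 1) := by
  have αbar_pos := c.αbar_succ_pos k
  have abs_u_le : |u (k + 1)| ≤ c.αbar (k + 1) * H := by
    rw [hu k hk, hs.eq_zero k even, abs_mul, abs_of_pos αbar_pos, Int.cast_zero, zero_sub, abs_neg,
      abs_pm_one_mul (c.ε_cast_eq _)]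
    exact mul_le_mul_of_nonneg_left abs_le αbar_pos.le
  have αbar_le_β : c.αbar (k + 1) ≤ β :=
    le_of_one_le_mul_sub (c.ε_cast_eq _) αbar_pos.le
      ((abs_of_nonneg (c.αbar_nonneg k)).trans_le (hL.αbar_le k hk))
      (hp.le_of_even (k + 1) (by lia) even) (by linarith [P.four_le, P.b_le]) P.one_le_β_mul
      (c.αbar_mul k)
  have odd_elim (odd : Odd (c.a (k + 1))) : False := Int.not_odd_iff_even.2 even odd
  refine ⟨fun odd => (odd_elim odd).elim, fun odd => (odd_elim odd).elim, fun _ => abs_u_le,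
    fun _ => αbar_le_β, by linarith, ?_⟩
  calc c.αbar (k + 1) + |u (k + 1)| ≤ c.αbar (k + 1) * (1 + H) := by linarith
    _ ≤ tailBound R * (1 + H) :=
      mul_le_mul_of_nonneg_right (hL.αbar_le _ (by lia)) (by linarith [P.H_nonneg])
    _ ≤ ω := P.b_mul_le_ω

omit hL hp in
lemma initialSumBounds_of_odd (odd : Odd (c.a (k + 1))) (abs_le : |u k| ≤ H)
    (key : 2 - c.ε (k + 1) * (t (k + 1) * u k) ≤
      ω * (c.a (k + 1) + c.ε (k + 1) * c.αbar k)) :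
    c.InitialSumBounds β H ω t u (k + 1) := by
  set x := c.αbar (k + 1)
  set y := c.ε (k + 1) * (t (k + 1) * u k) with hy
  have x_pos : 0 < x := c.αbar_succ_pos k
  have t_eq := hs.cast_eq_pm_one odd
  obtain ⟨le_y, y_le⟩ := pm_one_mul_mem_Icc (c.ε_cast_eq (k + 1))
    ((abs_pm_one_mul t_eq _).trans_le abs_le)
  have t_mul : t (k + 1) * u (k + 1) = x * (1 - y) := by
    rw [hu k hk, hy]
    linear_combination x * pm_one_mul_self t_eq
  have t_mul_nonneg : 0 ≤ t (k + 1) * u (k + 1) := by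
    rw [t_mul]
    exact mul_nonneg x_pos.le (by linarith [P.H_le])
  have abs_u : |u (k + 1)| = x * (1 - y) := by rw [← mul_eq_abs_of_nonneg t_eq t_mul_nonneg, t_mul]
  have even_elim (even : Even (c.a (k + 1))) : False := Int.not_even_iff_odd.2 odd even
  refine ⟨fun _ => t_mul_nonneg, fun _ => ?_, fun even => (even_elim even).elim,
    fun even => (even_elim even).elim, ?_, ?_⟩
  · rw [abs_u]
    exact mul_le_mul_of_nonneg_left (by linarith) x_pos.le
  · rw [abs_u]
    exact mul_le_mul_of_nonneg_left (by linarith) x_pos.le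
  · have x_mul_eq : x * (ω * (c.a (k + 1) + c.ε (k + 1) * c.αbar k)) = ω := by
      linear_combination ω * c.αbar_mul k
    rw [abs_u]
    linarith [mul_le_mul_of_nonneg_left key x_pos.le]

omit hs hu in
lemma two_le_ω_mul (odd : Odd (c.a (k + 1))) :
    2 ≤ ω * (c.a (k + 1) + c.ε (k + 1) * c.αbar k) :=
  P.two_le_ω_mul.trans (mul_le_mul_of_nonneg_left
    (by linarith [hp.le_of_odd (k + 1) (by lia) odd, (pm_one_mul_mem_Icc (c.ε_cast_eq (k + 1))
      ((abs_of_nonneg (c.αbar_nonneg k)).trans_le (hL.αbar_le k hk))).1])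
    (P.H_nonneg.trans P.H_le_ω))

omit hL hu in
lemma InitialSumBounds.two_sub_le_of_even (h : c.InitialSumBounds β H ω t u k)
    (odd : Odd (c.a (k + 1))) (even : Even (c.a k)) :
    2 - c.ε (k + 1) * (t (k + 1) * u k) ≤
      ω * (c.a (k + 1) + c.ε (k + 1) * c.αbar k) := by
  have ω_nonneg : 0 ≤ ω := P.H_nonneg.trans P.H_le_ω
  have le_a := hp.le_of_odd (k + 1) (by lia) odd
  have αbar_le := h.αbar_le_of_even even
  obtain ⟨le_y, y_le⟩ := _root_.abs_le.1
    ((abs_pm_one_mul (hs.cast_eq_pm_one odd) _).trans_le (h.abs_le_of_even even))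
  rcases c.ε_cast_eq (k + 1) with hε | hε
  · have ω_mul_le : ω * (a₁ - tailBound R) ≤ ω * c.a (k + 1) :=
      mul_le_mul_of_nonneg_left (by linarith [P.b_pos]) ω_nonneg
    have := mul_le_mul_of_nonneg_left P.H_le_ω (c.αbar_nonneg k)
    rw [hε]
    linarith [P.two_le_ω_mul]
  · have := mul_le_mul_of_nonneg_right αbar_le P.H_nonneg
    have : ω * (a₁ - β) ≤ ω * (c.a (k + 1) - c.αbar k) :=
      mul_le_mul_of_nonneg_left (by linarith) ω_nonneg
    rw [hε]
    linarith [P.two_add_le_ω_mul]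

omit hu in
lemma InitialSumBounds.two_sub_le_of_odd (h : c.InitialSumBounds β H ω t u k) (pos : 1 ≤ k)
    (odd : Odd (c.a (k + 1))) (odd_prev : Odd (c.a k)) :
    2 - c.ε (k + 1) * (t (k + 1) * u k) ≤
      ω * (c.a (k + 1) + c.ε (k + 1) * c.αbar k) := by
  have ω_nonneg : 0 ≤ ω := P.H_nonneg.trans P.H_le_ω
  have two_le := two_le_ω_mul P hL hp hk odd
  have t_eq : (t (k + 1) : ℝ) = -t k := by
    obtain ⟨j, rfl⟩ := Nat.exists_eq_add_of_le' pos
    exact_mod_cast hs.eq_neg j odd_prev odd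
  rw [mul_eq_neg_abs_of_nonpos (hs.cast_eq_pm_one odd)
    (by rw [t_eq]; linarith [h.mul_nonneg_of_odd odd_prev])]
  rcases c.ε_cast_eq (k + 1) with hε | hε <;> rw [hε] at two_le ⊢
  · -- `2 + |u|` is bounded by a convex combination of the bounds `ω - αbar` and `αbar (1 + H)`
    -- for `|u|`.
    have := mul_le_mul_of_nonneg_left h.add_abs_le
      (by linarith [P.G_pos, P.G_le_one_sub_ω, P.H_nonneg] : 0 ≤ 1 + H - ω)
    have := mul_le_mul_of_nonneg_left h.abs_le_mul (by linarith : 0 ≤ 1 + ω)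
    have := mul_le_mul_of_nonneg_left (mul_le_mul_of_nonneg_left
      (hp.le_of_odd (k + 1) (by lia) odd) ω_nonneg) (by linarith [P.H_nonneg] : 0 ≤ 2 + H)
    refine le_of_mul_le_mul_left (a := 2 + H) ?_ (by linarith [P.H_nonneg])
    linarith [P.two_add_mul_le]
  · linarith [abs_nonneg (u k)]

omit hk in
lemma initialSumBounds (u_eq : u k₀ = 0) (hk : k₀ < k) : c.InitialSumBounds β H ω t u k := by
  induction k, hk using Nat.le_induction with
  | base =>
    have abs_le : |u k₀| ≤ H := by simpa [u_eq] using P.H_nonneg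
    rcases Int.even_or_odd (c.a (k₀ + 1)) with even | odd
    · exact initialSumBounds_of_even P hL hp hs hu le_rfl even abs_le
    · refine initialSumBounds_of_odd P hs hu le_rfl odd abs_le ?_
      rw [u_eq, mul_zero, mul_zero, sub_zero]
      exact two_le_ω_mul P hL hp le_rfl odd
  | succ k hk ih =>
    have abs_le := ih.abs_le P.H_nonneg P.ω_mul_le
    have hk : k₀ ≤ k := by lia
    rcases Int.even_or_odd (c.a (k + 1)) with even | odd
    · exact initialSumBounds_of_even P hL hp hs hu hk even abs_le
    · refine initialSumBounds_of_odd P hs hu hk odd abs_le ?_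
      rcases Int.even_or_odd (c.a k) with even_prev | odd_prev
      · exact ih.two_sub_le_of_even P hp hs hk odd even_prev
      · exact ih.two_sub_le_of_odd P hL hp hs hk (by lia) odd odd_prev

end InitialSums

section TailSums

variable (P : StarConstants (tailBound R) a₀ a₁ β Q H ω G) (hL : c.LargeQuotients R k₀)
  (hp : c.ParityBounds a₀ a₁ k₀) (hs : c.IsStarExpansion t v) (hk : k₀ ≤ k)

include P hL hp hs hk

lemma tailSumBounds_of_even (even : Even (c.a (k + 1))) :
    c.α k + |v k| ≤ Q ∧ c.α k - β ≤ |v k| := by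
  have α_le_β : c.α k ≤ β :=
    le_of_one_le_mul_sub (c.ε_cast_eq _) (c.α_pos k).le
      ((abs_of_pos (c.α_pos (k + 1))).trans_le (hL.α_le (k + 1) (by lia)))
      (hp.le_of_even (k + 1) (by lia) even) (by linarith [P.four_le, P.b_le]) P.one_le_β_mul
      (c.α_mul k)
  refine ⟨?_, by linarith [abs_nonneg (v k)]⟩
  calc c.α k + |v k| ≤ c.α k * (1 + c.α (k + 1)) := by linarith [hs.abs_le_of_even k even]
    _ ≤ β * (1 + tailBound R) :=
      mul_le_mul α_le_β (by linarith [hL.α_le (k + 1) (by lia)])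
        (by linarith [c.α_pos (k + 1)]) ((c.α_pos k).le.trans α_le_β)
    _ ≤ Q := P.β_mul_le

lemma tailSumBounds_of_odd (odd : Odd (c.a (k + 1))) :
    c.α k + |v k| ≤ Q ∧ c.α k - β ≤ |v k| := by
  have α_le : c.α k ≤ Q / 2 :=
    le_of_one_le_mul_sub (c.ε_cast_eq _) (c.α_pos k).le
      ((abs_of_pos (c.α_pos (k + 1))).trans_le (hL.α_le (k + 1) (by lia)))
      (hp.le_of_odd (k + 1) (by lia) odd) (by linarith [P.five_le, P.b_le])
      (by linarith [P.two_le_Q_mul]) (c.α_mul k)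
  refine ⟨by linarith [hs.abs_le k], ?_⟩
  have := mul_le_mul (hL.α_le k hk) (hL.α_le (k + 1) (by lia)) (c.α_pos (k + 1)).le P.b_pos.le
  linarith [hs.le_abs_of_odd k odd, P.b_mul_b_le]

lemma tailSumBounds : c.α k + |v k| ≤ Q ∧ c.α k - β ≤ |v k| :=
  (Int.even_or_odd (c.a (k + 1))).elim (tailSumBounds_of_even P hL hp hs hk)
    (tailSumBounds_of_odd P hL hp hs hk)

end TailSums

end NearestIntegerCF

/-- The values of `|(B + W + I) (I - W')|` at the four odd integers `I = ±1`, `I = -B ± 1` closest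
to its zeros are at least `K`. -/
structure VertexBound (B W W' K : ℝ) : Prop where
  abs_left_le : |W| ≤ 1
  abs_right_le : |W'| ≤ 1
  at_neg_one : K ≤ (1 + W') * (B - 1 + W)
  at_one : K ≤ (1 - W') * (B + 1 + W)
  at_one_sub : K ≤ (1 + W) * (B - 1 + W')
  at_neg_one_sub : K ≤ (1 - W) * (B + 1 + W')

-- On the interval between the two inner vertices the function is concave in `I`.
lemma VertexBound.le_neg_mul_of_mem_Icc {B W W' K I : ℝ} (h : VertexBound B W W' K) (hB : 2 ≤ B)
    (hI : I ∈ Set.Icc (1 - B) (-1)) : K ≤ -((B + W + I) * (I - W')) := by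
  obtain ⟨le_I, I_le⟩ := hI
  rcases hB.eq_or_lt with rfl | two_lt
  · obtain rfl : I = -1 := by linarith
    linarith [h.at_neg_one]
  · refine le_of_mul_le_mul_right (a := B - 2) ?_ (by linarith)
    have interpolation : -((B + W + I) * (I - W')) * (B - 2) =
        ((1 + W') * (B - 1 + W)) * (I - (1 - B)) + ((1 + W) * (B - 1 + W')) * (-1 - I) +
        (B - 2) * ((I - (1 - B)) * (-1 - I)) := by ring
    rw [interpolation]
    have := mul_le_mul_of_nonneg_right h.at_neg_one (sub_nonneg.2 le_I)
    have := mul_le_mul_of_nonneg_right h.at_one_sub (sub_nonneg.2 I_le)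
    have := mul_nonneg (sub_nonneg.2 two_lt.le)
      (mul_nonneg (sub_nonneg.2 le_I) (sub_nonneg.2 I_le))
    linarith

lemma VertexBound.le_abs_of_odd {B I : ℤ} {W W' K : ℝ} (h : VertexBound B W W' K) (hB : Even B)
    (two_le : 2 ≤ B) (hI : Odd I) : K ≤ |(B + W + I) * (I - W')| := by
  obtain ⟨neg_one_le, le_one⟩ := abs_le.1 h.abs_left_le
  obtain ⟨neg_one_le', le_one'⟩ := abs_le.1 h.abs_right_le
  have two_le_cast : (2 : ℝ) ≤ B := by exact_mod_cast two_le
  have position : 1 ≤ I ∨ I ≤ -(B + 1) ∨ 1 - B ≤ I ∧ I ≤ -1 := by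
    obtain ⟨i, rfl⟩ := hI
    obtain ⟨j, rfl⟩ := hB
    lia
  rcases position with one_le | le_neg | ⟨le_I, I_le⟩
  · have one_le_cast : (1 : ℝ) ≤ I := by exact_mod_cast one_le
    refine (h.at_one.trans ?_).trans (le_abs_self _)
    rw [mul_comm]
    exact mul_le_mul (by linarith) (by linarith) (by linarith) (by linarith)
  · have le_neg_cast : (I : ℝ) ≤ -(B + 1) := by exact_mod_cast le_neg
    refine (h.at_neg_one_sub.trans ?_).trans (le_abs_self _)
    rw [← neg_mul_neg (B + W + I : ℝ)]
    exact mul_le_mul (by linarith) (by linarith) (by linarith) (by linarith)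
  · exact (h.le_neg_mul_of_mem_Icc two_le_cast
      ⟨by exact_mod_cast le_I, by exact_mod_cast I_le⟩).trans (neg_le_abs _)

/-- Abstract form of the real quantities in one cell: `x = αbar_k`, `z = α_{k+1}`, `U = ± u_k`,
`V = ± v_{k+1}`, with the signs `ε = ε_{k+1}` and `η = ε_{k+2}`. -/
structure CellData (b β Q H ω ε η x z U V : ℝ) : Prop where
  ε_eq : ε = 1 ∨ ε = -1
  η_eq : η = 1 ∨ η = -1
  x_nonneg : 0 ≤ x
  x_le : x ≤ b
  z_nonneg : 0 ≤ z
  z_le : z ≤ b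
  abs_V_le : |V| ≤ z
  add_abs_V_le : z + |V| ≤ Q
  sub_le_abs_V : z - β ≤ |V|
  abs_U_le : |U| ≤ x * (1 + H)
  add_abs_U_le : x + |U| ≤ ω

namespace CellData

variable {b a₀ a₁ β Q H ω G ε η x z U V a : ℝ}

lemma abs_left_le (d : CellData b β Q H ω ε η x z U V) : |ε * (x - U)| ≤ ω := by
  rw [abs_pm_one_mul d.ε_eq]
  exact (abs_sub _ _).trans (by rw [abs_of_nonneg d.x_nonneg]; exact d.add_abs_U_le)

lemma abs_right_le (d : CellData b β Q H ω ε η x z U V) : |η * z + V| ≤ Q := by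
  refine (abs_add_le _ _).trans ?_
  rw [abs_pm_one_mul d.η_eq, abs_of_nonneg d.z_nonneg]
  exact d.add_abs_V_le

lemma neg_le_η_mul (d : CellData b β Q H ω ε η x z U V) : -b ≤ η * z :=
  (pm_one_mul_mem_Icc d.η_eq ((abs_of_nonneg d.z_nonneg).trans_le d.z_le)).1

lemma add_le (d : CellData b β Q H ω ε η x z U V) : η * z + ε * x ≤ 2 * b := by
  linarith [(pm_one_mul_mem_Icc d.η_eq ((abs_of_nonneg d.z_nonneg).trans_le d.z_le)).2,
    (pm_one_mul_mem_Icc d.ε_eq ((abs_of_nonneg d.x_nonneg).trans_le d.x_le)).2]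

end CellData

section Vertices

variable {b a₀ a₁ β Q H ω G ε η x z U V a : ℝ}

lemma pm_one_add_one_mul_nonneg (hε : ε = 1 ∨ ε = -1) (hx : 0 ≤ x) : 0 ≤ (1 + ε) * x :=
  mul_nonneg (by rcases hε with rfl | rfl <;> norm_num) hx

lemma mul_sub_le_mul_sub_sub {p q P n m : ℝ} (hp : p ≤ P) (hq : q ≤ Q) (hm : m ≤ 1 / 2)
    (hn : n ≤ 1 / 2) (ha : a₀ ≤ a) (four_le : 4 ≤ a₀) (G_pos : 0 < G) (hGQ : G ≤ 1 - Q)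
    (hGP : G ≤ 1 - P) (h : G * (a₀ - n * Q - m * P) ≤ (1 - Q) * (a₀ - 1 - P)) :
    G * (a - n * q - m * p) ≤ (1 - q) * (a - 1 - p) := by
  have a_slope : G * (a - a₀) ≤ (1 - Q) * (a - a₀) :=
    mul_le_mul_of_nonneg_right hGQ (by linarith)
  have P_slope : G * (P - p) ≤ (1 - Q) * (P - p) :=
    mul_le_mul_of_nonneg_right hGQ (by linarith)
  have Q_slope : 0 ≤ (Q - q) * (a - 1 - p - G) := mul_nonneg (by linarith) (by linarith)
  have m_le : G * (m * (P - p)) ≤ G * (P - p) :=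
    mul_le_mul_of_nonneg_left (mul_le_of_le_one_left (by linarith) (by linarith)) G_pos.le
  have n_le : G * (n * (Q - q)) ≤ G * (Q - q) :=
    mul_le_mul_of_nonneg_left (mul_le_of_le_one_left (by linarith) (by linarith)) G_pos.le
  linarith

lemma mul_le_vertex_of_add_ge {p q P n m W W' : ℝ} (hε : ε = 1 ∨ ε = -1) (hη : η = 1 ∨ η = -1)
    (hx : 0 ≤ x) (hz : 0 ≤ z) (hW : -p + (1 + ε) * x ≤ W) (hW' : -q + (1 + η) * z ≤ W')
    (hp : p ≤ P) (hq : q ≤ Q) (hmp : m * p ≤ x) (hnq : n * q ≤ z) (hm : m ≤ 1 / 2)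
    (hn : n ≤ 1 / 2) (ha : a₀ ≤ a) (four_le : 4 ≤ a₀) (G_pos : 0 < G) (hGQ : G ≤ 1 - Q)
    (hGP : G ≤ 1 - P) (h : G * (a₀ - n * Q - m * P) ≤ (1 - Q) * (a₀ - 1 - P)) :
    G * (a + η * z + ε * x) ≤ (1 + W') * (a - 1 + W) := by
  have ε_nonneg := pm_one_add_one_mul_nonneg hε hx
  have η_nonneg := pm_one_add_one_mul_nonneg hη hz
  have base := mul_sub_le_mul_sub_sub hp hq hm hn ha four_le G_pos hGQ hGP h
  have ε_slope := mul_nonneg ε_nonneg (by linarith : 0 ≤ 1 - q - G)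
  have η_slope := mul_nonneg η_nonneg (by linarith : 0 ≤ a - 1 - p - G)
  have mixed := mul_nonneg ε_nonneg η_nonneg
  calc G * (a + η * z + ε * x)
      = G * (a - z - x) + G * ((1 + ε) * x) + G * ((1 + η) * z) := by ring
    _ ≤ G * (a - n * q - m * p) + G * ((1 + ε) * x) + G * ((1 + η) * z) := by
        gcongr
    _ ≤ (1 - q + (1 + η) * z) * (a - 1 - p + (1 + ε) * x) := by linarith
    _ ≤ (1 + W') * (a - 1 + W) :=
        mul_le_mul (by linarith) (by linarith) (by linarith) (by linarith)

lemma mul_add_le_vertex_of_far {s m B δ f g : ℝ} (G_pos : 0 < G) (hδ : δ ≤ 2 * b) (hs : G ≤ 1 - s)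
    (ha : m ≤ a) (hB : B ≤ m) (h : G * (m + 2 * b) ≤ (1 - s) * (m - B)) (hf : 1 - s ≤ f)
    (hg : a - B ≤ g) : G * (a + δ) ≤ f * g := by
  have a_slope : 0 ≤ (1 - s - G) * (a - m) := mul_nonneg (by linarith) (by linarith)
  calc G * (a + δ) ≤ G * (a + 2 * b) := by gcongr
    _ ≤ (1 - s) * (a - B) := by linarith
    _ ≤ f * g := mul_le_mul hf hg (by linarith) (by linarith)

lemma CellData.vertexBound_even (P : StarConstants b a₀ a₁ β Q H ω G)
    (d : CellData b β Q H ω ε η x z U V) (ha : a₀ ≤ a) :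
    VertexBound a (ε * (x - U)) (η * z + V) (G * (a + η * z + ε * x)) := by
  obtain ⟨le_W, W_le⟩ := abs_le.1 d.abs_left_le
  obtain ⟨le_W', W'_le⟩ := abs_le.1 d.abs_right_le
  have four_le := P.four_le
  have G_pos := P.G_pos
  have le_half : 1 / (2 + H) ≤ 1 / 2 :=
    one_div_le_one_div_of_le two_pos (by linarith [P.H_nonneg])
  have mul_le_x : 1 / (2 + H) * (x + |U|) ≤ x := by
    rw [div_mul_eq_mul_div, div_le_iff₀ (by linarith [P.H_nonneg])]
    linarith [d.abs_U_le]
  have mul_le_z : 1 / 2 * (z + |V|) ≤ z := by linarith [d.abs_V_le]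
  have left_ge : -(x + |U|) + (1 + ε) * x ≤ ε * (x - U) := by
    linarith [(pm_one_mul_mem_Icc d.ε_eq le_rfl : ε * U ∈ Set.Icc (-|U|) |U|).2]
  have right_ge : -(z + |V|) + (1 + η) * z ≤ η * z + V := by
    linarith [neg_abs_le V]
  refine ⟨abs_le.2 ⟨?_, ?_⟩, abs_le.2 ⟨?_, ?_⟩, ?_, ?_, ?_, ?_⟩
  iterate 2 linarith [P.G_le_one_sub_ω]
  iterate 2 linarith [P.G_le_one_sub_Q]
  · exact mul_le_vertex_of_add_ge d.ε_eq d.η_eq d.x_nonneg d.z_nonneg left_ge right_ge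
      d.add_abs_U_le d.add_abs_V_le mul_le_x mul_le_z le_half le_rfl ha four_le G_pos
      P.G_le_one_sub_Q P.G_le_one_sub_ω P.even_right
  · rw [add_assoc]
    exact mul_add_le_vertex_of_far (B := ω - 1) G_pos d.add_le P.G_le_one_sub_Q ha
      (by linarith [P.G_le_one_sub_ω]) (by linarith [P.even_right_far]) (by linarith) (by linarith)
  · rw [add_right_comm]
    exact mul_le_vertex_of_add_ge d.η_eq d.ε_eq d.z_nonneg d.x_nonneg right_ge left_ge
      d.add_abs_V_le d.add_abs_U_le mul_le_z mul_le_x le_rfl le_half ha four_le G_pos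
      P.G_le_one_sub_ω P.G_le_one_sub_Q (by linarith [P.even_left])
  · rw [add_assoc]
    exact mul_add_le_vertex_of_far (B := Q - 1) G_pos d.add_le P.G_le_one_sub_ω ha
      (by linarith [P.G_le_one_sub_Q]) (by linarith [P.even_left_far]) (by linarith) (by linarith)

lemma CellData.vertexBound_odd_add (P : StarConstants b a₀ a₁ β Q H ω G)
    (d : CellData b β Q H ω ε η x z U V) (ha : a₁ ≤ a) :
    VertexBound (a + 1) (ε * (x - U)) (η * z + V) (G * (a + η * z + ε * x)) := by
  obtain ⟨le_W, W_le⟩ := abs_le.1 d.abs_left_le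
  obtain ⟨le_W', W'_le⟩ := abs_le.1 d.abs_right_le
  have five_le := P.five_le
  have G_pos := P.G_pos
  have left_far {f g : ℝ} (hf : 1 - ω ≤ f) (hg : a - Q ≤ g) :
      G * (a + (η * z + ε * x)) ≤ f * g :=
    mul_add_le_vertex_of_far G_pos d.add_le P.G_le_one_sub_ω ha
      (by linarith [P.G_le_one_sub_Q]) P.odd_left hf hg
  have right_far {f g : ℝ} (hf : 1 - Q ≤ f) (hg : a - ω ≤ g) :
      G * (a + (η * z + ε * x)) ≤ f * g :=
    mul_add_le_vertex_of_far G_pos d.add_le P.G_le_one_sub_Q ha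
      (by linarith [P.G_le_one_sub_ω]) P.odd_right hf hg
  rw [add_assoc]
  refine ⟨abs_le.2 ⟨?_, ?_⟩, abs_le.2 ⟨?_, ?_⟩, right_far ?_ ?_, right_far ?_ ?_, left_far ?_ ?_,
    left_far ?_ ?_⟩ <;> linarith [P.G_le_one_sub_ω, P.G_le_one_sub_Q]

lemma CellData.mul_le_right_vertex (P : StarConstants b a₀ a₁ β Q H ω G)
    (d : CellData b β Q H ω ε η x z U V) (ha : a₁ ≤ a) (hV : 0 ≤ V)
    (neg_le : -(x * (1 + H)) ≤ ε * (x - U)) (neg_le_of_pos : ε = 1 → -(x * H) ≤ ε * (x - U)) :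
    G * (a + η * z + ε * x) ≤ (1 + (η * z + V)) * (a - 2 + ε * (x - U)) := by
  set W := ε * (x - U)
  set W' := η * z + V
  have G_pos := P.G_pos
  have β_pos : 0 < β := (mul_pos P.b_pos P.b_pos).trans_le P.b_mul_b_le
  have G_le : G ≤ 1 - β := by
    have := mul_nonneg β_pos.le P.b_pos.le
    linarith [P.β_mul_le, P.G_le_one_sub_Q]
  have neg_β_le : -β ≤ W' := by
    have := d.sub_le_abs_V
    rw [abs_of_nonneg hV] at this
    linarith [(pm_one_mul_mem_Icc d.η_eq (abs_of_nonneg d.z_nonneg).le).1]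
  have H_mul : 0 ≤ (1 - β) * H := mul_nonneg (by linarith) P.H_nonneg
  have to_right := mul_le_mul_of_nonneg_left (by linarith : η * z ≤ W') G_pos.le
  have right_slope : 0 ≤ (W' + β) * (a - 2 + W - G) :=
    mul_nonneg (by linarith)
      (by linarith [(abs_le.1 d.abs_left_le).1, P.five_le, P.G_le_one_sub_ω])
  have a_slope : 0 ≤ (1 - β - G) * (a - a₁) := mul_nonneg (by linarith) (by linarith)
  rcases d.ε_eq with hε | hε
  · have left_slope := mul_le_mul_of_nonneg_left (neg_le_of_pos hε) (by linarith : 0 ≤ 1 - β)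
    have x_slope : 0 ≤ (b - x) * ((1 - β) * H + G) :=
      mul_nonneg (by linarith [d.x_le]) (by linarith)
    rw [hε]
    linarith [P.odd_right_pos]
  · have left_slope := mul_le_mul_of_nonneg_left neg_le (by linarith : 0 ≤ 1 - β)
    have x_slope : 0 ≤ (b - x) * ((1 - β) * (1 + H) - G) :=
      mul_nonneg (by linarith [d.x_le]) (by linarith)
    rw [hε]
    linarith [P.odd_right_neg]

lemma CellData.mul_le_left_vertex_mul (P : StarConstants b a₀ a₁ β Q H ω G)
    (d : CellData b β Q H ω ε η x z U V)
    (hleft : -(x * H) ≤ ε * (x - U) ∨ ε = -1 ∧ x ≤ β ∧ -(x * (1 + H)) ≤ ε * (x - U)) :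
    G * (a₁ - b + ε * x) ≤ (1 + ε * (x - U)) * (a₁ - 2 - b) := by
  have b_le := P.b_le
  have five_le := P.five_le
  rcases hleft with neg_le | ⟨hε, x_le, neg_le⟩
  · calc G * (a₁ - b + ε * x) ≤ G * a₁ := by
          refine mul_le_mul_of_nonneg_left ?_ P.G_pos.le
          linarith [(pm_one_mul_mem_Icc d.ε_eq ((abs_of_nonneg d.x_nonneg).trans_le d.x_le)).2]
      _ ≤ (1 - b * H) * (a₁ - 2 - b) := P.odd_left_small
      _ ≤ (1 + ε * (x - U)) * (a₁ - 2 - b) :=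
          mul_le_mul_of_nonneg_right
            (by linarith [mul_le_mul_of_nonneg_right d.x_le P.H_nonneg]) (by linarith)
  · have left_slope : (1 - x * (1 + H)) * (a₁ - 2 - b) ≤ (1 + ε * (x - U)) * (a₁ - 2 - b) :=
      mul_le_mul_of_nonneg_right (by linarith) (by linarith)
    have G_le : G ≤ (1 + H) * (a₁ - 2 - b) := by
      linarith [mul_nonneg P.H_nonneg (by linarith : 0 ≤ a₁ - 2 - b), P.G_le_one_sub_ω,
        P.H_le_ω, P.H_nonneg]
    have x_slope := mul_nonneg (sub_nonneg.2 x_le) (sub_nonneg.2 G_le)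
    rw [hε] at left_slope ⊢
    linarith [P.odd_left_neg]

lemma CellData.mul_le_left_vertex (P : StarConstants b a₀ a₁ β Q H ω G)
    (d : CellData b β Q H ω ε η x z U V) (ha : a₁ ≤ a) (hV : 0 ≤ V)
    (hleft : -(x * H) ≤ ε * (x - U) ∨ ε = -1 ∧ x ≤ β ∧ -(x * (1 + H)) ≤ ε * (x - U)) :
    G * (a + η * z + ε * x) ≤ (1 + ε * (x - U)) * (a - 2 + (η * z + V)) := by
  have base := d.mul_le_left_vertex_mul P hleft
  have G_le : G ≤ 1 + ε * (x - U) := by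
    linarith [(abs_le.1 d.abs_left_le).1, P.G_le_one_sub_ω]
  have η_slope := mul_nonneg (sub_nonneg.2 G_le) (by linarith [d.neg_le_η_mul] : 0 ≤ η * z + b)
  have a_slope := mul_nonneg (sub_nonneg.2 G_le) (sub_nonneg.2 ha)
  have V_slope := mul_nonneg (P.G_pos.le.trans G_le) hV
  linarith

lemma CellData.vertexBound_odd_sub (P : StarConstants b a₀ a₁ β Q H ω G)
    (d : CellData b β Q H ω ε η x z U V) (ha : a₁ ≤ a) (hV : 0 ≤ V)
    (hleft : |ε * (x - U)| ≤ x * H ∨ |U| ≤ x * H ∧ x ≤ β) :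
    VertexBound (a - 1) (ε * (x - U)) (η * z + V) (G * (a + η * z + ε * x)) := by
  obtain ⟨le_W, W_le⟩ := abs_le.1 d.abs_left_le
  obtain ⟨le_W', W'_le⟩ := abs_le.1 d.abs_right_le
  have five_le := P.five_le
  have x_mul_le := mul_le_mul_of_nonneg_right d.x_le (by linarith [P.H_nonneg] : 0 ≤ 1 + H)
  have abs_left_le : |ε * (x - U)| ≤ x * (1 + H) := by
    rcases hleft with le | ⟨le, -⟩
    · linarith [d.x_nonneg]
    · rw [abs_pm_one_mul d.ε_eq]
      exact (abs_sub _ _).trans (by rw [abs_of_nonneg d.x_nonneg]; linarith)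
  obtain ⟨neg_le, left_le⟩ := abs_le.1 abs_left_le
  have neg_le_of_pos (hε : ε = 1) : -(x * H) ≤ ε * (x - U) := by
    rcases hleft with le | ⟨le, -⟩
    · exact (abs_le.1 le).1
    · rw [hε]
      linarith [le_abs_self U, d.x_nonneg]
  have right_vertex := d.mul_le_right_vertex P ha hV neg_le neg_le_of_pos
  have left_vertex := d.mul_le_left_vertex P ha hV <| by
    rcases hleft with le | ⟨-, x_le⟩
    · exact .inl (abs_le.1 le).1
    · exact d.ε_eq.imp neg_le_of_pos fun hε => ⟨hε, x_le, neg_le⟩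
  refine ⟨abs_le.2 ⟨?_, ?_⟩, abs_le.2 ⟨?_, ?_⟩, by linarith, ?_, by linarith, ?_⟩
  iterate 2 linarith [P.G_le_one_sub_ω, P.G_pos]
  iterate 2 linarith [P.G_le_one_sub_Q, P.G_pos]
  · rw [add_assoc]
    exact mul_add_le_vertex_of_far P.G_pos d.add_le P.G_le_one_sub_Q ha
      (by linarith [P.b_mul_le_ω, P.G_le_one_sub_ω, P.G_pos]) P.odd_right_far
      (by linarith) (by linarith)
  · rw [add_assoc]
    exact mul_add_le_vertex_of_far (B := b) P.G_pos d.add_le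
      (by linarith [P.b_mul_le_ω, P.G_le_one_sub_ω] : G ≤ 1 - b * (1 + H)) ha
      (by linarith [P.b_le]) P.odd_left_far (by linarith)
      (by linarith [d.neg_le_η_mul])

end Vertices

namespace NearestIntegerCF

variable {c : NearestIntegerCF} {γ R a₀ a₁ β Q H ω G : ℝ} {t : ℕ → ℤ} {u v : ℕ → ℝ} {k₀ k : ℕ}

lemma abs_leftForm_mul_rightForm {s : ℤ} (hs : s = 1 ∨ s = -1) (I : ℤ) :
    |c.leftForm t u k (I, s) * c.rightForm v k (I, s)| =
      |((c.a (k + 1) + s * t (k + 1) : ℤ) + c.ε (k + 1) * (c.αbar k - s * u k) + (s * I : ℤ)) *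
        ((s * I : ℤ) - (c.ε (k + 2) * c.α (k + 1) + s * v (k + 1)))| := by
  rcases hs with rfl | rfl <;>
  · congr 1
    simp only [leftForm, rightForm]
    push_cast
    ring

lemma exists_isInitialSum (c : NearestIntegerCF) (t : ℕ → ℤ) (k₀ : ℕ) :
    ∃ u : ℕ → ℝ, u k₀ = 0 ∧ c.IsInitialSum t u k₀ := by
  let sum (n : ℕ) : ℝ := n.rec 0 fun n y =>
    c.αbar (k₀ + n + 1) * (t (k₀ + n + 1) - c.ε (k₀ + n + 1) * y)
  refine ⟨fun k => sum (k - k₀), by simp [sum], fun k hk => ?_⟩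
  obtain ⟨n, rfl⟩ := Nat.exists_eq_add_of_le hk
  simp only [add_assoc, add_tsub_cancel_left]
  rfl

section Cells

variable (P : StarConstants (tailBound R) a₀ a₁ β Q H ω G) (hL : c.LargeQuotients R k₀)
  (hp : c.ParityBounds a₀ a₁ k₀) (hs : c.IsStarExpansion t v) (hk : k₀ ≤ k)
  (hu : c.InitialSumBounds β H ω t u k)

include P hL hp hs hk hu

lemma cellData {s : ℝ} (h : s = 1 ∨ s = -1) :
    CellData (tailBound R) β Q H ω (c.ε (k + 1)) (c.ε (k + 2)) (c.αbar k) (c.α (k + 1)) (s * u k)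
      (s * v (k + 1)) := by
  obtain ⟨add_abs_le, sub_le_abs⟩ := tailSumBounds P hL hp hs (k := k + 1) (by lia)
  constructor
  all_goals try rw [abs_pm_one_mul h]
  exacts [c.ε_cast_eq _, c.ε_cast_eq _, c.αbar_nonneg k, hL.αbar_le k hk, (c.α_pos _).le,
    hL.α_le _ (by lia), hs.abs_le _, add_abs_le, sub_le_abs, hu.abs_le_mul, hu.add_abs_le]

omit P hL hp hk in
lemma left_le_or_abs_le (pos : 1 ≤ k) (odd : Odd (c.a (k + 1))) :
    |c.ε (k + 1) * (c.αbar k - -t (k + 1) * u k)| ≤ c.αbar k * H ∨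
      |-t (k + 1) * u k| ≤ c.αbar k * H ∧ c.αbar k ≤ β := by
  rcases Int.even_or_odd (c.a k) with even_prev | odd_prev
  · right
    rw [neg_mul, abs_neg, abs_pm_one_mul (hs.cast_eq_pm_one odd)]
    exact ⟨hu.abs_le_of_even even_prev, hu.αbar_le_of_even even_prev⟩
  · left
    obtain ⟨j, rfl⟩ := Nat.exists_eq_add_of_le' pos
    have t_eq : -(t (j + 1 + 1) : ℝ) = t (j + 1) := by
      exact_mod_cast neg_eq_iff_eq_neg.2 (hs.eq_neg j odd_prev odd)
    rw [abs_pm_one_mul (c.ε_cast_eq _), t_eq,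
      mul_eq_abs_of_nonneg (hs.cast_eq_pm_one odd_prev) (hu.mul_nonneg_of_odd odd_prev), abs_le]
    constructor <;> linarith [hu.le_abs_of_odd odd_prev, hu.abs_le_mul]

lemma cellBound_of_even (even : Even (c.a (k + 1))) : c.CellBound t u v G k := by
  intro I J hI hJ
  have a_ge := hp.le_of_even (k + 1) (by lia) even
  have bound := (cellData P hL hp hs hk hu (s := J) (by exact_mod_cast hJ)).vertexBound_even P a_ge
  rw [abs_leftForm_mul_rightForm hJ, hs.eq_zero k even, mul_zero, add_zero]
  exact bound.le_abs_of_odd even (c.two_le_a k) ((odd_of_eq_pm_one hJ).mul hI)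

lemma cellBound_of_odd (pos : 1 ≤ k) (odd : Odd (c.a (k + 1))) : c.CellBound t u v G k := by
  intro I J hI hJ
  have a_ge := hp.le_of_odd (k + 1) (by lia) odd
  have five_le : (5 : ℝ) ≤ c.a (k + 1) := P.five_le.trans a_ge
  replace five_le : 5 ≤ c.a (k + 1) := by exact_mod_cast five_le
  have data := cellData P hL hp hs hk hu (s := J) (by exact_mod_cast hJ)
  have hJI : Odd (J * I) := (odd_of_eq_pm_one hJ).mul hI
  have t_eq := hs.eq_pm_one k odd
  rw [abs_leftForm_mul_rightForm hJ]
  have J_eq : J = t (k + 1) ∨ J = -t (k + 1) := by lia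
  rcases J_eq with rfl | rfl
  · have bound := data.vertexBound_odd_add P a_ge
    rw [Int.isUnit_mul_self (Int.isUnit_iff.2 t_eq)]
    exact VertexBound.le_abs_of_odd (by exact_mod_cast bound) odd.add_one (by lia) hJI
  · have nonneg : 0 ≤ ((-t (k + 1) : ℤ) : ℝ) * v (k + 1) := by
      push_cast
      linarith [hs.mul_nonpos k odd]
    have bound := data.vertexBound_odd_sub P a_ge nonneg <| by
      exact_mod_cast left_le_or_abs_le hs hu pos odd
    rw [neg_mul (t (k + 1)), Int.isUnit_mul_self (Int.isUnit_iff.2 t_eq), ← sub_eq_add_neg]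
    exact VertexBound.le_abs_of_odd (by exact_mod_cast bound) (odd.sub_odd odd_one) (by lia) hJI

end Cells

lemma IsStarExpansion.abs_coeff_le_one (hs : c.IsStarExpansion t v) (k : ℕ) : |t (k + 1)| ≤ 1 :=
  (Int.even_or_odd (c.a (k + 1))).elim (fun even => by simp [hs.eq_zero k even])
    fun odd => (Int.isUnit_iff_abs_eq.1 (Int.isUnit_iff.2 (hs.eq_pm_one k odd))).le

theorem IsStarExpansion.div_four_le_Mval (hs : c.IsStarExpansion t v)
    (P : StarConstants (tailBound R) a₀ a₁ β Q H ω G) (hL : c.LargeQuotients R k₀)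
    (hp : c.ParityBounds a₀ a₁ k₀) (hexp : c.IsGridExpansion γ t v) :
    G / 4 ≤ Mval (c.α 0) γ := by
  obtain ⟨u, u_eq, hu⟩ := c.exists_isInitialSum t k₀
  have bounds {k : ℕ} (hk : k₀ + 1 ≤ k) : c.InitialSumBounds β H ω t u k :=
    initialSumBounds P hL hp hs hu u_eq hk
  have near : c.IsNearOrigin t u v (k₀ + 1) :=
    ⟨hs.abs_coeff_le_one,
      fun k hk => ((bounds hk).abs_le P.H_nonneg P.ω_mul_le).trans P.H_le, hs.abs_le⟩
  refine near.div_four_le_Mval (hL.mono (by lia)) hexp (fun k hk => hu k (by lia))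
    (by linarith [P.G_le_one_sub_ω, P.H_le_ω, P.H_nonneg]) fun k hk => ?_
  rcases Int.even_or_odd (c.a (k + 1)) with even | odd
  · exact cellBound_of_even P hL hp hs (by lia) (bounds hk) even
  · exact cellBound_of_odd P hL hp hs (by lia) (bounds hk) (by lia) odd

end NearestIntegerCF

lemma exists_starConstants_of_four_le {R : ℝ} (hR : 4 ≤ R) :
    ∃ β Q H ω : ℝ, StarConstants (tailBound R) R (R + 1) β Q H ω (1 - 3 / R + 9 / (4 * R ^ 2)) := by
  obtain ⟨s, hs, rfl⟩ := exists_nonneg_add_of_le hR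
  have b_eq : tailBound (4 + s) = (3 + s) / (s ^ 2 + 7 * s + 11) := by
    rw [eq_div_iff (by positivity)]
    linear_combination tailBound_mul hR
  have G_eq : 1 - 3 / (4 + s) + 9 / (4 * (4 + s) ^ 2) = (5 + 2 * s) ^ 2 / (4 * (4 + s) ^ 2) := by
    field_simp
    ring
  rw [G_eq, b_eq]
  refine ⟨(3 + s) / (s ^ 2 + 7 * s + 11),
    2 * (s ^ 2 + 7 * s + 11) / (s ^ 3 + 12 * s ^ 2 + 45 * s + 52), 1 / (4 + s),
    (2 * s + 9) / ((4 + s) * (5 + s)), ?_⟩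
  constructor
  all_goals first
    | positivity
    | linarith
    | (field_simp; rw [← sub_nonneg]; ring_nf; positivity)

lemma tailBound_five_add {s : ℝ} (hs : 0 ≤ s) :
    tailBound (5 + s) = (4 + s) / (s ^ 2 + 9 * s + 19) := by
  rw [eq_div_iff (by positivity)]
  linear_combination tailBound_mul (by linarith : 4 ≤ 5 + s)

lemma exists_starConstants_of_five_le {R : ℝ} (hR : 5 ≤ R) :
    ∃ β Q H ω : ℝ, StarConstants (tailBound R) (R + 1) R β Q H ω
      (1 - 3 / R + 2 / R ^ 2 - 3 / R ^ 3 + 5 / R ^ 4) := by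
  obtain ⟨s, hs, rfl⟩ := exists_nonneg_add_of_le hR
  have G_eq : 1 - 3 / (5 + s) + 2 / (5 + s) ^ 2 - 3 / (5 + s) ^ 3 + 5 / (5 + s) ^ 4 =
      (s ^ 4 + 17 * s ^ 3 + 107 * s ^ 2 + 292 * s + 290) / (5 + s) ^ 4 := by
    field_simp
    ring
  rw [G_eq, tailBound_five_add hs]
  refine ⟨(s ^ 2 + 9 * s + 19) / (s ^ 3 + 15 * s ^ 2 + 72 * s + 110),
    2 * (4 + s) / (s ^ 2 + 9 * s + 19), (6 + s) / (5 + s) ^ 2,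
    (2 * s ^ 2 + 21 * s + 54) / (5 + s) ^ 3, ?_⟩
  constructor
  all_goals first
    | positivity
    | linarith
    | (field_simp; rw [← sub_nonneg]; ring_nf; positivity)

/-! ### Digits with a large deviation -/

namespace NearestIntegerCF

section Points

variable {c : NearestIntegerCF} {γ m : ℝ} {t : ℕ → ℤ} {u v : ℕ → ℝ} {k₀ : ℕ}

lemma tendsto_D (c : NearestIntegerCF) : Tendsto c.D atTop (nhds 0) := by
  refine squeeze_zero (fun k => (c.D_pos k).le) (fun k => ?_)
    (tendsto_pow_atTop_nhds_zero_of_lt_one (by norm_num) (by norm_num : (1 / 2 : ℝ) < 1))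
  simpa [D] using c.D_add_le 0 k

lemma D_succ_mul_abs_rightForm_le {k : ℕ} {I J : ℤ} (hJ : J = 1 ∨ J = -1)
    (hI : |(I : ℝ)| ≤ c.a (k + 1) + 3) (hv : |v (k + 1)| ≤ 3 / 2) :
    c.D (k + 1) * |c.rightForm v k (I, J)| ≤ 5 * c.D k := by
  have abs_J : |(J : ℝ)| = 1 := by rcases hJ with rfl | rfl <;> norm_num
  have two_le : (2 : ℝ) ≤ c.a (k + 1) := by exact_mod_cast c.two_le_a k
  have α_lt := c.α_lt_half (k + 1)
  have sign_mem := pm_one_mul_mem_Icc (c.ε_cast_eq (k + 2)) (abs_of_pos (c.α_pos (k + 1))).le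
  have right_le : |c.rightForm v k (I, J)| ≤ c.a (k + 1) + 5 :=
    calc |c.rightForm v k (I, J)|
        ≤ |(I : ℝ)| + |(J : ℝ) * c.ε (k + 2) * c.α (k + 1)| + |v (k + 1)| :=
          (abs_sub _ _).trans (add_le_add_left (abs_sub _ _) _)
      _ = |(I : ℝ)| + c.α (k + 1) + |v (k + 1)| := by
          rw [mul_assoc, abs_mul, abs_J, one_mul, abs_pm_one_mul (c.ε_cast_eq _),
            abs_of_pos (c.α_pos _)]
      _ ≤ c.a (k + 1) + 5 := by linarith
  rw [c.D_eq_D_succ_mul k, mul_left_comm]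
  exact mul_le_mul_of_nonneg_left (by linarith [sign_mem.1]) (c.D_pos _).le

lemma IsGridExpansion.eventually_mul_gridDet_le (hexp : c.IsGridExpansion γ t v)
    (hu : c.IsInitialSum t u k₀) (hv : ∀ k, k₀ ≤ k → |v (k + 1)| ≤ 3 / 2)
    (hγ : ¬∃ p q : ℤ, γ = (p : ℝ) + (q : ℝ) * c.α 0) (hm : m < Mval (c.α 0) γ) :
    ∀ᶠ k in atTop, ∀ I J : ℤ, Odd I → (J = 1 ∨ J = -1) → |(I : ℝ)| ≤ c.a (k + 1) + 3 →
      4 * m * c.gridDet k ≤ |c.leftForm t u k (I, J) * c.rightForm v k (I, J)| := by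
  obtain ⟨κ, hκ⟩ := hexp.exists_isCentre hu
  obtain ⟨ρ, ρ_pos, hρ⟩ := productBound_of_lt_Mval κ hγ hm
  have D_small := c.tendsto_D.eventually_lt_const (by positivity : 0 < ρ / 5)
  filter_upwards [eventually_ge_atTop k₀, D_small]
    with k hk D_lt I J hI hJ abs_I
  obtain ⟨N, p, hNp⟩ := hexp.exists_gridCoord_eq (k + 1) hI (odd_of_eq_pm_one hJ)
  rw [← hNp, ← hκ.mul_gridDet_eq N p hk]
  refine mul_le_mul_of_nonneg_right (hρ N p ?_) (c.gridDet_pos k).le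
  rw [hκ.right_eq, hNp, abs_mul, abs_of_pos (c.D_pos _)]
  exact (D_succ_mul_abs_rightForm_le hJ abs_I (hv k hk)).trans_lt (by linarith)

end Points

section DigitSums

variable {c : NearestIntegerCF} {γ R : ℝ} {d : ℕ → ℤ} {g P : ℕ → ℝ} {k k₀ : ℕ}

lemma IsDigitExpansion.add_lt (h : c.IsDigitExpansion γ d g) (hk : 1 ≤ k) :
    d (k + 1) + g (k + 1) < c.a (k + 1) + c.ε (k + 2) * c.α (k + 1) := by
  refine lt_of_mul_lt_mul_left ?_ (c.α_pos k).le
  rw [← h.eq_mul, c.α_mul]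
  exact (h.mem_Ico k hk).2

lemma IsDigitExpansion.digit_le_sub (h : c.IsDigitExpansion γ d g) (hk : 1 ≤ k) {m : ℤ}
    (hm : m - 1 + c.ε (k + 2) * c.α (k + 1) ≤ g (k + 1)) : d (k + 1) ≤ c.a (k + 1) - m := by
  have : (d (k + 1) : ℝ) < c.a (k + 1) - m + 1 := by linarith [h.add_lt hk]
  have : d (k + 1) < c.a (k + 1) - m + 1 := by exact_mod_cast this
  lia

lemma IsDigitExpansion.one_sub_le (h : c.IsDigitExpansion γ d g) {m : ℤ}
    (hm : m - 1 + c.ε (k + 2) * c.α (k + 1) ≤ g (k + 1)) (hd : d (k + 1) = c.a (k + 1) - m) :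
    1 - c.α k ≤ g k := by
  have hd_cast : (d (k + 1) : ℝ) = c.a (k + 1) - m := by exact_mod_cast hd
  calc 1 - c.α k = c.α k * (c.a (k + 1) + c.ε (k + 2) * c.α (k + 1) - 1) := by
        linear_combination -c.α_mul k
    _ ≤ c.α k * (d (k + 1) + g (k + 1)) :=
        mul_le_mul_of_nonneg_left (by linarith) (c.α_pos k).le
    _ = g k := (h.eq_mul k).symm

lemma IsDigitExpansion.neg_one_add_le (h : c.IsDigitExpansion γ d g) (hk : 1 ≤ k) :
    -1 + c.ε (k + 1) * c.α k ≤ g k := by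
  linarith [(h.mem_Ico k hk).1, c.α_lt_half k,
    (pm_one_mul_mem_Icc (c.ε_cast_eq (k + 1)) (abs_of_pos (c.α_pos k)).le).2]

lemma IsDigitExpansion.digit_le (h : c.IsDigitExpansion γ d g) (hk : 1 ≤ k) :
    d (k + 1) ≤ c.a (k + 1) := by
  simpa using h.digit_le_sub hk (m := 0) (by simpa using h.neg_one_add_le (k := k + 1) (by lia))

/-- The bounds satisfied by the initial digit sums `P k = Σ_{i ≤ k} d_i δ_{i-1} q_{i-1} /
(δ_{k-1} q_k)`, which depend on whether the next digit may be extremal. -/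
structure DigitSumBounds (c : NearestIntegerCF) (b : ℝ) (d : ℕ → ℤ) (g P : ℕ → ℝ) (k : ℕ) :
    Prop where
  le_one_sub : c.ε (k + 1) = -1 → 1 - c.α k ≤ g k → P k ≤ 1 - c.αbar k
  neg_le : -(c.αbar k * (1 + b)) ≤ P k
  le_one_add : P k ≤ 1 + c.αbar k
  le_one : 1 ≤ d (k + 1) → P k ≤ 1

lemma DigitSumBounds.neg_one_sub_le (hb : c.DigitSumBounds (tailBound R) d g P k)
    (hL : c.LargeQuotients R k₀) : -1 - c.αbar k ≤ P k := by
  have : c.αbar k * tailBound R ≤ 1 :=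
    mul_le_one₀ (c.αbar_mem_Icc k).2 (tailBound_pos hL.four_le).le
      (by linarith [tailBound_le_three_div hL.four_le])
  linarith [hb.neg_le]

lemma DigitSumBounds.succ_le (hb : c.DigitSumBounds (tailBound R) d g P k)
    (hL : c.LargeQuotients R k₀) (h : c.IsDigitExpansion γ d g) (hP : c.IsInitialSum d P k₀)
    (hk₀ : k₀ ≤ k) (hk : 1 ≤ k) {m : ℤ} (hm : m - 1 + c.ε (k + 2) * c.α (k + 1) ≤ g (k + 1)) :
    P (k + 1) ≤ 1 + (1 - m) * c.αbar (k + 1) := by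
  have αbar_le := hL.αbar_le k hk₀
  have b_le := tailBound_le_three_div hL.four_le
  have numerator_le : d (k + 1) - c.ε (k + 1) * P k ≤
      c.a (k + 1) + c.ε (k + 1) * c.αbar k + (1 - m) := by
    have d_le := h.digit_le_sub hk hm
    rcases c.ε_eq (k + 1) with hε | hε
    · have d_le_cast : (d (k + 1) : ℝ) ≤ c.a (k + 1) - m := by exact_mod_cast d_le
      rw [hε]
      push_cast
      linarith [hb.neg_one_sub_le hL]
    · rw [hε]
      push_cast
      rcases d_le.lt_or_eq with d_lt | d_eq
      · have d_le_cast : (d (k + 1) : ℝ) ≤ c.a (k + 1) - m - 1 := by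
          exact_mod_cast Int.le_sub_one_of_lt d_lt
        linarith [hb.le_one_add]
      · have d_eq_cast : (d (k + 1) : ℝ) = c.a (k + 1) - m := by exact_mod_cast d_eq
        linarith [hb.le_one_sub hε (h.one_sub_le hm d_eq)]
  rw [hP k hk₀]
  linarith [mul_le_mul_of_nonneg_left numerator_le (c.αbar_nonneg (k + 1)), c.αbar_mul k]

lemma DigitSumBounds.neg_le_succ (hb : c.DigitSumBounds (tailBound R) d g P k)
    (hL : c.LargeQuotients R k₀) (h : c.IsDigitExpansion γ d g) (hP : c.IsInitialSum d P k₀)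
    (hk₀ : k₀ ≤ k) (hk : 1 ≤ k) : -(c.αbar (k + 1) * (1 + tailBound R)) ≤ P (k + 1) := by
  have b_pos := tailBound_pos hL.four_le
  have d_nonneg : (0 : ℝ) ≤ d (k + 1) := by exact_mod_cast h.digit_nonneg hk
  have numerator_ge : -(1 + tailBound R) ≤ d (k + 1) - c.ε (k + 1) * P k := by
    rcases c.ε_cast_eq (k + 1) with hε | hε <;> rw [hε]
    · linarith [hb.le_one_add, hL.αbar_le k hk₀]
    · have := mul_le_of_le_one_left (by linarith : 0 ≤ 1 + tailBound R) (c.αbar_mem_Icc k).2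
      linarith [hb.neg_le]
  rw [hP k hk₀]
  linarith [mul_le_mul_of_nonneg_left numerator_ge (c.αbar_nonneg (k + 1))]

lemma DigitSumBounds.succ (hb : c.DigitSumBounds (tailBound R) d g P k)
    (hL : c.LargeQuotients R k₀) (h : c.IsDigitExpansion γ d g) (hP : c.IsInitialSum d P k₀)
    (hk₀ : k₀ ≤ k) (hk : 1 ≤ k) : c.DigitSumBounds (tailBound R) d g P (k + 1) where
  le_one_sub hε hg := by
    have := hb.succ_le hL h hP hk₀ hk (m := 2) (by rw [hε]; push_cast; linarith)
    push_cast at this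
    linarith
  neg_le := hb.neg_le_succ hL h hP hk₀ hk
  le_one_add := by
    have := hb.succ_le hL h hP hk₀ hk (m := 0)
      (by simpa using h.neg_one_add_le (k := k + 1) (by lia))
    push_cast at this
    linarith
  le_one hd := by
    have one_le : (1 : ℝ) ≤ d (k + 2) := by exact_mod_cast hd
    have α_le : c.α (k + 1) ≤ g (k + 1) := by
      rw [h.eq_mul (k + 1)]
      exact le_mul_of_one_le_right (c.α_pos _).le (by linarith [(h.mem_Ico (k + 2) (by lia)).1])
    have sign_le := (pm_one_mul_mem_Icc (c.ε_cast_eq (k + 2)) (abs_of_pos (c.α_pos (k + 1))).le).2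
    have := hb.succ_le hL h hP hk₀ hk (m := 1) (by push_cast; linarith)
    push_cast at this
    linarith

lemma digitSumBounds (hL : c.LargeQuotients R k₀) (h : c.IsDigitExpansion γ d g)
    (hP : c.IsInitialSum d P k₀) (P_eq : P k₀ = 0) (pos : 1 ≤ k₀) (hk : k₀ ≤ k) :
    c.DigitSumBounds (tailBound R) d g P k := by
  induction k, hk using Nat.le_induction with
  | base =>
    have αbar_mem := c.αbar_mem_Icc k₀
    have := mul_nonneg αbar_mem.1 (tailBound_pos hL.four_le).le
    constructor <;> intros <;> linarith [αbar_mem.1, αbar_mem.2]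
  | succ k hk ih => exact ih.succ hL h hP hk (pos.trans hk)

end DigitSums

end NearestIntegerCF

/-- Abstract form of the real quantities in one cell of a digit expansion on the side `J = s`
opposite to the sign of the deviation `t`: `A = a_{k+1} - |t_{k+1}|`, while `W = ε (x - s u_k)` and
`W' = η z + s v_{k+1}` with `ε = ε_{k+1}`, `η = ε_{k+2}`, `x = αbar_k` and `z = α_{k+1}`. -/
structure DeviationData (b ε η x z W W' : ℝ) (A : ℤ) : Prop where
  ε_eq : ε = 1 ∨ ε = -1
  η_eq : η = 1 ∨ η = -1
  x_nonneg : 0 ≤ x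
  x_le : x ≤ b
  z_nonneg : 0 ≤ z
  z_le : z ≤ b
  even : Even A
  neg_two_le : -2 ≤ A
  left_le_of_pos : ε = 1 → W ≤ 1 + 2 * x * (1 + b)
  left_le_of_neg : ε = -1 → W ≤ 1 + 2 * x
  le_left : -1 - 2 * x * (1 + b) ≤ W
  le_left_of_nonpos : A ≤ 0 → -1 - 2 * x ≤ W
  of_one_lt_right : 1 < W' → η = 1 ∧ W' ≤ 1 + 2 * z ∧ |W| ≤ 1 + 2 * x
  of_right_lt : W' < -1 → 2 ≤ A ∧ -1 - 2 * z ≤ W' ∧ |W| ≤ 1 + 2 * x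
  one_lt_right : A = -2 → 1 < W'

/-- The lower bound `K` for `|(A + W + I) (I - W')|` at the four integers `I = ±1`, `I = -A ± 1`,
in the absence of information on the signs of the factors. -/
structure FourPointBound (K W W' : ℝ) (A : ℤ) : Prop where
  at_one_sub : K ≤ |(1 + W) * (A - 1 + W')|
  at_neg_one_sub : K ≤ |(1 - W) * (A + 1 + W')|
  at_neg_one : K ≤ |(1 + W') * (A - 1 + W)|
  at_one : K ≤ |(1 - W') * (A + 1 + W)|

lemma FourPointBound.vertexBound {K W W' : ℝ} {A : ℤ} (h : FourPointBound K W W' A)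
    (two_le : (2 : ℝ) ≤ A) (hW : |W| ≤ 1) (hW' : |W'| ≤ 1) : VertexBound A W W' K := by
  obtain ⟨at_one_sub, at_neg_one_sub, at_neg_one, at_one⟩ := h
  obtain ⟨le_left, left_le⟩ := abs_le.1 hW
  obtain ⟨le_right, right_le⟩ := abs_le.1 hW'
  rw [abs_of_nonneg (mul_nonneg (by linarith) (by linarith))]
    at at_one_sub at_neg_one_sub at_neg_one at_one
  exact ⟨hW, hW', at_neg_one, at_one, at_one_sub, at_neg_one_sub⟩

/-- The numerical conditions under which a four-point bound with constant `G` and `A ≤ M`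
confines the shifts `W` and `W'` to `[-1, 1]`. -/
structure DeviationConstants (b G a M : ℝ) : Prop where
  b_le : b ≤ 3 / 11
  G_pos : 0 < G
  G_le_one : G ≤ 1
  M_nonneg : 0 ≤ M
  mul_lt : 2 * b * (1 + b) * (M + 2) < G * a
  mul_lt_mul_sub : 2 * b * (M + 2) < G * (a - 2 * b)
  one_lt_mul_sub : 1 < G * (a - 2 * b)

namespace DeviationData

variable {b a ε η x z W W' G M : ℝ} {A : ℤ}

lemma abs_mul_le_mul {p q P Q : ℝ} (hp : |p| ≤ P) (hq : |q| ≤ Q) : |p * q| ≤ P * Q := by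
  rw [abs_mul]
  exact mul_le_mul hp hq (abs_nonneg _) ((abs_nonneg _).trans hp)

lemma b_nonneg (d : DeviationData b ε η x z W W' A) : 0 ≤ b := d.x_nonneg.trans d.x_le

lemma neg_le_ε_mul (d : DeviationData b ε η x z W W' A) : -b ≤ ε * x :=
  (pm_one_mul_mem_Icc d.ε_eq ((abs_of_nonneg d.x_nonneg).trans_le d.x_le)).1

lemma neg_le_η_mul (d : DeviationData b ε η x z W W' A) : -b ≤ η * z :=
  (pm_one_mul_mem_Icc d.η_eq ((abs_of_nonneg d.z_nonneg).trans_le d.z_le)).1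

variable (d : DeviationData b ε η x z W W' A) (C : DeviationConstants b G a M) (hA : A ≤ M)
  (hf : FourPointBound (G * (a + η * z + ε * x)) W W' A)

include d C

lemma mul_sub_le {y : ℝ} (h : G * (a + η * z + ε * x) ≤ y) : G * (a - 2 * b) ≤ y := by
  refine (mul_le_mul_of_nonneg_left ?_ C.G_pos.le).trans h
  linarith [d.neg_le_ε_mul, d.neg_le_η_mul]

include hA hf

lemma right_le_one : W' ≤ 1 := by
  by_contra! one_lt
  obtain ⟨rfl, right_le, abs_left_le⟩ := d.of_one_lt_right one_lt
  obtain ⟨le_left, left_le⟩ := abs_le.1 abs_left_le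
  have neg_two_le : (-2 : ℝ) ≤ A := by exact_mod_cast d.neg_two_le
  have b_nonneg := d.b_nonneg
  have M_nonneg := C.M_nonneg
  have point := hf.at_one.trans <| abs_mul_le_mul (P := 2 * z) (Q := M + 2 + 2 * b)
    (abs_le.2 ⟨by linarith, by linarith⟩)
    (abs_le.2 ⟨by linarith [C.b_le, d.x_le], by linarith [d.x_le]⟩)
  have det_ge : G * (a + z - b) ≤ G * (a + 1 * z + ε * x) :=
    mul_le_mul_of_nonneg_left (by linarith [d.neg_le_ε_mul]) C.G_pos.le
  have z_slope : 0 ≤ (b - z) * (2 * (M + 2 + 2 * b) - G) :=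
    mul_nonneg (by linarith [d.z_le]) (by linarith [C.G_le_one])
  nlinarith [C.mul_lt, mul_nonneg (mul_nonneg b_nonneg b_nonneg) M_nonneg, C.G_le_one]

lemma nonneg : 0 ≤ A := by
  have right_le := d.right_le_one C hA hf
  have ne : A ≠ -2 := fun h => by linarith [d.one_lt_right h]
  have := d.neg_two_le
  obtain ⟨r, rfl⟩ := d.even
  lia

lemma neg_one_le_right : -1 ≤ W' := by
  by_contra! right_lt
  obtain ⟨two_le, le_right, abs_left_le⟩ := d.of_right_lt right_lt
  obtain ⟨le_left, left_le⟩ := abs_le.1 abs_left_le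
  have two_le_cast : (2 : ℝ) ≤ A := by exact_mod_cast two_le
  have b_nonneg := d.b_nonneg
  have point := d.mul_sub_le C <| hf.at_neg_one.trans <|
    abs_mul_le_mul (P := 2 * b) (Q := M + 2 * b)
      (abs_le.2 ⟨by linarith [d.z_le], by linarith⟩)
      (abs_le.2 ⟨by linarith [C.b_le, d.x_le], by linarith [d.x_le]⟩)
  linarith [C.mul_lt_mul_sub, mul_nonneg b_nonneg (by linarith [C.b_le] : 0 ≤ 2 - 2 * b)]

lemma left_le_one : W ≤ 1 := by
  by_contra! one_lt
  have A_nonneg : (0 : ℝ) ≤ A := by exact_mod_cast d.nonneg C hA hf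
  have b_nonneg := d.b_nonneg
  have M_nonneg := C.M_nonneg
  have abs_le_add : |A + 1 + W'| ≤ M + 2 :=
    abs_le.2 ⟨by linarith [d.neg_one_le_right C hA hf], by linarith [d.right_le_one C hA hf]⟩
  rcases d.ε_eq with rfl | rfl
  · have left_le := d.left_le_of_pos rfl
    have point := hf.at_neg_one_sub.trans <| abs_mul_le_mul (P := 2 * x * (1 + b))
      (abs_le.2 ⟨by linarith, by linarith⟩) abs_le_add
    have det_ge : G * (a + x - b) ≤ G * (a + η * z + 1 * x) :=
      mul_le_mul_of_nonneg_left (by linarith [d.neg_le_η_mul]) C.G_pos.le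
    have x_slope : 0 ≤ (b - x) * (2 * (1 + b) * (M + 2) - G) :=
      mul_nonneg (by linarith [d.x_le]) (by nlinarith [C.G_le_one, mul_nonneg b_nonneg M_nonneg])
    linarith [C.mul_lt]
  · have left_le := d.left_le_of_neg rfl
    have point := d.mul_sub_le C <| hf.at_neg_one_sub.trans <| abs_mul_le_mul (P := 2 * b)
      (abs_le.2 ⟨by linarith [d.x_le], by linarith⟩) abs_le_add
    linarith [C.mul_lt_mul_sub]

lemma neg_one_le_left : -1 ≤ W := by
  by_contra! left_lt
  have A_nonneg := d.nonneg C hA hf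
  have b_nonneg := d.b_nonneg
  have b_mul_M := mul_nonneg b_nonneg C.M_nonneg
  have le_right := d.neg_one_le_right C hA hf
  have right_le := d.right_le_one C hA hf
  rcases A_nonneg.lt_or_eq with A_pos | rfl
  · have two_le : (2 : ℝ) ≤ A := by
      obtain ⟨r, rfl⟩ := d.even
      exact_mod_cast (by lia : 2 ≤ r + r)
    have le_left := d.le_left
    have x_mul_le := mul_le_mul_of_nonneg_right d.x_le (by linarith : 0 ≤ 1 + b)
    have point := d.mul_sub_le C <| hf.at_one_sub.trans <|
      abs_mul_le_mul (P := 2 * (b * (1 + b))) (Q := M)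
        (abs_le.2 ⟨by linarith, by linarith⟩) (abs_le.2 ⟨by linarith, by linarith⟩)
    nlinarith [C.mul_lt, mul_nonneg b_nonneg b_nonneg,
      mul_le_mul_of_nonneg_right C.G_le_one b_nonneg]
  · have le_left := d.le_left_of_nonpos le_rfl
    have point := d.mul_sub_le C <| hf.at_one_sub.trans <| abs_mul_le_mul (P := 2 * b) (Q := 2)
      (abs_le.2 ⟨by linarith [d.x_le], by linarith⟩)
      (by rw [Int.cast_zero, abs_le]; constructor <;> linarith)
    linarith [C.mul_lt_mul_sub]

lemma ne_zero : A ≠ 0 := by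
  rintro rfl
  have le_left := d.neg_one_le_left C hA hf
  have left_le := d.left_le_one C hA hf
  have le_right := d.neg_one_le_right C hA hf
  have right_le := d.right_le_one C hA hf
  have point := d.mul_sub_le C hf.at_one_sub
  have point_neg := d.mul_sub_le C hf.at_neg_one_sub
  rw [abs_mul, abs_of_nonneg (by linarith), Int.cast_zero, abs_of_nonpos (by linarith)] at point
  rw [abs_mul, abs_of_nonneg (by linarith), Int.cast_zero, abs_of_nonneg (by linarith)] at point_neg
  have one_lt := C.one_lt_mul_sub
  have product : 1 * 1 < (1 + W) * -(0 - 1 + W') * ((1 - W) * (0 + 1 + W')) :=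
    mul_lt_mul'' (by linarith) (by linarith) zero_le_one zero_le_one
  have : (1 - W ^ 2) * (1 - W' ^ 2) ≤ 1 * 1 :=
    mul_le_mul (by nlinarith) (by nlinarith) (by nlinarith) zero_le_one
  linarith

lemma two_le : 2 ≤ A := by
  have nonneg := d.nonneg C hA hf
  have ne_zero := d.ne_zero C hA hf
  obtain ⟨r, rfl⟩ := d.even
  lia

theorem vertexBound : VertexBound A W W' (G * (a + η * z + ε * x)) :=
  hf.vertexBound (by exact_mod_cast d.two_le C hA hf)
    (abs_le.2 ⟨d.neg_one_le_left C hA hf, d.left_le_one C hA hf⟩)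
    (abs_le.2 ⟨d.neg_one_le_right C hA hf, d.right_le_one C hA hf⟩)

end DeviationData

lemma VertexBound.le_sub_abs {B W W' K : ℝ} (h : VertexBound B W W' K) : K ≤ B - |W - W'| := by
  have : |W - W'| ≤ B - K := by
    rw [abs_le]
    constructor <;> linarith [h.at_neg_one, h.at_one, h.at_one_sub, h.at_neg_one_sub]
  linarith

namespace NearestIntegerCF

/-- The quantity `W = ε (αbar_k - s u_k)` governing the left factor of the form product at
`(I, s)`, where `ε = ε_{k+1}` and `s = ±1`. -/
noncomputable def leftShift (c : NearestIntegerCF) (u : ℕ → ℝ) (k : ℕ) (s : ℤ) : ℝ :=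
  c.ε (k + 1) * (c.αbar k - s * u k)

/-- The quantity `W' = η α_{k+1} + s v_{k+1}` governing the right factor of the form product at
`(I, s)`, where `η = ε_{k+2}` and `s = ±1`. -/
noncomputable def rightShift (c : NearestIntegerCF) (v : ℕ → ℝ) (k : ℕ) (s : ℤ) : ℝ :=
  c.ε (k + 2) * c.α (k + 1) + s * v (k + 1)

/-- The properties shared by the deviations of all digit expansions from some index on. -/
structure IsDeviationExpansion (c : NearestIntegerCF) (b : ℝ) (t : ℕ → ℤ) (u v : ℕ → ℝ)
    (k₀ : ℕ) : Prop where
  isInitialSum : c.IsInitialSum t u k₀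
  even_sub : ∀ k, Even (t (k + 1) - c.a (k + 1))
  abs_right_le : ∀ k, k₀ ≤ k → |v (k + 1)| ≤ 3 / 2
  deviationData : ∀ k, k₀ ≤ k → ∀ s : ℤ, s = 1 ∨ s = -1 → s * t (k + 1) < 0 →
    DeviationData b (c.ε (k + 1)) (c.ε (k + 2)) (c.αbar k) (c.α (k + 1)) (c.leftShift u k s)
      (c.rightShift v k s) (c.a (k + 1) + s * t (k + 1))

section Deviations

variable {c : NearestIntegerCF} {γ R G : ℝ} {d t : ℕ → ℤ} {g P u v : ℕ → ℝ} {k k₀ : ℕ}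

lemma IsInitialSum.deviation (hP : c.IsInitialSum d P k₀) :
    c.IsInitialSum (c.deviation d) (fun k => 2 * P k - 1 + c.αbar k) k₀ := by
  intro k hk
  simp only [NearestIntegerCF.deviation, hP k hk]
  push_cast
  linear_combination c.αbar_mul k

lemma IsDigitExpansion.abs_deviation_le (h : c.IsDigitExpansion γ d g) (hk : 1 ≤ k) :
    |2 * g k - 1 - c.ε (k + 1) * c.α k| ≤ 3 / 2 := by
  have sign_mem := pm_one_mul_mem_Icc (c.ε_cast_eq (k + 1)) (abs_of_pos (c.α_pos k)).le
  have α_lt := c.α_lt_half k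
  have g_mem := h.mem_Ico k hk
  rw [abs_le]
  constructor <;> linarith [sign_mem.1, sign_mem.2, g_mem.1, g_mem.2]

lemma DigitSumBounds.deviationData_of_neg (hb : c.DigitSumBounds (tailBound R) d g P k)
    (hL : c.LargeQuotients R k₀) (h : c.IsDigitExpansion γ d g) (hk₀ : k₀ ≤ k) (hk : 1 ≤ k) :
    DeviationData (tailBound R) (c.ε (k + 1)) (c.ε (k + 2)) (c.αbar k) (c.α (k + 1))
      (c.ε (k + 1) * (1 - 2 * P k)) (2 * g (k + 1) - 1) (2 * d (k + 1) + 1 - c.ε (k + 1)) := by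
  have αbar_nonneg := c.αbar_nonneg k
  have αbar_mul_nonneg := mul_nonneg αbar_nonneg (tailBound_pos hL.four_le).le
  have d_nonneg := h.digit_nonneg hk
  have g_mem := h.mem_Ico (k + 1) (by lia)
  have odd_ε := c.odd_ε (k + 1)
  have ε_eq := c.ε_eq (k + 1)
  exact {
    ε_eq := c.ε_cast_eq _
    η_eq := c.ε_cast_eq _
    x_nonneg := αbar_nonneg
    x_le := hL.αbar_le k hk₀
    z_nonneg := (c.α_pos _).le
    z_le := hL.α_le _ (by lia)
    even := by grind
    neg_two_le := by lia
    left_le_of_pos := fun hε => by rw [hε]; linarith [hb.neg_le]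
    left_le_of_neg := fun hε => by rw [hε]; linarith [hb.le_one_add]
    le_left := by
      rcases c.ε_cast_eq (k + 1) with hε | hε <;> rw [hε] <;> linarith [hb.neg_le, hb.le_one_add]
    le_left_of_nonpos := fun h_nonpos => by
      have hε : c.ε (k + 1) = 1 := by lia
      rw [hε, Int.cast_one]
      linarith [hb.le_one_add]
    of_one_lt_right := fun h_lt => absurd h_lt (by linarith [g_mem.2])
    of_right_lt := fun h_lt => absurd h_lt (by linarith [g_mem.1])
    one_lt_right := fun h_eq => by lia }

lemma DigitSumBounds.abs_two_mul_sub_one_add_le (hb : c.DigitSumBounds (tailBound R) d g P k)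
    (hR : 4 ≤ R) (d_pos : 1 ≤ d (k + 1)) :
    |c.ε (k + 1) * (2 * P k - 1 + 2 * c.αbar k)| ≤ 1 + 2 * c.αbar k := by
  have product_le := mul_le_of_le_one_right (c.αbar_nonneg k)
    (by linarith [tailBound_le_three_div hR] : tailBound R ≤ 1)
  rw [abs_pm_one_mul (c.ε_cast_eq _), abs_le]
  constructor <;> linarith [hb.neg_le, hb.le_one d_pos]

lemma DigitSumBounds.deviationData_of_pos (hb : c.DigitSumBounds (tailBound R) d g P k)
    (hL : c.LargeQuotients R k₀) (h : c.IsDigitExpansion γ d g) (hk₀ : k₀ ≤ k) (hk : 1 ≤ k)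
    (d_pos : 1 ≤ d (k + 1)) :
    DeviationData (tailBound R) (c.ε (k + 1)) (c.ε (k + 2)) (c.αbar k) (c.α (k + 1))
      (c.ε (k + 1) * (2 * P k - 1 + 2 * c.αbar k))
      (1 - 2 * (g (k + 1) - c.ε (k + 2) * c.α (k + 1)))
      (2 * c.a (k + 1) - 1 + c.ε (k + 1) - 2 * d (k + 1)) := by
  have αbar_nonneg := c.αbar_nonneg k
  have α_pos := c.α_pos (k + 1)
  have g_mem := h.mem_Ico (k + 1) (by lia)
  have d_le := h.digit_le hk
  have odd_ε := c.odd_ε (k + 1)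
  have ε_eq := c.ε_eq (k + 1)
  have abs_left_le := hb.abs_two_mul_sub_one_add_le hL.four_le d_pos
  have neg_one_lt : (-1 : ℝ) < ((2 * c.a (k + 1) - 1 + c.ε (k + 1) - 2 * d (k + 1) : ℤ) : ℝ) +
      (1 - 2 * (g (k + 1) - c.ε (k + 2) * c.α (k + 1))) := by
    push_cast
    rcases c.ε_cast_eq (k + 1) with hε | hε <;> rw [hε] <;> linarith [h.add_lt hk]
  obtain ⟨le_left, left_le⟩ := abs_le.1 abs_left_le
  have sign_mem := pm_one_mul_mem_Icc (c.ε_cast_eq (k + 2)) (abs_of_pos α_pos).le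
  have αbar_mul_nonneg := mul_nonneg αbar_nonneg (tailBound_pos hL.four_le).le
  exact {
    ε_eq := c.ε_cast_eq _
    η_eq := c.ε_cast_eq _
    x_nonneg := αbar_nonneg
    x_le := hL.αbar_le k hk₀
    z_nonneg := α_pos.le
    z_le := hL.α_le _ (by lia)
    even := by grind
    neg_two_le := by lia
    left_le_of_pos := fun _ => by linarith
    left_le_of_neg := fun _ => left_le
    le_left := by linarith
    le_left_of_nonpos := fun _ => by linarith
    of_one_lt_right := fun h_lt => by
      rcases c.ε_cast_eq (k + 2) with hη | hη <;> rw [hη] at h_lt ⊢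
      · exact ⟨rfl, by linarith [g_mem.1], abs_left_le⟩
      · linarith [g_mem.1]
    of_right_lt := fun h_lt => by
      have base_pos : 0 < 2 * c.a (k + 1) - 1 + c.ε (k + 1) - 2 * d (k + 1) := by
        rw [← @Int.cast_pos ℝ]
        linarith
      exact ⟨by grind, by linarith [g_mem.2, sign_mem.1], abs_left_le⟩
    one_lt_right := fun h_eq => by rw [h_eq] at neg_one_lt; push_cast at neg_one_lt; linarith }

lemma exists_isDeviationExpansion (hL : c.LargeQuotients R k₀) (h : c.IsDigitExpansion γ d g)
    (pos : 1 ≤ k₀) :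
    ∃ u, c.IsDeviationExpansion (tailBound R) (c.deviation d) u
      (fun k => 2 * g k - 1 - c.ε (k + 1) * c.α k) k₀ := by
  obtain ⟨P, P_eq, hP⟩ := exists_isInitialSum c d k₀
  refine ⟨fun k => 2 * P k - 1 + c.αbar k, hP.deviation, fun k => c.even_deviation_sub d (k + 1),
    fun k _ => h.abs_deviation_le k.succ_pos, fun k hk s hs hneg => ?_⟩
  have bounds := digitSumBounds hL h hP P_eq pos hk
  rcases hs with rfl | rfl
  · convert bounds.deviationData_of_neg hL h hk (pos.trans hk) using 1 <;>
      simp only [leftShift, rightShift, deviation] <;> push_cast <;> ring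
  · have d_pos : 1 ≤ d (k + 1) := by
      have two_le := c.two_le_a k
      have ε_eq := c.ε_eq (k + 1)
      rw [deviation] at hneg
      lia
    convert bounds.deviationData_of_pos hL h hk (pos.trans hk) d_pos using 1 <;>
      simp only [leftShift, rightShift, deviation] <;> push_cast <;> ring

lemma IsDeviationExpansion.eventually_fourPointBound {b : ℝ}
    (hdev : c.IsDeviationExpansion b t u v k₀) (hexp : c.IsGridExpansion γ t v)
    (hγ : ¬∃ p q : ℤ, γ = (p : ℝ) + (q : ℝ) * c.α 0) (hm : G / 4 < Mval (c.α 0) γ) :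
    ∀ᶠ k in atTop, ∀ s : ℤ, s = 1 ∨ s = -1 → s * t (k + 1) < 0 →
      FourPointBound (G * c.gridDet k) (c.leftShift u k s) (c.rightShift v k s)
        (c.a (k + 1) + s * t (k + 1)) := by
  filter_upwards [hexp.eventually_mul_gridDet_le hdev.isInitialSum hdev.abs_right_le hγ hm,
    eventually_ge_atTop k₀] with k hpoints hk s hs hneg
  have data := hdev.deviationData k hk s hs hneg
  have neg_two_le := data.neg_two_le
  have point : ∀ I : ℤ, Odd I → |I| ≤ c.a (k + 1) + 3 → G * c.gridDet k ≤
      |((c.a (k + 1) + s * t (k + 1) : ℤ) + c.leftShift u k s + I) *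
        (I - c.rightShift v k s)| := by
    intro I hI abs_I
    have abs_sI : |((s * I : ℤ) : ℝ)| ≤ c.a (k + 1) + 3 := by
      rcases hs with rfl | rfl <;> simpa [abs_neg] using (by exact_mod_cast abs_I)
    have := hpoints (s * I) s ((odd_of_eq_pm_one hs).mul hI) hs abs_sI
    rwa [mul_div_cancel₀ G four_ne_zero, abs_leftForm_mul_rightForm hs, ← mul_assoc,
      Int.isUnit_mul_self (Int.isUnit_iff.2 hs), one_mul] at this
  obtain ⟨r, hr⟩ := data.even
  have a_ge := c.two_le_a k
  constructor
  · rw [← abs_neg]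
    convert point (1 - (c.a (k + 1) + s * t (k + 1))) ⟨-r, by lia⟩ (by rw [abs_le]; lia) using 2
    push_cast
    ring
  · convert point (-1 - (c.a (k + 1) + s * t (k + 1))) ⟨-r - 1, by lia⟩ (by rw [abs_le]; lia)
      using 2
    push_cast
    ring
  · rw [← abs_neg]
    convert point (-1) (by decide) (by rw [abs_le]; lia) using 2
    push_cast
    ring
  · convert point 1 odd_one (by rw [abs_le]; lia) using 2
    push_cast
    ring

end Deviations

end NearestIntegerCF

/-! ### Critical cells -/

/-- The numerical conditions under which a Markoff value above `G / 4` forces the deviations to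
satisfy `|t_k| < 3 a_k / R`, or else `a_k = R` and `|t_k| = 3`. -/
structure CriticalConstants (R b G : ℝ) : Prop where
  exists_deviationConstants : ∀ a A : ℤ, R ≤ a → Even A → (A : ℝ) ≤ a - 3 * a / R →
    ∃ M : ℝ, A ≤ M ∧ DeviationConstants b G a M
  b_nonneg : 0 ≤ b
  R_pos : 0 < R
  G_pos : 0 < G
  G_le_one : G ≤ 1
  mul_one_sub_lt : 4 * R / 3 * (1 - G) + 2 * b * G < 4

lemma CriticalConstants.lt_four {R b G a τ : ℝ} (C : CriticalConstants R b G)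
    (hτ : 3 * a / R ≤ τ) (h : G * (a - 2 * b) ≤ a - τ) : τ < 4 := by
  have R_pos := C.R_pos
  have one_sub_nonneg : 0 ≤ 1 - G := sub_nonneg.2 C.G_le_one
  have bG_nonneg := mul_nonneg C.b_nonneg C.G_pos.le
  have lt_four := C.mul_one_sub_lt
  rcases le_total a (4 * R / 3) with a_le | le_a
  · linarith [mul_le_mul_of_nonneg_right a_le one_sub_nonneg]
  · have slope : R * (1 - G) < 3 := by linarith
    have slope_mul := mul_le_mul_of_nonneg_right le_a (sub_nonneg.2 slope.le)
    have : 3 * a ≤ (a * (1 - G) + 2 * b * G) * R := by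
      rw [← div_le_iff₀ R_pos]
      linarith
    linarith [mul_lt_mul_of_pos_right lt_four R_pos]

namespace NearestIntegerCF

/-- The exceptional cells: `a_{k+1} = R` and `|t_{k+1}| = 3`, with the bounds coming from the four
vertices next to the origin on the side `s = ∓1` opposite to the sign of `t_{k+1}`. -/
structure IsCritical (c : NearestIntegerCF) (R G : ℝ) (t : ℕ → ℤ) (u v : ℕ → ℝ) (k : ℕ) (s : ℤ) :
    Prop where
  eq_pm_one : s = 1 ∨ s = -1
  a_eq : c.a (k + 1) = R
  mul_eq : s * t (k + 1) = -3
  vertexBound : VertexBound (R - 3) (c.leftShift u k s) (c.rightShift v k s) (G * c.gridDet k)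

variable {c : NearestIntegerCF} {γ R G : ℝ} {t : ℕ → ℤ} {u v : ℕ → ℝ} {k k₀ : ℕ}

lemma isCritical_of_fourPointBound (C : CriticalConstants R (tailBound R) G)
    (hL : c.LargeQuotients R k₀) (hk : k₀ ≤ k) {s : ℤ}
    (hs : s = 1 ∨ s = -1) (hst : s * t (k + 1) = -|t (k + 1)|)
    (ht : 3 * (c.a (k + 1) : ℝ) / R ≤ (|t (k + 1)| : ℤ))
    (d : DeviationData (tailBound R) (c.ε (k + 1)) (c.ε (k + 2)) (c.αbar k) (c.α (k + 1))
      (c.leftShift u k s) (c.rightShift v k s) (c.a (k + 1) + s * t (k + 1)))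
    (hf : FourPointBound (G * c.gridDet k) (c.leftShift u k s) (c.rightShift v k s)
      (c.a (k + 1) + s * t (k + 1))) :
    c.IsCritical R G t u v k s := by
  have R_pos := C.R_pos
  have le_a := hL.le_a (k + 1) (by lia)
  have base_eq : ((c.a (k + 1) + s * t (k + 1) : ℤ) : ℝ) = c.a (k + 1) - (|t (k + 1)| : ℤ) := by
    rw [hst]
    push_cast
    ring
  obtain ⟨M, le_M, constants⟩ :=
    C.exists_deviationConstants _ _ le_a d.even (by rw [base_eq]; linarith)
  have bound : VertexBound (c.a (k + 1) - (|t (k + 1)| : ℤ)) (c.leftShift u k s)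
      (c.rightShift v k s) (G * c.gridDet k) := base_eq ▸ d.vertexBound constants le_M hf
  have lt_four : |t (k + 1)| < 4 := by
    have det_ge := mul_le_mul_of_nonneg_left (hL.gridDet_mem_Icc hk).1 C.G_pos.le
    have := bound.le_sub_abs
    exact_mod_cast C.lt_four ht (by
      linarith [abs_nonneg (c.leftShift u k s - c.rightShift v k s)])
  have three_le : 3 ≤ |t (k + 1)| := by
    have : (3 : ℝ) ≤ 3 * c.a (k + 1) / R := by
      rw [le_div_iff₀ R_pos]
      linarith
    exact_mod_cast this.trans ht
  have abs_t : |t (k + 1)| = 3 := by lia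
  have a_eq : (c.a (k + 1) : ℝ) = R := by
    rw [abs_t, div_le_iff₀ R_pos] at ht
    push_cast at ht
    linarith
  refine ⟨hs, a_eq, by rw [hst, abs_t], ?_⟩
  rwa [abs_t, a_eq] at bound

theorem IsDeviationExpansion.eventually_isCritical
    (hdev : c.IsDeviationExpansion (tailBound R) t u v k₀) (hL : c.LargeQuotients R k₀)
    (C : CriticalConstants R (tailBound R) G) (hexp : c.IsGridExpansion γ t v)
    (hγ : ¬∃ p q : ℤ, γ = (p : ℝ) + (q : ℝ) * c.α 0) (hm : G / 4 < Mval (c.α 0) γ) :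
    ∀ᶠ k in atTop, 3 * (c.a (k + 1) : ℝ) / R ≤ (|t (k + 1)| : ℤ) →
      ∃ s, c.IsCritical R G t u v k s := by
  filter_upwards [hdev.eventually_fourPointBound hexp hγ hm, eventually_ge_atTop k₀]
    with k hfour hk ht
  have a_pos : 0 < c.a (k + 1) := by linarith [c.two_le_a k]
  have abs_t_pos : 0 < |t (k + 1)| := by
    have : 0 < 3 * (c.a (k + 1) : ℝ) / R := by
      have := C.R_pos
      positivity
    exact_mod_cast this.trans_le ht
  obtain ⟨s, hs, hst⟩ : ∃ s : ℤ, (s = 1 ∨ s = -1) ∧ s * t (k + 1) = -|t (k + 1)| := by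
    rcases abs_choice (t (k + 1)) with h_abs | h_abs <;> rw [h_abs]
    exacts [⟨-1, by simp⟩, ⟨1, by simp⟩]
  have hneg : s * t (k + 1) < 0 := by lia
  exact ⟨s, isCritical_of_fourPointBound C hL hk hs hst ht (hdev.deviationData k hk s hs hneg)
    (hfour s hs hneg)⟩

end NearestIntegerCF

lemma DeviationConstants.mul {b G a M y : ℝ} (h : DeviationConstants b G a M) (hb : 0 ≤ b)
    (hy : 1 ≤ y) : DeviationConstants b G (a * y) (M * y) where
  b_le := h.b_le
  G_pos := h.G_pos
  G_le_one := h.G_le_one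
  M_nonneg := mul_nonneg h.M_nonneg (by linarith)
  mul_lt := by
    calc 2 * b * (1 + b) * (M * y + 2) ≤ 2 * b * (1 + b) * ((M + 2) * y) := by gcongr; linarith
      _ = 2 * b * (1 + b) * (M + 2) * y := by ring
      _ < G * a * y := mul_lt_mul_of_pos_right h.mul_lt (by linarith)
      _ = G * (a * y) := by ring
  mul_lt_mul_sub := by
    have bG_nonneg : 0 ≤ 2 * b * G := mul_nonneg (by linarith) h.G_pos.le
    calc 2 * b * (M * y + 2) ≤ 2 * b * ((M + 2) * y) := by gcongr; linarith
      _ = 2 * b * (M + 2) * y := by ring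
      _ < G * (a - 2 * b) * y := mul_lt_mul_of_pos_right h.mul_lt_mul_sub (by linarith)
      _ ≤ G * (a * y - 2 * b) := by linarith [mul_le_mul_of_nonneg_left hy bG_nonneg]
  one_lt_mul_sub := by
    have bG_nonneg : 0 ≤ 2 * b * G := mul_nonneg (by linarith) h.G_pos.le
    calc 1 ≤ 1 * y := by linarith
      _ < G * (a - 2 * b) * y := mul_lt_mul_of_pos_right h.one_lt_mul_sub (by linarith)
      _ ≤ G * (a * y - 2 * b) := by linarith [mul_le_mul_of_nonneg_left hy bG_nonneg]

lemma DeviationConstants.criticalConstants {R b G : ℝ} (h : DeviationConstants b G R (R - 3))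
    (hb : 0 ≤ b) (hR : 0 < R) (mul_one_sub_lt : 4 * R / 3 * (1 - G) + 2 * b * G < 4) :
    CriticalConstants R b G where
  exists_deviationConstants a A le_a _ le_sub := by
    refine ⟨(R - 3) * (a / R), ?_, ?_⟩
    · rwa [show (R - 3) * (a / R) = a - 3 * a / R by field_simp]
    · have := h.mul hb ((one_le_div hR).2 le_a)
      rwa [mul_div_cancel₀ _ hR.ne'] at this
  b_nonneg := hb
  R_pos := hR
  G_pos := h.G_pos
  G_le_one := h.G_le_one
  mul_one_sub_lt := mul_one_sub_lt

lemma oddThreshold_five_add {s : ℝ} (hs : 0 ≤ s) :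
    1 - 3 / (5 + s) + 2 / (5 + s) ^ 2 - 3 / (5 + s) ^ 3 + 5 / (5 + s) ^ 4 - 4 / (5 + s) ^ 3 =
      (s ^ 4 + 17 * s ^ 3 + 107 * s ^ 2 + 288 * s + 270) / (5 + s) ^ 4 := by
  field_simp
  ring

lemma criticalConstants_of_five_le {R : ℝ} (hR : 5 ≤ R) :
    CriticalConstants R (tailBound R)
      (1 - 3 / R + 2 / R ^ 2 - 3 / R ^ 3 + 5 / R ^ 4 - 4 / R ^ 3) := by
  have b_le := tailBound_le_three_div (by linarith : 4 ≤ R)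
  have b_nonneg := (tailBound_pos (by linarith : 4 ≤ R)).le
  obtain ⟨s, hs, rfl⟩ := exists_nonneg_add_of_le hR
  rw [tailBound_five_add hs] at b_le b_nonneg ⊢
  rw [oddThreshold_five_add hs]
  refine DeviationConstants.criticalConstants ⟨b_le, ?_, ?_, ?_, ?_, ?_, ?_⟩ b_nonneg ?_ ?_
  all_goals first
    | positivity
    | linarith
    | (field_simp; rw [← sub_nonneg]; ring_nf; positivity)
    | (field_simp; rw [← sub_pos]; ring_nf; positivity)

lemma criticalConstants_of_six_le {R : ℝ} (hR : 6 ≤ R) :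
    CriticalConstants R (tailBound R) (1 - 3 / R + 9 / (4 * R ^ 2) - 4 / (R + 1) ^ 3) := by
  have b_le := tailBound_le_three_div (by linarith : 4 ≤ R)
  have b_nonneg := (tailBound_pos (by linarith : 4 ≤ R)).le
  obtain ⟨s, hs, rfl⟩ := exists_nonneg_add_of_le hR
  have b_eq : tailBound (6 + s) = (5 + s) / (s ^ 2 + 11 * s + 29) := by
    rw [eq_div_iff (by positivity)]
    linear_combination tailBound_mul (by linarith : 4 ≤ 6 + s)
  have G_eq : 1 - 3 / (6 + s) + 9 / (4 * (6 + s) ^ 2) - 4 / (6 + s + 1) ^ 3 =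
      ((9 + 2 * s) ^ 2 * (7 + s) ^ 3 - 16 * (6 + s) ^ 2) / (4 * (6 + s) ^ 2 * (7 + s) ^ 3) := by
    rw [show 6 + s + 1 = 7 + s by ring]
    field_simp
    ring
  have G_pos : 0 < ((9 + 2 * s) ^ 2 * (7 + s) ^ 3 - 16 * (6 + s) ^ 2) /
      (4 * (6 + s) ^ 2 * (7 + s) ^ 3) := by
    refine div_pos ?_ (by positivity)
    ring_nf
    positivity
  rw [b_eq] at b_le b_nonneg ⊢
  rw [G_eq]
  refine DeviationConstants.criticalConstants ⟨b_le, G_pos, ?_, ?_, ?_, ?_, ?_⟩ b_nonneg ?_ ?_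
  all_goals first
    | positivity
    | linarith
    | (field_simp; rw [← sub_nonneg]; ring_nf; positivity)
    | (field_simp; rw [← sub_pos]; ring_nf; positivity)

lemma criticalConstants_four : CriticalConstants 4 (tailBound 4) (2869 / 8000) := by
  have b_eq : tailBound 4 = 3 / 11 := by norm_num [tailBound]
  rw [b_eq]
  refine ⟨fun a A le_a even le_sub => ?_, ?_, ?_, ?_, ?_, ?_⟩
  · rcases lt_or_ge a 8 with lt_eight | eight_le
    · have lt_two : A < 2 := by
        have : (a : ℝ) < 8 := by exact_mod_cast lt_eight
        exact_mod_cast (by linarith : (A : ℝ) < 2)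
      have : A ≤ 0 := by grind
      exact ⟨0, by exact_mod_cast this, by constructor <;> linarith⟩
    · have : (8 : ℝ) ≤ a := by exact_mod_cast eight_le
      exact ⟨a / 4, by linarith, by constructor <;> linarith⟩
  all_goals norm_num

lemma criticalConstants_of_even {R : ℕ} (hR : 4 ≤ R) (even : Even R) :
    CriticalConstants R (tailBound R) (1 - 3 / R + 9 / (4 * R ^ 2) - 4 / (R + 1) ^ 3) := by
  obtain rfl | six_le : R = 4 ∨ 6 ≤ R := by grind
  · convert criticalConstants_four using 1 <;> norm_num
  · exact criticalConstants_of_six_le (by exact_mod_cast six_le)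

/-- The numerical conditions under which a critical cell forces the preceding one to be critical;
`H` bounds the initial sums. -/
structure ChainConstants (R b G H : ℝ) : Prop where
  H_nonneg : 0 ≤ H
  H_le_one : H ≤ 1
  lt_mul_sub : 3 < H * (R - b - 1)
  sub_three_lt : R - 3 < G * (R - b - 1 / (R + 2 - b))
  mul_lt : (1 + (1 + H) / (R + 1 - b)) *
    (R - 4 + (1 + H) / (R + 1 - b) + (R - 3 - G * (R - 2 * b))) < G * (R - 2 * b)

lemma exists_chainConstants {R : ℝ} (hR : 5 ≤ R) :
    ∃ H, ChainConstants R (tailBound R)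
      (1 - 3 / R + 2 / R ^ 2 - 3 / R ^ 3 + 5 / R ^ 4 - 4 / R ^ 3) H := by
  obtain ⟨s, hs, rfl⟩ := exists_nonneg_add_of_le hR
  rw [oddThreshold_five_add hs, tailBound_five_add hs]
  have sub_one_eq : 5 + s - (4 + s) / (s ^ 2 + 9 * s + 19) - 1 =
      (s ^ 3 + 13 * s ^ 2 + 54 * s + 72) / (s ^ 2 + 9 * s + 19) := by
    field_simp
    ring
  have add_one_eq : 5 + s + 1 - (4 + s) / (s ^ 2 + 9 * s + 19) =
      (s ^ 3 + 15 * s ^ 2 + 72 * s + 110) / (s ^ 2 + 9 * s + 19) := by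
    field_simp
    ring
  have add_two_eq : 5 + s + 2 - (4 + s) / (s ^ 2 + 9 * s + 19) =
      (s ^ 3 + 16 * s ^ 2 + 81 * s + 129) / (s ^ 2 + 9 * s + 19) := by
    field_simp
    ring
  refine ⟨6 / (7 + 2 * s), ?_⟩
  constructor
  · positivity
  · field_simp
    linarith
  · rw [sub_one_eq]
    field_simp
    rw [← sub_pos]
    ring_nf
    positivity
  · rw [add_two_eq]
    field_simp
    rw [← sub_pos]
    ring_nf
    positivity
  · rw [add_one_eq]
    field_simp
    rw [← sub_pos]
    ring_nf
    positivity

/-! ### Propagation of critical cells -/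

lemma eventually_le_of_mul_le_add {x : ℕ → ℝ} {ρ C H : ℝ} (hρ : 1 < ρ) (hH : C < H * (ρ - 1))
    (h : ∀ᶠ k in atTop, x (k + 1) * ρ ≤ C + x k) : ∀ᶠ k in atTop, x k ≤ H := by
  obtain ⟨K, hK⟩ := eventually_atTop.1 h
  set L := C / (ρ - 1)
  have L_mul : L * (ρ - 1) = C := div_mul_cancel₀ _ (sub_ne_zero.2 hρ.ne')
  have geometric : ∀ n, x (n + K) - L ≤ (x K - L) * (1 / ρ) ^ n := by
    intro n
    induction n with
    | zero => simp
    | succ n ih =>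
      have contraction : x (n + K + 1) - L ≤ (x (n + K) - L) / ρ := by
        rw [le_div_iff₀ (by linarith)]
        linarith [hK (n + K) (by lia)]
      calc x (n + 1 + K) - L = x (n + K + 1) - L := by rw [add_right_comm]
        _ ≤ (x (n + K) - L) / ρ := contraction
        _ ≤ (x K - L) * (1 / ρ) ^ n / ρ := by gcongr
        _ = (x K - L) * (1 / ρ) ^ (n + 1) := by ring
  have tendsto : Tendsto (fun n : ℕ => (x K - L) * (1 / ρ) ^ n) atTop (nhds 0) := by
    simpa using (tendsto_pow_atTop_nhds_zero_of_lt_one (by positivity)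
      ((div_lt_one (by linarith)).2 hρ)).const_mul (x K - L)
  have L_lt : L < H := (div_lt_iff₀ (by linarith)).2 hH
  rw [← map_add_atTop_eq_nat K, eventually_map]
  filter_upwards [tendsto.eventually_lt_const (sub_pos.2 L_lt)] with n hn
  linarith [geometric n]

lemma abs_le_sub_add_one_of_even_sub {R : ℕ} {a t : ℤ} (odd : Odd R) (four_le : 4 ≤ R)
    (le_a : R ≤ a) (a_le : a ≤ R + 1) (even_sub : Even (t - a)) (ht : |t| < 3 * (a : ℝ) / R) :
    |t| ≤ a - R + 1 := by
  have R_pos : (0 : ℝ) < R := by positivity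
  rw [lt_div_iff₀ R_pos] at ht
  have mul_lt : |t| * R < 3 * a := by exact_mod_cast ht
  obtain ⟨r, rfl⟩ := odd
  obtain ⟨m, hm⟩ := even_sub
  obtain rfl | rfl : a = (2 * r + 1 : ℕ) ∨ a = (2 * r + 1 : ℕ) + 1 := by lia
  · have : |t| < 3 := by nlinarith
    grind
  · have : |t| < 4 := by
      push_cast at mul_lt
      nlinarith
    grind

namespace NearestIntegerCF

variable {c : NearestIntegerCF} {G H : ℝ} {t : ℕ → ℤ} {u v : ℕ → ℝ} {k k₀ : ℕ}

lemma LargeQuotients.αbar_succ_mul_sub_le_one {R : ℝ} (hL : c.LargeQuotients R k₀) (hk : k₀ ≤ k) :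
    c.αbar (k + 1) * (c.a (k + 1) - tailBound R) ≤ 1 := by
  rw [← c.αbar_mul k, sub_eq_add_neg]
  have abs_le : |c.αbar k| ≤ tailBound R := by
    rw [abs_of_nonneg (c.αbar_nonneg k)]
    exact hL.αbar_le k hk
  exact mul_le_mul_of_nonneg_left
    (add_le_add_right (pm_one_mul_mem_Icc (c.ε_cast_eq (k + 1)) abs_le).1 _) (c.αbar_nonneg _)

lemma IsInitialSum.abs_succ_le (hu : c.IsInitialSum t u k₀) (hk : k₀ ≤ k) :
    |u (k + 1)| ≤ c.αbar (k + 1) * ((|t (k + 1)| : ℤ) + |u k|) := by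
  rw [hu k hk, abs_mul, abs_of_nonneg (c.αbar_nonneg _), Int.cast_abs]
  refine mul_le_mul_of_nonneg_left ?_ (c.αbar_nonneg _)
  simpa only [abs_pm_one_mul (c.ε_cast_eq (k + 1))] using
    abs_sub (t (k + 1) : ℝ) (c.ε (k + 1) * u k)

lemma IsInitialSum.eventually_abs_le {R : ℝ} (hu : c.IsInitialSum t u k₀)
    (hL : c.LargeQuotients R k₀) (hH : 3 < H * (R - tailBound R - 1))
    (ht : ∀ᶠ k in atTop, (|t (k + 1)| : ℤ) ≤ 3 * (c.a (k + 1) : ℝ) / R) :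
    ∀ᶠ k in atTop, |u k| ≤ H := by
  have four_le := hL.four_le
  have b_le := tailBound_le_three_div four_le
  have b_pos := tailBound_pos four_le
  refine eventually_le_of_mul_le_add (by linarith) hH ?_
  filter_upwards [ht, eventually_ge_atTop k₀] with k ht hk
  have le_a := hL.le_a (k + 1) (by lia)
  have scaled : (3 * (c.a (k + 1) : ℝ) / R + |u k|) * (R - tailBound R) ≤
      (3 + |u k|) * (c.a (k + 1) - tailBound R) := by
    have : 3 * (c.a (k + 1) : ℝ) / R * (R - tailBound R) ≤ 3 * (c.a (k + 1) - tailBound R) := by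
      rw [div_mul_eq_mul_div, div_le_iff₀ (by linarith)]
      linarith [mul_le_mul_of_nonneg_right le_a b_pos.le]
    linarith [mul_le_mul_of_nonneg_left le_a (abs_nonneg (u k))]
  calc |u (k + 1)| * (R - tailBound R)
      ≤ c.αbar (k + 1) * (3 * (c.a (k + 1) : ℝ) / R + |u k|) * (R - tailBound R) := by
        refine mul_le_mul_of_nonneg_right ((hu.abs_succ_le hk).trans ?_) (by linarith)
        exact mul_le_mul_of_nonneg_left (by linarith) (c.αbar_nonneg _)
    _ ≤ c.αbar (k + 1) * ((3 + |u k|) * (c.a (k + 1) - tailBound R)) := by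
        rw [mul_assoc]
        exact mul_le_mul_of_nonneg_left scaled (c.αbar_nonneg _)
    _ = (3 + |u k|) * (c.αbar (k + 1) * (c.a (k + 1) - tailBound R)) := by ring
    _ ≤ 3 + |u k| :=
        mul_le_of_le_one_right (by positivity) (hL.αbar_succ_mul_sub_le_one hk)

variable {R : ℕ} {s : ℤ}

lemma IsCritical.ε_mul_αbar_lt (h : c.IsCritical R G t u v k s) (hL : c.LargeQuotients R k₀)
    (hk : k₀ ≤ k) (hG : 0 < G) (C : ChainConstants R (tailBound R) G H) :
    c.ε (k + 1) * c.αbar k < -(1 / (R + 2 - tailBound R)) := by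
  have abs_le : |c.α (k + 1)| ≤ tailBound R := by
    rw [abs_of_pos (c.α_pos _)]
    exact hL.α_le _ (by lia)
  have ε_mul_α := (pm_one_mul_mem_Icc (c.ε_cast_eq (k + 2)) abs_le).1
  have det_lt : c.gridDet k < R - tailBound R - 1 / (R + 2 - tailBound R) :=
    lt_of_mul_lt_mul_left ((h.vertexBound.le_sub_abs.trans (sub_le_self _ (abs_nonneg _))).trans_lt
      C.sub_three_lt) hG.le
  rw [gridDet, h.a_eq] at det_lt
  linarith

lemma IsCritical.ε_eq_neg_one (h : c.IsCritical R G t u v k s) (hL : c.LargeQuotients R k₀)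
    (hk : k₀ ≤ k) (hG : 0 < G) (C : ChainConstants R (tailBound R) G H) : c.ε (k + 1) = -1 := by
  refine (c.ε_eq _).resolve_left fun ε_eq => ?_
  have lt := h.ε_mul_αbar_lt hL hk hG C
  have : (0 : ℝ) ≤ 1 / (R + 2 - tailBound R) :=
    one_div_nonneg.2 (by linarith [hL.four_le, tailBound_le_three_div hL.four_le])
  rw [ε_eq, Int.cast_one, one_mul] at lt
  linarith [c.αbar_nonneg k]

lemma IsCritical.a_le (h : c.IsCritical R G t u v (k + 1) s) (hL : c.LargeQuotients R k₀)
    (hk : k₀ ≤ k) (hG : 0 < G) (C : ChainConstants R (tailBound R) G H) :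
    c.a (k + 1) ≤ R + 1 := by
  by_contra! lt_a
  have le_a : (R : ℝ) + 2 ≤ c.a (k + 1) := by exact_mod_cast lt_a
  have b_lt : tailBound R < R + 2 := by linarith [hL.four_le, tailBound_le_three_div hL.four_le]
  have lt := h.ε_mul_αbar_lt hL (hk.trans k.le_succ) hG C
  rw [h.ε_eq_neg_one hL (hk.trans k.le_succ) hG C, Int.cast_neg, Int.cast_one, neg_one_mul,
    neg_lt_neg_iff, div_lt_iff₀ (by linarith)] at lt
  linarith [hL.αbar_succ_mul_sub_le_one hk,
    mul_le_mul_of_nonneg_left le_a (c.αbar_nonneg (k + 1))]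

lemma IsInitialSum.sub_le_div (hu : c.IsInitialSum t u k₀) (hL : c.LargeQuotients R k₀)
    (hk : k₀ ≤ k) (hH : 0 ≤ H) (H_le : H ≤ 1) (huk : |u k| ≤ H) (a_le : c.a (k + 1) ≤ R + 1)
    (ht : |t (k + 1)| ≤ c.a (k + 1) - R + 1) :
    |u (k + 1)| - c.αbar (k + 1) ≤ (1 + H) / (R + 1 - tailBound R) := by
  have four_le := hL.four_le
  have b_le := tailBound_le_three_div four_le
  have : (R : ℝ) ≤ c.a (k + 1) := hL.le_a (k + 1) (by lia)
  have αbar_le := hL.αbar_succ_mul_sub_le_one hk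
  have ht_cast : ((|t (k + 1)| : ℤ) : ℝ) ≤ c.a (k + 1) - R + 1 := by exact_mod_cast ht
  have mul_le : (c.a (k + 1) - R + H) * (R + 1 - tailBound R) ≤
      (1 + H) * (c.a (k + 1) - tailBound R) := by
    have : (0 : ℝ) ≤ R + 1 - c.a (k + 1) := by
      rw [sub_nonneg]
      exact_mod_cast a_le
    nlinarith [mul_nonneg this (by linarith : 0 ≤ R - tailBound R - H)]
  rw [le_div_iff₀ (by linarith)]
  calc (|u (k + 1)| - c.αbar (k + 1)) * (R + 1 - tailBound R)
      ≤ c.αbar (k + 1) * (c.a (k + 1) - R + H) * (R + 1 - tailBound R) := by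
        refine mul_le_mul_of_nonneg_right ?_ (by linarith)
        linarith [hu.abs_succ_le hk, mul_le_mul_of_nonneg_left
          (by linarith : (|t (k + 1)| : ℤ) + |u k| ≤ c.a (k + 1) - R + 1 + H)
          (c.αbar_nonneg (k + 1))]
    _ ≤ c.αbar (k + 1) * ((1 + H) * (c.a (k + 1) - tailBound R)) := by
        rw [mul_assoc]
        exact mul_le_mul_of_nonneg_left mul_le (c.αbar_nonneg _)
    _ = (1 + H) * (c.αbar (k + 1) * (c.a (k + 1) - tailBound R)) := by ring
    _ ≤ 1 + H := mul_le_of_le_one_right (by linarith) αbar_le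

lemma IsCritical.lt_leftShift (h : c.IsCritical R G t u v k s) (hL : c.LargeQuotients R k₀)
    (hk : k₀ ≤ k) (hG : 0 < G) (C : ChainConstants R (tailBound R) G H) :
    (1 + H) / (R + 1 - tailBound R) < c.leftShift u k s := by
  by_contra! left_le
  have b_le := tailBound_le_three_div hL.four_le
  have det_ge : G * (R - 2 * tailBound R) ≤ G * c.gridDet k :=
    mul_le_mul_of_nonneg_left (h.a_eq ▸ (hL.gridDet_mem_Icc hk).1) hG.le
  have left_mem := abs_le.1 h.vertexBound.abs_left_le
  have right_le : c.rightShift v k s ≤ c.leftShift u k s + (R - 3 - G * (R - 2 * tailBound R)) := by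
    linarith [h.vertexBound.le_sub_abs, neg_abs_le (c.leftShift u k s - c.rightShift v k s)]
  have at_one_sub := det_ge.trans h.vertexBound.at_one_sub
  have det_pos : 0 < G * (R - 2 * tailBound R) := mul_pos hG (by linarith [hL.four_le])
  have factor_pos : 0 < R - 3 - 1 + c.rightShift v k s :=
    pos_of_mul_pos_right (det_pos.trans_le at_one_sub) (by linarith)
  have product_le : (1 + c.leftShift u k s) * (R - 3 - 1 + c.rightShift v k s) ≤
      (1 + (1 + H) / (R + 1 - tailBound R)) * (R - 4 + (1 + H) / (R + 1 - tailBound R) +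
        (R - 3 - G * (R - 2 * tailBound R))) :=
    mul_le_mul (by linarith) (by linarith) factor_pos.le (by linarith)
  linarith [C.mul_lt]

theorem IsCritical.exists_isCritical (h : c.IsCritical R G t u v (k + 1) s)
    (hdev : c.IsDeviationExpansion (tailBound R) t u v k₀) (hL : c.LargeQuotients R k₀)
    (hk : k₀ ≤ k) (hG : 0 < G) (C : ChainConstants R (tailBound R) G H) (odd : Odd R)
    (huk : |u k| ≤ H)
    (hcrit : 3 * (c.a (k + 1) : ℝ) / R ≤ (|t (k + 1)| : ℤ) → ∃ s, c.IsCritical R G t u v k s) :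
    ∃ s, c.IsCritical R G t u v k s := by
  by_contra hnot
  have t_lt : (|t (k + 1)| : ℤ) < 3 * (c.a (k + 1) : ℝ) / R := not_le.1 (mt hcrit hnot)
  have a_le := h.a_le hL hk hG C
  have t_le := abs_le_sub_add_one_of_even_sub odd (by exact_mod_cast hL.four_le)
    (by exact_mod_cast hL.le_a (k + 1) (by lia)) a_le (hdev.even_sub k) (by exact_mod_cast t_lt)
  have sub_le := hdev.isInitialSum.sub_le_div hL hk C.H_nonneg C.H_le_one huk a_le t_le
  have lt := h.lt_leftShift hL (hk.trans k.le_succ) hG C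
  rw [leftShift, h.ε_eq_neg_one hL (hk.trans k.le_succ) hG C] at lt
  have le_abs : s * u (k + 1) ≤ |u (k + 1)| := by
    have hs : (s : ℝ) = 1 ∨ (s : ℝ) = -1 := by exact_mod_cast h.eq_pm_one
    exact abs_pm_one_mul hs (u (k + 1)) ▸ le_abs_self _
  push_cast at lt
  linarith

end NearestIntegerCF

/-! ### Expansions with constant digits -/

lemma sub_le_one_sub_mul_tailBound {R : ℝ} (hR : 5 ≤ R) :
    R - 5 / 2 ≤ (1 - 2 * tailBound R) * (R - 2 * tailBound R) := by
  obtain ⟨s, hs, rfl⟩ := exists_nonneg_add_of_le hR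
  rw [tailBound_five_add hs, ← sub_nonneg]
  have difference : (1 - 2 * ((4 + s) / (s ^ 2 + 9 * s + 19))) *
      (5 + s - 2 * ((4 + s) / (s ^ 2 + 9 * s + 19))) - (5 + s - 5 / 2) =
      (2 * ((s ^ 2 + 9 * s + 19) - 2 * (4 + s)) * ((5 + s) * (s ^ 2 + 9 * s + 19) - 2 * (4 + s)) -
        (5 + 2 * s) * (s ^ 2 + 9 * s + 19) ^ 2) / (2 * (s ^ 2 + 9 * s + 19) ^ 2) := by
    field_simp
    ring
  rw [difference]
  refine div_nonneg ?_ (by positivity)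
  ring_nf
  positivity

lemma sub_three_lt_mul_sub_tailBound {R : ℝ} (hR : 5 ≤ R) :
    R - 3 < (1 - 5 / (2 * R) - 4 / R ^ 3) * (R - 2 * tailBound R) := by
  obtain ⟨s, hs, rfl⟩ := exists_nonneg_add_of_le hR
  rw [tailBound_five_add hs]
  field_simp
  rw [← sub_pos]
  ring_nf
  positivity

lemma vertexBound_of_mem_Icc {B δ W W' K : ℝ} (hW : W ∈ Set.Icc (-δ) 0)
    (hW' : W' ∈ Set.Icc (-δ) 0) (hδ : δ ≤ 1) (hB : 1 + δ ≤ B) (hK : K ≤ (1 - δ) * (B - 1 - δ)) :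
    VertexBound B W W' K := by
  obtain ⟨le_W, W_le⟩ := hW
  obtain ⟨le_W', W'_le⟩ := hW'
  constructor
  · exact abs_le.2 ⟨by linarith, by linarith⟩
  · exact abs_le.2 ⟨by linarith, by linarith⟩
  all_goals
    refine hK.trans (mul_le_mul ?_ ?_ ?_ ?_) <;> linarith

namespace NearestIntegerCF

/-- From index `k₀` on the expansion has the constant digits `a_k = R`, `ε_k = -1`. -/
structure IsConstantFrom (c : NearestIntegerCF) (R : ℕ) (k₀ : ℕ) : Prop where
  a_eq : ∀ k, k₀ ≤ k → c.a k = R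
  ε_eq : ∀ k, k₀ ≤ k → c.ε k = -1

namespace IsConstantFrom

variable {c : NearestIntegerCF} {γ : ℝ} {R : ℕ} {t : ℕ → ℤ} {u v : ℕ → ℝ} {k k₀ : ℕ}

section

variable (hc : c.IsConstantFrom R k₀) (odd : Odd R) (hL : c.LargeQuotients R k₀)
  (hs : c.IsStarExpansion t v) (hu : c.IsInitialSum t u k₀)

include hc odd

lemma odd_a (hk : k₀ ≤ k) : Odd (c.a k) := by
  rw [hc.a_eq k hk]
  exact_mod_cast odd

include hs in
lemma t_eq_neg (hk : k₀ ≤ k) : t (k + 2) = -t (k + 1) :=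
  hs.eq_neg k (hc.odd_a odd (by lia)) (hc.odd_a odd (by lia))

include hs in
lemma t_mul_self (hk : k₀ ≤ k) : (t (k + 1) : ℝ) * t (k + 1) = 1 :=
  pm_one_mul_self (hs.cast_eq_pm_one (hc.odd_a odd (by lia)))

include hL hs hu

lemma t_mul_u_mem_Icc (hu₀ : u k₀ = 0) (hk : k₀ ≤ k) :
    t (k + 1) * u (k + 1) ∈
      Set.Icc (c.αbar (k + 1) * (1 - tailBound R)) (c.αbar (k + 1)) := by
  have b_pos := tailBound_pos hL.four_le
  have b_le := tailBound_le_three_div hL.four_le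
  induction k, hk using Nat.le_induction with
  | base =>
    have t_mul_u : (t (k₀ + 1) : ℝ) * u (k₀ + 1) = c.αbar (k₀ + 1) := by
      rw [hu k₀ le_rfl, hu₀]
      linear_combination c.αbar (k₀ + 1) * hc.t_mul_self odd hs le_rfl
    rw [t_mul_u]
    have := mul_nonneg (c.αbar_nonneg (k₀ + 1)) b_pos.le
    constructor <;> linarith
  | succ k hk ih =>
    have αbar_pos := c.αbar_succ_pos (k + 1)
    have t_mul_u : (t (k + 2) : ℝ) * u (k + 2) =
        c.αbar (k + 2) * (1 - t (k + 1) * u (k + 1)) := by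
      rw [hu (k + 1) (by lia), hc.t_eq_neg odd hs hk, hc.ε_eq _ (by lia)]
      push_cast
      linear_combination c.αbar (k + 2) * hc.t_mul_self odd hs hk
    have nonneg : 0 ≤ t (k + 1) * u (k + 1) :=
      (mul_nonneg (c.αbar_nonneg _) (by linarith)).trans ih.1
    have le_b := ih.2.trans (hL.αbar_le (k + 1) (by lia))
    rw [t_mul_u]
    exact ⟨mul_le_mul_of_nonneg_left (by linarith) αbar_pos.le,
      mul_le_of_le_one_right αbar_pos.le (by linarith)⟩

lemma abs_u_eq (hu₀ : u k₀ = 0) (hk : k₀ ≤ k) : |u (k + 1)| = t (k + 1) * u (k + 1) := by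
  rw [← abs_pm_one_mul (hs.cast_eq_pm_one (hc.odd_a odd (by lia : k₀ ≤ k + 1))), abs_of_nonneg]
  exact (mul_nonneg (c.αbar_nonneg _) (by linarith [tailBound_le_three_div hL.four_le])).trans
    (hc.t_mul_u_mem_Icc odd hL hs hu hu₀ hk).1

lemma leftShift_t_mem_Icc (hu₀ : u k₀ = 0) (hk : k₀ ≤ k) :
    c.leftShift u (k + 1) (t (k + 2)) ∈ Set.Icc (-(2 * tailBound R)) 0 := by
  have αbar_le := hL.αbar_le (k + 1) (by lia)
  have u_mem := hc.t_mul_u_mem_Icc odd hL hs hu hu₀ hk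
  have u_nonneg : 0 ≤ t (k + 1) * u (k + 1) := hc.abs_u_eq odd hL hs hu hu₀ hk ▸ abs_nonneg _
  rw [leftShift, hc.t_eq_neg odd hs hk, hc.ε_eq _ (by lia)]
  push_cast
  constructor <;> linarith [u_mem.2, c.αbar_nonneg (k + 1)]

lemma leftShift_neg_t_mem_Icc (hu₀ : u k₀ = 0) (hk : k₀ ≤ k) :
    c.leftShift u (k + 1) (-t (k + 2)) ∈ Set.Icc (-(tailBound R * tailBound R)) 0 := by
  have αbar_mul_le :=
    mul_le_mul_of_nonneg_right (hL.αbar_le (k + 1) (by lia)) (tailBound_pos hL.four_le).le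
  have u_mem := hc.t_mul_u_mem_Icc odd hL hs hu hu₀ hk
  rw [leftShift, hc.t_eq_neg odd hs hk, hc.ε_eq _ (by lia)]
  push_cast
  constructor <;> linarith [u_mem.1, u_mem.2]

omit hu in
lemma rightShift_t_mem_Icc (hk : k₀ ≤ k) :
    c.rightShift v k (t (k + 1)) ∈ Set.Icc (-(2 * tailBound R)) 0 := by
  have odd_next : Odd (c.a (k + 1)) := hc.odd_a odd (by lia)
  have α_le := hL.α_le (k + 1) (by lia)
  have v_nonpos := hs.mul_nonpos k odd_next
  have v_ge := (pm_one_mul_mem_Icc (hs.cast_eq_pm_one odd_next) (hs.abs_le (k + 1))).1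
  rw [rightShift, hc.ε_eq _ (by lia)]
  push_cast
  constructor <;> linarith [c.α_pos (k + 1)]

omit hu in
lemma rightShift_neg_t_mem_Icc (hk : k₀ ≤ k) :
    c.rightShift v k (-t (k + 1)) ∈ Set.Icc (-(tailBound R * tailBound R)) 0 := by
  have odd_next : Odd (c.a (k + 1)) := hc.odd_a odd (by lia)
  have v_ge := hs.le_abs_of_odd (k + 1) (hc.odd_a odd (by lia))
  have v_le := hs.abs_le (k + 1)
  have α_mul_le := mul_le_mul (hL.α_le (k + 1) (by lia)) (hL.α_le (k + 2) (by lia))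
    (c.α_pos (k + 2)).le (tailBound_pos hL.four_le).le
  rw [← abs_pm_one_mul (hs.cast_eq_pm_one odd_next), abs_of_nonpos (hs.mul_nonpos k odd_next)]
    at v_ge v_le
  rw [rightShift, hc.ε_eq _ (by lia)]
  push_cast
  constructor <;> linarith

lemma vertexBound_t (hu₀ : u k₀ = 0) (hk : k₀ ≤ k) (five_le : 5 ≤ R) {K : ℝ}
    (hK : K ≤ R - 5 / 2) :
    VertexBound (R + 1) (c.leftShift u (k + 1) (t (k + 2)))
      (c.rightShift v (k + 1) (t (k + 2))) K := by
  have b_le := tailBound_le_three_div hL.four_le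
  have five_le_cast : (5 : ℝ) ≤ R := by exact_mod_cast five_le
  refine vertexBound_of_mem_Icc (hc.leftShift_t_mem_Icc odd hL hs hu hu₀ hk)
    (hc.rightShift_t_mem_Icc odd hL hs (by lia)) (by linarith) (by linarith) (hK.trans ?_)
  rw [add_sub_cancel_right]
  exact sub_le_one_sub_mul_tailBound five_le_cast

lemma vertexBound_neg_t (hu₀ : u k₀ = 0) (hk : k₀ ≤ k) {K : ℝ} (hK : K ≤ R - 5 / 2) :
    VertexBound (R - 1) (c.leftShift u (k + 1) (-t (k + 2)))
      (c.rightShift v (k + 1) (-t (k + 2))) K := by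
  have four_le := hL.four_le
  have b_pos := tailBound_pos four_le
  have b_le := tailBound_le_three_div four_le
  have sq_mul_le : tailBound R * tailBound R * (R - 1) ≤ tailBound R := by
    rw [mul_assoc]
    exact mul_le_of_le_one_right b_pos.le
      ((le_div_iff₀ (by linarith)).1 (tailBound_le four_le))
  have sq_le : tailBound R * tailBound R ≤ tailBound R :=
    mul_le_of_le_one_right b_pos.le (by linarith)
  refine vertexBound_of_mem_Icc (hc.leftShift_neg_t_mem_Icc odd hL hs hu hu₀ hk)
    (hc.rightShift_neg_t_mem_Icc odd hL hs (by lia)) (by linarith) (by linarith) (hK.trans ?_)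
  linarith [mul_self_nonneg (tailBound R * tailBound R)]

lemma cellBound (hu₀ : u k₀ = 0) (five_le : 5 ≤ R) (hk : k₀ + 1 ≤ k) :
    c.CellBound t u v (1 - 5 / (2 * R)) k := by
  obtain ⟨k, rfl⟩ := Nat.exists_eq_add_of_le' (by lia : 1 ≤ k)
  replace hk : k₀ ≤ k := by lia
  have five_le_cast : (5 : ℝ) ≤ R := by exact_mod_cast five_le
  have odd_next : Odd (c.a (k + 2)) := hc.odd_a odd (by lia)
  have a_eq : c.a (k + 2) = R := hc.a_eq _ (by lia)
  have det_le : c.gridDet (k + 1) ≤ R := by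
    rw [gridDet, hc.ε_eq _ (by lia), hc.ε_eq _ (by lia), a_eq]
    push_cast
    linarith [c.α_pos (k + 2), c.αbar_nonneg (k + 1)]
  have G_nonneg : (0 : ℝ) ≤ 1 - 5 / (2 * R) := by
    rw [sub_nonneg, div_le_one (by linarith)]
    linarith
  have hK : (1 - 5 / (2 * R)) * c.gridDet (k + 1) ≤ (R : ℝ) - 5 / 2 :=
    (mul_le_mul_of_nonneg_left det_le G_nonneg).trans_eq (by field_simp)
  intro I J hI hJ
  have t_eq := hs.eq_pm_one (k + 1) odd_next
  have t_mul_t : t (k + 2) * t (k + 2) = 1 := Int.isUnit_mul_self (Int.isUnit_iff.2 t_eq)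
  have hJI : Odd (J * I) := (odd_of_eq_pm_one hJ).mul hI
  rw [abs_leftForm_mul_rightForm hJ]
  have J_eq : J = t (k + 2) ∨ J = -t (k + 2) := by lia
  rcases J_eq with rfl | rfl
  · have bound := hc.vertexBound_t odd hL hs hu hu₀ hk five_le hK
    rw [t_mul_t, a_eq]
    exact VertexBound.le_abs_of_odd (by exact_mod_cast bound) (a_eq ▸ odd_next).add_one
      (by lia) hJI
  · have bound := hc.vertexBound_neg_t odd hL hs hu hu₀ hk hK
    rw [neg_mul (t (k + 2)), t_mul_t, a_eq, ← sub_eq_add_neg]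
    exact VertexBound.le_abs_of_odd (by exact_mod_cast bound) ((a_eq ▸ odd_next).sub_odd odd_one)
      (by lia) hJI

omit hu in
theorem div_four_le_Mval (five_le : 5 ≤ R) (hexp : c.IsGridExpansion γ t v) :
    (1 - 5 / (2 * R)) / 4 ≤ Mval (c.α 0) γ := by
  obtain ⟨u, hu₀, hu⟩ := c.exists_isInitialSum t k₀
  have b_le := tailBound_le_three_div hL.four_le
  refine IsNearOrigin.div_four_le_Mval ⟨hs.abs_coeff_le_one, fun k hk => ?_, hs.abs_le⟩
    (hL.mono k₀.le_succ) hexp (fun k hk => hu k (by lia)) (sub_le_self _ (by positivity))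
    fun k hk => hc.cellBound odd hL hs hu hu₀ five_le hk
  obtain ⟨k, rfl⟩ := Nat.exists_eq_add_of_le' (by lia : 1 ≤ k)
  rw [hc.abs_u_eq odd hL hs hu hu₀ (by lia)]
  linarith [(hc.t_mul_u_mem_Icc odd hL hs hu hu₀ (by lia : k₀ ≤ k)).2,
    hL.αbar_le (k + 1) (by lia)]

end

end IsConstantFrom

variable {c : NearestIntegerCF} {γ γ' G H : ℝ} {R : ℕ} {t t' : ℕ → ℤ} {u v v' : ℕ → ℝ}
  {k₀ : ℕ}

lemma IsCritical.abs_eq_three {k : ℕ} {s : ℤ} (h : c.IsCritical R G t u v k s) :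
    |t (k + 1)| = 3 := by
  rw [← one_mul |t (k + 1)|, ← Int.isUnit_iff_abs_eq.1 (Int.isUnit_iff.2 h.eq_pm_one), ← abs_mul,
    h.mul_eq]
  rfl

lemma IsDeviationExpansion.eventually_isCritical_of_frequently
    (hdev : c.IsDeviationExpansion (tailBound R) t u v k₀) (hL : c.LargeQuotients R k₀)
    (hG : 0 < G) (C : ChainConstants R (tailBound R) G H) (odd : Odd R)
    (hcrit : ∀ᶠ k in atTop, 3 * (c.a (k + 1) : ℝ) / R ≤ (|t (k + 1)| : ℤ) →
      ∃ s, c.IsCritical R G t u v k s)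
    (hfreq : ∃ᶠ k in atTop, ∃ s, c.IsCritical R G t u v k s) :
    ∀ᶠ k in atTop, ∃ s, c.IsCritical R G t u v k s := by
  have R_pos : (0 : ℝ) < R := by linarith [hL.four_le]
  have abs_t_le : ∀ᶠ k in atTop, (|t (k + 1)| : ℤ) ≤ 3 * (c.a (k + 1) : ℝ) / R := by
    filter_upwards [hcrit] with k hcrit
    by_contra! lt
    obtain ⟨s, h⟩ := hcrit lt.le
    rw [h.abs_eq_three, h.a_eq, mul_div_cancel_right₀ _ R_pos.ne'] at lt
    norm_num at lt
  have abs_u_le := hdev.isInitialSum.eventually_abs_le hL C.lt_mul_sub abs_t_le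
  obtain ⟨K, hK⟩ := eventually_atTop.1 ((hcrit.and abs_u_le).and (eventually_ge_atTop k₀))
  filter_upwards [eventually_ge_atTop K] with j hj
  obtain ⟨k, hjk, hk⟩ := frequently_atTop.1 hfreq j
  induction k, hjk using Nat.le_induction with
  | base => exact hk
  | succ k hjk ih =>
    obtain ⟨s, h⟩ := hk
    obtain ⟨⟨hcrit, huk⟩, k₀_le⟩ := hK k (hj.trans hjk)
    exact ih (h.exists_isCritical hdev hL k₀_le hG C odd huk hcrit)

lemma LargeQuotients.exists_isConstantFrom (hL : c.LargeQuotients R k₀) (hG : 0 < G)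
    (C : ChainConstants R (tailBound R) G H)
    (hcrit : ∀ᶠ k in atTop, ∃ s, c.IsCritical R G t u v k s) :
    ∃ k₁, k₀ ≤ k₁ ∧ c.IsConstantFrom R k₁ := by
  obtain ⟨K, hK⟩ := eventually_atTop.1 (hcrit.and (eventually_ge_atTop k₀))
  refine ⟨K + 1, (hK K le_rfl).2.trans K.le_succ, fun k hk => ?_, fun k hk => ?_⟩ <;>
  · obtain ⟨k, rfl⟩ := Nat.exists_eq_add_of_le' (by lia : 1 ≤ k)
    obtain ⟨⟨s, h⟩, k₀_le⟩ := hK k (by lia)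
    first
      | exact_mod_cast h.a_eq
      | exact h.ε_eq_neg_one hL k₀_le hG C

lemma IsDeviationExpansion.not_frequently_isCritical
    (hdev : c.IsDeviationExpansion (tailBound R) t u v k₀) (hL : c.LargeQuotients R k₀)
    (five_le : 5 ≤ R) (hexp : c.IsGridExpansion γ t v)
    (hγ : ¬∃ p q : ℤ, γ = (p : ℝ) + (q : ℝ) * c.α 0)
    (hm : (1 - 5 / (2 * (R : ℝ)) - 4 / R ^ 3) / 4 < Mval (c.α 0) γ) :
    ¬∃ᶠ k in atTop, ∃ s, c.IsCritical R G t u v k s := by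
  rw [not_frequently]
  have five_le_cast : (5 : ℝ) ≤ R := by exact_mod_cast five_le
  have sub_three_lt := sub_three_lt_mul_sub_tailBound five_le_cast
  have b_le := tailBound_le_three_div hL.four_le
  filter_upwards [hdev.eventually_fourPointBound hexp hγ hm, eventually_ge_atTop k₀]
    with k hfour hk
  rintro ⟨s, h⟩
  have shift_eq : ((c.a (k + 1) + s * t (k + 1) : ℤ) : ℝ) = R - 3 := by
    rw [h.mul_eq, Int.cast_add, h.a_eq]
    push_cast
    ring
  have bound := (hfour s h.eq_pm_one (by linarith [h.mul_eq])).vertexBound (by linarith)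
    h.vertexBound.abs_left_le h.vertexBound.abs_right_le
  have le_sub_abs := bound.le_sub_abs
  have det_ge := (hL.gridDet_mem_Icc hk).1
  rw [shift_eq] at le_sub_abs
  rw [h.a_eq] at det_ge
  have G_pos : 0 < 1 - 5 / (2 * (R : ℝ)) - 4 / R ^ 3 :=
    pos_of_mul_pos_left (by linarith) (by linarith : 0 ≤ R - 2 * tailBound R)
  have := mul_le_mul_of_nonneg_left det_ge G_pos.le
  linarith [abs_nonneg (c.leftShift u k s - c.rightShift v k s)]

lemma LargeQuotients.add_one_le (hL : c.LargeQuotients R k₀) {k : ℕ} (hk : k₀ ≤ k)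
    (ne : c.a k ≠ R) : (R : ℝ) + 1 ≤ c.a k := by
  have le_a : (R : ℤ) ≤ c.a k := by exact_mod_cast hL.le_a k hk
  exact_mod_cast le_a.lt_of_ne' ne

lemma LargeQuotients.parityBounds_of_even (hL : c.LargeQuotients R k₀) (even : Even R) :
    c.ParityBounds R (R + 1) k₀ where
  le_of_even k hk _ := hL.le_a k hk
  le_of_odd _ hk odd := hL.add_one_le hk fun a_eq =>
    Int.not_even_iff_odd.2 odd (a_eq ▸ (Int.even_coe_nat R).2 even)

lemma LargeQuotients.parityBounds_of_odd (hL : c.LargeQuotients R k₀) (odd : Odd R) :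
    c.ParityBounds (R + 1) R k₀ where
  le_of_even _ hk even := hL.add_one_le hk fun a_eq =>
    Int.not_odd_iff_even.2 even (a_eq ▸ (Int.odd_coe_nat R).2 odd)
  le_of_odd k hk _ := hL.le_a k hk

section Conclusion

variable (hdev : c.IsDeviationExpansion (tailBound R) t u v k₀) (hL : c.LargeQuotients R k₀)
  (hexp : c.IsGridExpansion γ t v) (hγ : ¬∃ p q : ℤ, γ = (p : ℝ) + (q : ℝ) * c.α 0)
  (hs : c.IsStarExpansion t' v') (hexp' : c.IsGridExpansion γ' t' v')

include hdev hL hexp hγ hs hexp'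

theorem IsDeviationExpansion.eventually_abs_lt_of_even (even : Even R)
    (hM : Mval (c.α 0) γ' - 1 / (R + 1) ^ 3 < Mval (c.α 0) γ) :
    ∀ᶠ k in atTop, (|t (k + 1)| : ℤ) < 3 * (c.a (k + 1) : ℝ) / R := by
  have four_le : 4 ≤ R := by exact_mod_cast hL.four_le
  obtain ⟨β, Q, H, ω, P⟩ := exists_starConstants_of_four_le hL.four_le
  have star_bound := hs.div_four_le_Mval P hL (hL.parityBounds_of_even even) hexp'
  have C := criticalConstants_of_even four_le even
  have four_div : 4 / ((R : ℝ) + 1) ^ 3 = 4 * (1 / (R + 1) ^ 3) := by ring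
  filter_upwards [hdev.eventually_isCritical hL C hexp hγ (by linarith)] with k hcrit
  by_contra! ge
  obtain ⟨s, h⟩ := hcrit ge
  have a_eq : c.a (k + 1) = R := by exact_mod_cast h.a_eq
  have even_t : Even (t (k + 1)) :=
    (Int.even_sub.1 (hdev.even_sub k)).2 (a_eq ▸ (Int.even_coe_nat R).2 even)
  have even_mul := even_t.mul_left s
  rw [h.mul_eq] at even_mul
  exact absurd even_mul (by decide)

theorem IsDeviationExpansion.eventually_abs_lt_of_odd (odd : Odd R)
    (hM : Mval (c.α 0) γ' - 1 / R ^ 3 < Mval (c.α 0) γ) :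
    ∀ᶠ k in atTop, (|t (k + 1)| : ℤ) < 3 * (c.a (k + 1) : ℝ) / R := by
  have four_le : 4 ≤ R := by exact_mod_cast hL.four_le
  have five_le : 5 ≤ R := by grind
  have five_le_cast : (5 : ℝ) ≤ R := by exact_mod_cast five_le
  obtain ⟨β, Q, H₀, ω, P⟩ := exists_starConstants_of_five_le five_le_cast
  have star_bound := hs.div_four_le_Mval P hL (hL.parityBounds_of_odd odd) hexp'
  have C := criticalConstants_of_five_le five_le_cast
  have four_div : 4 / (R : ℝ) ^ 3 = 4 * (1 / R ^ 3) := by ring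
  obtain ⟨H, hH⟩ := exists_chainConstants five_le_cast
  have hcrit := hdev.eventually_isCritical hL C hexp hγ (by linarith)
  by_contra hnot
  simp only [not_eventually, not_lt] at hnot
  have hfreq := (hnot.and_eventually hcrit).mono fun k hk => hk.2 hk.1
  have hall := hdev.eventually_isCritical_of_frequently hL C.G_pos hH odd hcrit hfreq
  obtain ⟨k₁, hk₁, hc⟩ := hL.exists_isConstantFrom C.G_pos hH hall
  have constant_bound := hc.div_four_le_Mval odd (hL.mono hk₁) hs five_le hexp'
  exact hdev.not_frequently_isCritical hL five_le hexp hγ (by linarith) hfreq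

end Conclusion

end NearestIntegerCF

lemma eq_of_abs_lt_three_of_even_sub {R : ℕ} {t : ℤ} (ht : |t| < 3) (even_sub : Even (t - R)) :
    (Odd R → t = 1 ∨ t = -1) ∧ (Even R → t = 0 ∨ t = 2 ∨ t = -2) := by
  rw [abs_lt] at ht
  grind

open NearestIntegerCF in
theorem stmt7_general (α γ : ℝ) (hirr : Irrational α) (h0 : 0 < α) (h12 : α < 1 / 2)
    (R : ℕ) (hR4 : 4 ≤ R) (hbd : ∀ᶠ i in atTop, (R : ℤ) ≤ nicfA α i)
    (hγ : ¬∃ p q : ℤ, γ = (p : ℝ) + (q : ℝ) * α)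
    (hM : Mval α γ > Mval α (gammaStar α) - 1 / (if Odd R then (R : ℝ) else (R : ℝ) + 1) ^ 3) :
    (∀ᶠ i in atTop, ((|2 * cCoef α γ i - (nicfA α i - 1 + nicfE α i)| : ℤ) : ℝ) <
        3 * (nicfA α i : ℝ) / (R : ℝ)) ∧
      ∀ᶠ k in atTop, nicfA α k = (R : ℤ) →
        (Odd R →
          2 * cCoef α γ k - (nicfA α k - 1 + nicfE α k) = 1 ∨
            2 * cCoef α γ k - (nicfA α k - 1 + nicfE α k) = -1) ∧
        (Even R →
          2 * cCoef α γ k - (nicfA α k - 1 + nicfE α k) = 0 ∨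
            2 * cCoef α γ k - (nicfA α k - 1 + nicfE α k) = 2 ∨
              2 * cCoef α γ k - (nicfA α k - 1 + nicfE α k) = -2) := by
  have digits := isDigitExpansion_cCoef γ hirr h0 h12
  have hs := isStarExpansion_gammaStar hirr h0 h12
  have hexp' := isGridExpansion_gammaStar hirr h0 h12
  set c := ofIrrational α hirr h0 h12
  have le_a : ∀ᶠ i in atTop, (R : ℝ) ≤ c.a i := hbd.mono fun i hi => by exact_mod_cast hi
  obtain ⟨k₀, hL⟩ := exists_largeQuotients (by exact_mod_cast hR4) le_a
  replace hL := hL.mono (Nat.le_add_right k₀ 1)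
  obtain ⟨u, hdev⟩ := exists_isDeviationExpansion hL digits k₀.succ_pos
  have abs_lt : ∀ᶠ i in atTop,
      (|c.deviation (cCoef α γ) i| : ℤ) < 3 * (c.a i : ℝ) / R := by
    rw [← map_add_atTop_eq_nat 1, eventually_map]
    split_ifs at hM with parity
    · exact hdev.eventually_abs_lt_of_odd hL digits.isGridExpansion hγ hs hexp' parity hM
    · exact hdev.eventually_abs_lt_of_even hL digits.isGridExpansion hγ hs hexp'
        (Nat.not_odd_iff_even.1 parity) hM
  refine ⟨abs_lt, abs_lt.mono fun k lt a_eq => ?_⟩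
  have even_sub := c.even_deviation_sub (cCoef α γ) k
  rw [show c.a k = R from a_eq] at lt even_sub
  refine eq_of_abs_lt_three_of_even_sub ?_ even_sub
  rw [Int.cast_natCast, mul_div_cancel_right₀ _ (by positivity)] at lt
  exact_mod_cast lt

/-- Theorem 7 (NICF case): if `M(α,γ) > M(α,γ_*) - R_*⁻³` then the alpha-expansion
coefficients of `γ` satisfy `|t_i| < 3a_i/R` for almost all `i`; in particular
`a_k = R` forces `t_k = ±1` (`R` odd) or `t_k ∈ {0,±2}` (`R` even) for almost all `k`. -/
theorem stmt7 (α γ : ℝ) (hirr : Irrational α) (h0 : 0 < α) (h12 : α < 1 / 2)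
    (R : ℕ) (hR4 : 4 ≤ R)
    (hbd : ∀ᶠ i in Filter.atTop, (R : ℤ) ≤ nicfA α i)
    (hfreq : ∃ᶠ i in Filter.atTop, nicfA α i = (R : ℤ))
    (hγ0 : 0 ≤ γ) (hγ1 : γ < 1)
    (hγnl : ¬∃ p q : ℤ, γ = (p : ℝ) + (q : ℝ) * α)
    (Rs : ℝ) (hRs : Rs = if Odd R then (R : ℝ) else (R : ℝ) + 1)
    (hM : Mval α γ > Mval α (gammaStar α) - 1 / Rs ^ 3) :
    (∀ᶠ i in Filter.atTop,
        ((|2 * cCoef α γ i - (nicfA α i - 1 + nicfE α i)| : ℤ) : ℝ) <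
          3 * (nicfA α i : ℝ) / (R : ℝ)) ∧
      ∀ᶠ k in Filter.atTop, nicfA α k = (R : ℤ) →
        (Odd R →
          2 * cCoef α γ k - (nicfA α k - 1 + nicfE α k) = 1 ∨
            2 * cCoef α γ k - (nicfA α k - 1 + nicfE α k) = -1) ∧
        (Even R →
          2 * cCoef α γ k - (nicfA α k - 1 + nicfE α k) = 0 ∨
            2 * cCoef α γ k - (nicfA α k - 1 + nicfE α k) = 2 ∨
              2 * cCoef α γ k - (nicfA α k - 1 + nicfE α k) = -2) := by
  subst hRs
  exact stmt7_general α γ hirr h0 h12 R hR4 hbd hγnl hM
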